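/- Let k be a field, S a polynomial ring over k, and I ⊆ S a homogeneous ideal of height 3 generated by quadrics with Hilbert–Samuel multiplicity e(S/I) = 6. Then S/I is Cohen–Macaulay, I is generated by 4 quadrics, and pd_S(S/I) = 3. -/

import Mathlib

open CategoryTheory Opposite

universe u

/-- The height of an ideal: the infimum of the heights (in the prime spectrum,
ordered by inclusion) of the primes containing it. -/
noncomputable def Ideal.heightENat {R : Type u} [CommRing R] (I : Ideal R) : ℕ∞ :=
  ⨅ (p : PrimeSpectrum R) (_ : I ≤ p.asIdeal), Order.height p

/-- The projective dimension of an `R`-module `M`: the least `n` such that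
`Ext^i(M, N) = 0` for all `i > n` and all modules `N` (and `⊤` if no such `n` exists). -/
noncomputable def projDim (R : Type u) [CommRing R] (M : Type u) [AddCommGroup M]
    [Module R M] : ℕ∞ :=
  sInf ((↑) '' {n : ℕ | ∀ i : ℕ, n < i → ∀ N : ModuleCat.{u} R,
    Subsingleton (((Ext R (ModuleCat.{u} R) i).obj (op (ModuleCat.of R M))).obj N)})

/-- The Hilbert function of the standard graded ring `S/J`, where
`S = k[x_1, ..., x_N]`: the `k`-dimension of the degree-`d` graded piece of `S/J`. -/
noncomputable def hilbertFunction (k : Type u) [Field k] {N : ℕ}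
    (J : Ideal (MvPolynomial (Fin N) k)) (d : ℕ) : ℕ :=
  Module.finrank k (Submodule.map (Ideal.Quotient.mkₐ k J).toLinearMap
    (MvPolynomial.homogeneousSubmodule (Fin N) k d))

open scoped Classical in
/-- The Hilbert–Samuel multiplicity `e(S/J)` of the graded ring `S/J`:
`(deg P)!` times the leading coefficient of the Hilbert polynomial `P` of `S/J`,
i.e. of the polynomial agreeing with the Hilbert function in all large degrees
(the degree of the Hilbert polynomial being `dim(S/J) - 1`). -/
noncomputable def hilbertSamuelMultiplicity (k : Type u) [Field k] {N : ℕ}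
    (J : Ideal (MvPolynomial (Fin N) k)) : ℚ :=
  if h : ∃ P : Polynomial ℚ, ∀ᶠ d : ℕ in Filter.atTop,
      (hilbertFunction k J d : ℚ) = P.eval (d : ℚ)
  then (h.choose.natDegree).factorial * h.choose.leadingCoeff
  else 0

/-- The depth of a module `M` over the polynomial ring `S = k[x_1, …, x_N]` with respect to
the graded maximal ideal `m = (x_1, …, x_N)`: the least `i` with `Ext^i(S/m, M) ≠ 0`. -/
noncomputable def gradedDepth (k : Type u) [Field k] (N : ℕ) (M : Type u) [AddCommGroup M]
    [Module (MvPolynomial (Fin N) k) M] : ℕ∞ :=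
  sInf ((↑) '' {i : ℕ | Nontrivial
    (((Ext (MvPolynomial (Fin N) k) (ModuleCat.{u} (MvPolynomial (Fin N) k)) i).obj
      (op (ModuleCat.of (MvPolynomial (Fin N) k)
        (MvPolynomial (Fin N) k ⧸
          Ideal.span (Set.range (MvPolynomial.X : Fin N → MvPolynomial (Fin N) k)))))).obj
      (ModuleCat.of (MvPolynomial (Fin N) k) M))})

namespace Q6

open Abelian in
lemma ext_bridge (R : Type u) [CommRing R] (X Y : ModuleCat.{u} R) (n : ℕ) :
    Subsingleton (((_root_.Ext R (ModuleCat.{u} R) n).obj (op X)).obj Y) ↔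
      Subsingleton (Abelian.Ext.{u} X Y n) := by
  let P := projectiveResolution X
  rw [← ModuleCat.isZero_iff_subsingleton]
  rw [(P.isoExt (R := R) n Y).isZero_iff, ← HomologicalComplex.exactAt_iff_isZero_homology]
  rcases n with _ | n
  · have h1 : Subsingleton (Abelian.Ext.{u} X Y 0) ↔ Subsingleton (X ⟶ Y) :=
      Ext.homEquiv₀.subsingleton_congr
    obtain ⟨p, hz, hepi, hdesc⟩ : ∃ p : P.complex.X 0 ⟶ X, P.complex.d 1 0 ≫ p = 0 ∧ Epi p ∧
        ∀ f : P.complex.X 0 ⟶ Y, P.complex.d 1 0 ≫ f = 0 → ∃ g : X ⟶ Y, p ≫ g = f :=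
      ⟨P.π.f 0, P.complex_d_comp_π_f_zero, inferInstanceAs (Epi (P.π.f 0)), fun f hf => by
          obtain ⟨g, hg⟩ := P.exact₀.desc' f hf
          exact ⟨g, hg⟩⟩
    rw [h1, HomologicalComplex.exactAt_iff' _ 0 0 1 (by simp) (by simp),
      ShortComplex.moduleCat_exact_iff]
    have e0 : (HomologicalComplex.sc' (P.complex.linearYonedaObj R Y) 0 0 1).f = 0 := by
      change (P.complex.linearYonedaObj R Y).d 0 0 = 0
      exact HomologicalComplex.shape _ _ _ (by simp)
    constructor
    · intro h
      refine ⟨fun f g => ?_⟩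
      rw [← sub_eq_zero]
      obtain ⟨x, hx⟩ := h (p ≫ (f - g)) (by
        change P.complex.d 1 0 ≫ p ≫ (f - g) = 0
        rw [reassoc_of% hz, Limits.zero_comp])
      rw [e0] at hx
      have hx' : p ≫ (f - g) = 0 := hx.symm
      rw [← cancel_epi p, hx', Limits.comp_zero]
    · intro h (f : P.complex.X 0 ⟶ Y) (hf : P.complex.d 1 0 ≫ f = 0)
      refine ⟨0, ?_⟩
      rw [map_zero]
      change (0 : P.complex.X 0 ⟶ Y) = f
      obtain ⟨g, hg⟩ := hdesc f hf
      rw [← hg, Subsingleton.elim g 0, Limits.comp_zero]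
  · rw [HomologicalComplex.exactAt_iff' _ n (n+1) (n+2) (by simp) (by simp),
      ShortComplex.moduleCat_exact_iff]
    constructor
    · intro h
      rw [subsingleton_iff_forall_eq 0]
      intro e
      obtain ⟨f, hf, rfl⟩ := P.extMk_surjective e (n+2) rfl
      rw [P.extMk_eq_zero_iff _ _ _ _ n rfl]
      exact h f hf
    · intro h (f : P.complex.X (n+1) ⟶ Y) (hf : P.complex.d (n+2) (n+1) ≫ f = 0)
      have := Subsingleton.elim (P.extMk f (n+2) rfl hf) 0
      rw [P.extMk_eq_zero_iff _ _ _ _ n rfl] at this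
      exact this

end Q6

namespace Q6

def NZ {R : Type*} [CommRing R] (J : Ideal R) (a : R) : Prop := ∀ u, a * u ∈ J → u ∈ J

def AssI {R : Type*} [CommRing R] (J : Ideal R) : Set (Ideal R) :=
  {p | p.IsPrime ∧ ∃ w, ∀ x, x ∈ p ↔ x * w ∈ J}

lemma assI_eq {R : Type*} [CommRing R] [IsNoetherianRing R] (J : Ideal R) :
    AssI J = associatedPrimes R (R ⧸ J) := by
  ext p
  simp only [AssI, Set.mem_ofPred_eq, AssociatedPrimes.mem_iff, isAssociatedPrime_iff]
  refine and_congr_right fun _ => ⟨?_, ?_⟩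
  · rintro ⟨w, hw⟩
    refine ⟨Ideal.Quotient.mk J w, ?_⟩
    ext x
    rw [hw, Submodule.mem_colon_singleton, Algebra.smul_def, Ideal.Quotient.algebraMap_eq, ← map_mul,
      Submodule.mem_bot, Ideal.Quotient.eq_zero_iff_mem]
  · rintro ⟨w, hw⟩
    obtain ⟨w, rfl⟩ := Ideal.Quotient.mk_surjective w
    refine ⟨w, fun x => ?_⟩
    rw [hw, Submodule.mem_colon_singleton, Algebra.smul_def, Ideal.Quotient.algebraMap_eq, ← map_mul,
      Submodule.mem_bot, Ideal.Quotient.eq_zero_iff_mem]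

lemma assI_finite {R : Type*} [CommRing R] [IsNoetherianRing R] (J : Ideal R) :
    (AssI J).Finite := by
  rw [assI_eq]; exact associatedPrimes.finite R _

lemma not_nz {R : Type*} [CommRing R] [IsNoetherianRing R] {J : Ideal R} {a : R} (h : ¬ NZ J a) :
    ∃ p ∈ AssI J, a ∈ p := by
  have h2 := biUnion_associatedPrimes_eq_zero_divisors R (R ⧸ J)
  have h3 : a ∈ {r : R | ∃ x : R ⧸ J, x ≠ 0 ∧ r • x = 0} := by
    simp only [NZ, not_forall] at h
    obtain ⟨u, hu, hu'⟩ := h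
    refine ⟨Ideal.Quotient.mk J u, ?_, ?_⟩
    · rwa [Ne, Ideal.Quotient.eq_zero_iff_mem]
    · rwa [Algebra.smul_def, Ideal.Quotient.algebraMap_eq, ← map_mul, Ideal.Quotient.eq_zero_iff_mem]
  rw [← h2, ← assI_eq] at h3
  simpa using h3

lemma assI_le {R : Type*} [CommRing R] {J p : Ideal R} (h : p ∈ AssI J) : J ≤ p := by
  obtain ⟨_, w, hw⟩ := h
  intro x hx
  rw [hw]; exact J.mul_mem_right _ hx

/-- elements of minimal primes are zero divisors -/
lemma nz_notMem_minimalPrimes {R : Type*} [CommRing R] {J : Ideal R} {a : R}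
    (h : NZ J a) {p : Ideal R} (hp : p ∈ J.minimalPrimes) : a ∉ p := by
  intro ha
  have hpp : p.IsPrime := hp.1.1
  -- standard argument : multiplicative set generated by a and complement of p
  let M : Submonoid R := p.primeCompl ⊔ Submonoid.powers a
  have hd : Disjoint (J : Set R) (M : Set R) := by
    rw [Set.disjoint_left]
    intro x hx hxM
    obtain ⟨y, hy, z, ⟨n, hn⟩, rfl⟩ := Submonoid.mem_sup.1 hxM
    subst hn
    have : y ∈ J := by
      clear hxM
      induction n with
      | zero => simpa using hx
      | succ n ih => exact ih (h _ (by simpa [pow_succ, mul_comm, mul_left_comm, mul_assoc] using hx))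
    exact hy (hp.1.2 this)
  obtain ⟨q, hqp, hJq, hqM⟩ := Ideal.exists_le_prime_disjoint J M hd
  have hqle : q ≤ p := by
    intro x hx
    by_contra hxp
    exact Set.disjoint_left.1 hqM hx ((le_sup_left : p.primeCompl ≤ M) hxp)
  have := hp.2 ⟨hqp, hJq⟩ hqle ha
  exact Set.disjoint_left.1 hqM this ((le_sup_right : Submonoid.powers a ≤ M) (Submonoid.mem_powers a))

lemma height_succ_le {R : Type*} [CommRing R] [IsNoetherianRing R] {J J' : Ideal R} {a : R}
    (h : ∀ p ∈ J.minimalPrimes, a ∉ p) (hJ : J ≤ J') (ha : a ∈ J') : J.height + 1 ≤ J'.height := by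
  rw [Ideal.height_eq_inf_minimalPrimes J']
  refine le_iInf₂ fun p hp => ?_
  have hpp : p.IsPrime := hp.1.1
  obtain ⟨q, hq, hqp⟩ := Ideal.exists_minimalPrimes_le (hJ.trans hp.1.2)
  have hqq : q.IsPrime := hq.1.1
  have hlt : q < p := lt_of_le_of_ne hqp (fun e => h q hq (e ▸ hp.1.2 ha))
  exact (by gcongr; exact hq.1.2 : J.height + 1 ≤ q.height + 1).trans
    (Ideal.height_add_one_le_of_lt_of_isPrime hlt)

end Q6

namespace Q6

section
variable {R : Type u} [CommRing R]

/-- `Ext^j(X,M)=0` for `j<n`. -/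
def DepthGE (X M : Type u) [AddCommGroup X] [Module R X] [AddCommGroup M] [Module R M] (n : ℕ) : Prop :=
  ∀ j < n, Subsingleton (Abelian.Ext.{u} (ModuleCat.of R X) (ModuleCat.of R M) j)

variable {X M N P : Type u} [AddCommGroup X] [Module R X] [AddCommGroup M] [Module R M]
  [AddCommGroup N] [Module R N] [AddCommGroup P] [Module R P]

noncomputable def sc (f : M →ₗ[R] N) (g : N →ₗ[R] P) (h : Function.Exact f g) :
    ShortComplex (ModuleCat.{u} R) :=
  ModuleCat.shortComplexOfCompEqZero f g h.linearMap_comp_eq_zero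

lemma sc_shortExact (f : M →ₗ[R] N) (g : N →ₗ[R] P) (h : Function.Exact f g)
    (hf : Function.Injective f) (hg : Function.Surjective g) : (sc f g h).ShortExact :=
  ModuleCat.shortComplex_shortExact _ h hf hg

lemma depthGE_X2 (f : M →ₗ[R] N) (g : N →ₗ[R] P) (h : Function.Exact f g)
    (hf : Function.Injective f) (hg : Function.Surjective g) (n : ℕ)
    (h1 : DepthGE (R := R) X M n) (h3 : DepthGE (R := R) X P n) : DepthGE (R := R) X N n := by
  intro j hj
  have := h1 j hj
  have := h3 j hj
  rw [subsingleton_iff_forall_eq 0]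
  intro x
  obtain ⟨y, rfl⟩ := Abelian.Ext.covariant_sequence_exact₂ _ (sc_shortExact f g h hf hg) x
    (Subsingleton.elim (α := Abelian.Ext.{u} (ModuleCat.of R X) (ModuleCat.of R P) j) _ _)
  have hy : y = 0 := Subsingleton.elim (α := Abelian.Ext.{u} (ModuleCat.of R X) (ModuleCat.of R M) j) y 0
  rw [hy, Abelian.Ext.zero_comp]; try rfl

lemma depthGE_X3 (f : M →ₗ[R] N) (g : N →ₗ[R] P) (h : Function.Exact f g)
    (hf : Function.Injective f) (hg : Function.Surjective g) (n : ℕ)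
    (h1 : DepthGE (R := R) X M (n + 1)) (h3 : DepthGE (R := R) X N n) : DepthGE (R := R) X P n := by
  intro j hj
  have := h1 (j+1) (by omega)
  have := h3 j hj
  rw [subsingleton_iff_forall_eq 0]
  intro x
  obtain ⟨y, rfl⟩ := Abelian.Ext.covariant_sequence_exact₃ _ (sc_shortExact f g h hf hg) x rfl
    (Subsingleton.elim (α := Abelian.Ext.{u} (ModuleCat.of R X) (ModuleCat.of R M) (j+1)) _ _)
  have hy : y = 0 := Subsingleton.elim (α := Abelian.Ext.{u} (ModuleCat.of R X) (ModuleCat.of R N) j) y 0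
  rw [hy, Abelian.Ext.zero_comp]; try rfl

lemma depthGE_of_quot (r : R) (hr : ∀ x : X, r • x = 0) (g : M →ₗ[R] P)
    (h : Function.Exact (LinearMap.lsmul R M r) g)
    (hf : Function.Injective (LinearMap.lsmul R M r)) (hg : Function.Surjective g) (n : ℕ)
    (h3 : DepthGE (R := R) X P n) : DepthGE (R := R) X M (n + 1) := by
  intro j hj
  rw [subsingleton_iff_forall_eq 0]
  intro x
  have hS := sc_shortExact _ g h hf hg
  have hann : r ∈ Module.annihilator R (ModuleCat.of R X) := by
    rw [Module.mem_annihilator]; exact hr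
  have h0 := Abelian.Ext.postcomp_smul_id_eq_zero_of_mem_annihilator (M := ModuleCat.of R M)
    (N := ModuleCat.of R X) hann j
  have hx : x.comp (Abelian.Ext.mk₀ (sc _ g h).f) (add_zero j) = 0 := by
    have := congrArg (fun t => t.hom x) h0
    exact this
  rcases j with _ | j
  · have := hS.mono_f
    have hinj := Abelian.Ext.postcomp_mk₀_injective_of_mono (ModuleCat.of R X) (sc _ g h).f
    apply hinj
    exact hx.trans (map_zero _).symm
  · obtain ⟨y, rfl⟩ := Abelian.Ext.covariant_sequence_exact₁ _ hS x hx rfl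
    have := h3 j (by omega)
    have hy : y = 0 := Subsingleton.elim (α := Abelian.Ext.{u} (ModuleCat.of R X) (ModuleCat.of R P) j) y 0
    rw [hy, Abelian.Ext.zero_comp]; try rfl

lemma depthGE_mono {m n : ℕ} (h : m ≤ n) (h3 : DepthGE (R := R) X M n) : DepthGE (R := R) X M m :=
  fun j hj => h3 j (by omega)

lemma depthGE_retract (i : M →ₗ[R] N) (r : N →ₗ[R] M) (h : r ∘ₗ i = LinearMap.id) (n : ℕ)
    (hN : DepthGE (R := R) X N n) : DepthGE (R := R) X M n := by
  intro j hj
  have := hN j hj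
  rw [subsingleton_iff_forall_eq 0]
  intro x
  have e1 : (x.comp (Abelian.Ext.mk₀ (ModuleCat.ofHom i)) (add_zero j)).comp
      (Abelian.Ext.mk₀ (ModuleCat.ofHom r)) (add_zero j) = x := by
    rw [Abelian.Ext.comp_assoc_of_third_deg_zero, Abelian.Ext.mk₀_comp_mk₀, ← ModuleCat.ofHom_comp, h]
    exact Abelian.Ext.comp_mk₀_id x
  rw [← e1, Subsingleton.elim (x.comp (Abelian.Ext.mk₀ (ModuleCat.ofHom i)) (add_zero j)) 0,
    Abelian.Ext.zero_comp]

lemma depthGE_pi (n : ℕ) (h : DepthGE (R := R) X R n) (c : ℕ) : DepthGE (R := R) X (Fin c → R) n := by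
  induction c with
  | zero =>
    intro j hj
    rw [subsingleton_iff_forall_eq 0]
    intro x
    have hz : (𝟙 (ModuleCat.of R (Fin 0 → R))) = 0 := by
      apply ModuleCat.hom_ext; apply LinearMap.ext; intro x; exact Subsingleton.elim (α := Fin 0 → R) _ _
    rw [← Abelian.Ext.comp_mk₀_id x, hz, Abelian.Ext.mk₀_zero, Abelian.Ext.comp_zero]
  | succ c ih =>
    refine depthGE_retract (N := R × (Fin c → R)) (Fin.consLinearEquiv R (fun _ => R)).symm.toLinearMap
      (Fin.consLinearEquiv R (fun _ => R)).toLinearMap ?_ n ?_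
    · ext; simp
    · exact depthGE_X2 (LinearMap.inl R R (Fin c → R)) (LinearMap.snd R R (Fin c → R))
        (Function.Exact.inl_snd) LinearMap.inl_injective LinearMap.snd_surjective n h ih

/-- Auslander–Buchsbaum, easy half. -/
lemma depthGE_of_pd [IsNoetherianRing R] (n c : ℕ) (h : DepthGE (R := R) X R n) :
    ∀ (M : Type u) [AddCommGroup M] [Module R M] [Module.Finite R M]
    (_ : HasProjectiveDimensionLE (ModuleCat.of R M) c), DepthGE (R := R) X M (n - c) := by
  induction c with
  | zero =>
    intro M _ _ _ hM
    rw [← projective_iff_hasProjectiveDimensionLE_zero, ← IsProjective.iff_projective] at hM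
    obtain ⟨c, f, hf⟩ := Module.Finite.exists_fin' R M
    obtain ⟨s, hs⟩ := Module.projective_lifting_property f LinearMap.id hf
    exact depthGE_retract s f hs _ (depthGE_pi n h c)
  | succ c ih =>
    intro M _ _ _ hM
    obtain ⟨d, f, hf⟩ := Module.Finite.exists_fin' R M
    have hS := sc_shortExact (LinearMap.ker f).subtype f (LinearMap.exact_subtype_ker_map f)
      Subtype.val_injective hf
    have hp : Projective (ModuleCat.of R (Fin d → R)) := by
      rw [← IsProjective.iff_projective]; infer_instance
    have := (hS.hasProjectiveDimensionLT_X₃_iff c hp).1 hM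
    have h1 := ih (LinearMap.ker f) this
    rcases Nat.lt_or_ge c n with hc | hc
    · refine depthGE_X3 (LinearMap.ker f).subtype f (LinearMap.exact_subtype_ker_map f)
        Subtype.val_injective hf _ (depthGE_mono (by omega) h1)
        (depthGE_mono (by omega) (depthGE_pi n h d))
    · intro j hj; omega

end

end Q6

namespace Q6

section
variable {R : Type u} [CommRing R]

lemma mem_sup_span {J : Ideal R} {a x : R} : x ∈ J ⊔ Ideal.span {a} ↔ ∃ c, x - a * c ∈ J := by
  rw [Submodule.mem_sup]
  constructor
  · rintro ⟨y, hy, z, hz, rfl⟩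
    obtain ⟨c, rfl⟩ := Ideal.mem_span_singleton'.1 hz
    exact ⟨c, by simpa [mul_comm] using hy⟩
  · rintro ⟨c, hc⟩
    exact ⟨_, hc, a * c, Ideal.mul_mem_right _ _ (Ideal.mem_span_singleton_self a), by ring⟩

lemma nz_ses (J : Ideal R) (a : R) (h : NZ J a) :
    ∃ g : (R ⧸ J) →ₗ[R] (R ⧸ (J ⊔ Ideal.span {a})), Function.Surjective g ∧
      Function.Injective (LinearMap.lsmul R (R ⧸ J) a) ∧
      Function.Exact (LinearMap.lsmul R (R ⧸ J) a) g := by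
  refine ⟨Submodule.mapQ J (J ⊔ Ideal.span {a}) LinearMap.id (by simp), ?_, ?_, ?_⟩
  · intro x
    obtain ⟨x, rfl⟩ := Submodule.mkQ_surjective _ x
    exact ⟨Submodule.mkQ _ x, by simp⟩
  · rw [← LinearMap.ker_eq_bot, eq_bot_iff]
    intro x hx
    obtain ⟨x, rfl⟩ := Submodule.mkQ_surjective _ x
    simp only [Submodule.mkQ_apply, LinearMap.mem_ker, LinearMap.lsmul_apply,
      ← Submodule.Quotient.mk_smul, Submodule.Quotient.mk_eq_zero, Submodule.mem_bot] at hx ⊢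
    exact h x hx
  · intro x
    obtain ⟨x, rfl⟩ := Submodule.mkQ_surjective _ x
    simp only [Submodule.mkQ_apply, Submodule.mapQ_apply, LinearMap.id_apply,
      Submodule.Quotient.mk_eq_zero, Set.mem_range]
    rw [mem_sup_span]
    constructor
    · rintro ⟨c, hc⟩
      refine ⟨Submodule.Quotient.mk c, ?_⟩
      rw [LinearMap.lsmul_apply, ← Submodule.Quotient.mk_smul, eq_comm, Submodule.Quotient.eq]
      exact hc
    · rintro ⟨y, hy⟩
      obtain ⟨c, rfl⟩ := Submodule.mkQ_surjective _ y
      refine ⟨c, ?_⟩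
      rw [Submodule.mkQ_apply, LinearMap.lsmul_apply, ← Submodule.Quotient.mk_smul, eq_comm, Submodule.Quotient.eq] at hy
      exact hy

end

section
variable (k : Type u) [Field k] (N : ℕ)

noncomputable abbrev mm : Ideal (MvPolynomial (Fin N) k) :=
  Ideal.span (Set.range (MvPolynomial.X : Fin N → MvPolynomial (Fin N) k))

lemma X_nz {σ K : Type*} [Field K] (s : Set σ) (i : σ) (hi : i ∉ s) :
    NZ (Ideal.span ((MvPolynomial.X : σ → MvPolynomial σ K) '' s)) (MvPolynomial.X i) := by
  intro u hu
  rw [MvPolynomial.mem_ideal_span_X_image] at hu ⊢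
  intro m hm
  obtain ⟨j, hj, hj'⟩ := hu (m + Finsupp.single i 1) (by
    rw [mul_comm, MvPolynomial.mem_support_iff, MvPolynomial.coeff_mul_X]
    exact MvPolynomial.mem_support_iff.1 hm)
  refine ⟨j, hj, ?_⟩
  have : i ≠ j := fun e => hi (e ▸ hj)
  simpa [Finsupp.single_apply, this] using hj'

lemma depth_quot_vars (n : ℕ) : ∀ s : Finset (Fin N), n + s.card ≤ N →
    DepthGE (R := MvPolynomial (Fin N) k) (MvPolynomial (Fin N) k ⧸ mm k N)
      (MvPolynomial (Fin N) k ⧸ Ideal.span ((MvPolynomial.X : Fin N → MvPolynomial (Fin N) k) '' (s : Set (Fin N)))) n := by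
  induction n with
  | zero => intro s hs j hj; omega
  | succ n ih =>
    intro s hs
    obtain ⟨i, hi⟩ : ∃ i, i ∉ s := by
      by_contra! h
      have : s = Finset.univ := by ext; simp [h]
      subst this; simp at hs
    obtain ⟨g, hg, hf, hex⟩ := nz_ses _ _ (X_nz (K := k) (s : Set (Fin N)) i (by simpa using hi))
    refine depthGE_of_quot _ ?_ g hex hf hg n ?_
    · intro x
      obtain ⟨x, rfl⟩ := Submodule.mkQ_surjective _ x
      rw [← map_smul, Submodule.mkQ_apply, Submodule.Quotient.mk_eq_zero, smul_eq_mul]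
      exact Ideal.mul_mem_right _ _ (Ideal.subset_span ⟨i, rfl⟩)
    · have := ih (insert i s) (by rw [Finset.card_insert_of_notMem hi]; omega)
      rw [Finset.coe_insert, Set.image_insert_eq, Ideal.span_insert, sup_comm] at this
      exact this

lemma depth_S : DepthGE (R := MvPolynomial (Fin N) k) (MvPolynomial (Fin N) k ⧸ mm k N)
      (MvPolynomial (Fin N) k) N := by
  have h := depth_quot_vars k N N ∅ (by simp)
  have e : Ideal.span ((MvPolynomial.X : Fin N → MvPolynomial (Fin N) k) '' ((∅ : Finset (Fin N)) : Set (Fin N))) = ⊥ := by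
    simp
  rw [e] at h
  let E : (MvPolynomial (Fin N) k) ≃ₗ[MvPolynomial (Fin N) k] (MvPolynomial (Fin N) k ⧸ (⊥ : Ideal (MvPolynomial (Fin N) k))) :=
    (Submodule.quotEquivOfEqBot ⊥ rfl).symm
  exact depthGE_retract E.toLinearMap E.symm.toLinearMap (by ext; simp) N h

lemma mem_mm {σ K : Type*} [Field K] (p : MvPolynomial σ K) :
    p ∈ Ideal.span (Set.range (MvPolynomial.X : σ → MvPolynomial σ K)) ↔ MvPolynomial.constantCoeff p = 0 := by
  rw [← Set.image_univ, MvPolynomial.mem_ideal_span_X_image, MvPolynomial.constantCoeff_eq]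
  constructor
  · intro h
    by_contra h0
    obtain ⟨i, _, hi⟩ := h 0 (MvPolynomial.mem_support_iff.2 h0)
    simp at hi
  · intro h m hm
    have : m ≠ 0 := by rintro rfl; exact MvPolynomial.mem_support_iff.1 hm h
    obtain ⟨i, hi⟩ := Finsupp.ne_iff.1 this
    exact ⟨i, trivial, hi⟩

lemma mm_max : (mm k N).IsMaximal := by
  have : mm k N = RingHom.ker (MvPolynomial.constantCoeff : MvPolynomial (Fin N) k →+* k) := by
    ext p; rw [mem_mm, RingHom.mem_ker]
  rw [this]
  exact RingHom.ker_isMaximal_of_surjective _ (fun a => ⟨MvPolynomial.C a, by simp⟩)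

lemma height_mm : (mm k N).height ≤ N := by
  have := (mm_max k N).isPrime
  have h := Ideal.height_le_ringKrullDim_of_isPrime (I := mm k N)
  rw [MvPolynomial.ringKrullDim_of_isNoetherianRing] at h
  simp at h
  exact_mod_cast h

lemma depth_le_dim (n : ℕ) : ∀ J : Ideal (MvPolynomial (Fin N) k), J ≤ mm k N →
    DepthGE (R := MvPolynomial (Fin N) k) (MvPolynomial (Fin N) k ⧸ mm k N) (MvPolynomial (Fin N) k ⧸ J) n →
    n + J.height ≤ N ∧ (n : WithBot ℕ∞) ≤ ringKrullDim (MvPolynomial (Fin N) k ⧸ J) := by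
  induction n with
  | zero =>
    intro J hJ _
    refine ⟨by simpa using (Ideal.height_mono hJ).trans (height_mm k N), ?_⟩
    have : Nontrivial (MvPolynomial (Fin N) k ⧸ J) :=
      Ideal.Quotient.nontrivial_iff.2 (fun h => (mm_max k N).ne_top (top_le_iff.1 (h ▸ hJ)))
    exact_mod_cast ringKrullDim_nonneg_of_nontrivial
  | succ n ih =>
    intro J hJ hd
    have hmax := mm_max k N
    obtain ⟨z, hz, hnz⟩ : ∃ z ∈ mm k N, NZ J z := by
      by_contra! hcon
      have hsub : ((mm k N : Ideal _) : Set (MvPolynomial (Fin N) k)) ⊆ ⋃ p ∈ ((assI_finite J).toFinset : Set (Ideal (MvPolynomial (Fin N) k))), (p : Set (MvPolynomial (Fin N) k)) := by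
        intro z hz
        obtain ⟨p, hp, hzp⟩ := not_nz (hcon z hz)
        simp only [Set.mem_iUnion]
        exact ⟨p, by simpa using hp, hzp⟩
      rw [Ideal.subset_union_prime ⊥ ⊥ (fun p hp _ _ => ((assI_finite J).mem_toFinset.1 hp).1)] at hsub
      obtain ⟨p, hp, hle⟩ := hsub
      have hp' := (assI_finite J).mem_toFinset.1 hp
      have e : mm k N = p := hmax.eq_of_le hp'.1.ne_top hle
      obtain ⟨_, w, hw⟩ := hp'
      have hs := hd 0 (by omega)
      have hs2 : Subsingleton ((ModuleCat.of (MvPolynomial (Fin N) k) (MvPolynomial (Fin N) k ⧸ mm k N)) ⟶ ModuleCat.of (MvPolynomial (Fin N) k) (MvPolynomial (Fin N) k ⧸ J)) :=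
        Abelian.Ext.homEquiv₀.subsingleton_congr.1 hs
      let φ : (MvPolynomial (Fin N) k ⧸ mm k N) →ₗ[MvPolynomial (Fin N) k] (MvPolynomial (Fin N) k ⧸ J) :=
        Submodule.mapQ _ _ (LinearMap.toSpanSingleton _ _ w) (by
          intro x hx
          rw [e, hw] at hx
          simpa using hx)
      have h0 : φ = 0 := by
        have := Subsingleton.elim (ModuleCat.ofHom φ) (ModuleCat.ofHom 0)
        exact congrArg ModuleCat.Hom.hom this
      have h1 : φ (Submodule.Quotient.mk 1) = 0 := by rw [h0]; rfl
      rw [Submodule.mapQ_apply, Submodule.Quotient.mk_eq_zero] at h1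
      have : (1 : MvPolynomial (Fin N) k) ∈ p := by rw [hw]; simpa using h1
      exact hmax.ne_top (e ▸ (Ideal.eq_top_iff_one _).2 this)
    obtain ⟨g, hg, hf, hex⟩ := nz_ses J z hnz
    have hd2 := depthGE_X3 (X := MvPolynomial (Fin N) k ⧸ mm k N) _ g hex hf hg n hd (depthGE_mono (by omega) hd)
    obtain ⟨h1, h2⟩ := ih (J ⊔ Ideal.span {z}) (sup_le hJ ((Ideal.span_singleton_le_iff_mem _).2 hz)) hd2
    constructor
    · have h3 : J.height + 1 ≤ (J ⊔ Ideal.span {z}).height :=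
        height_succ_le (a := z) (fun p hp => nz_notMem_minimalPrimes hnz hp) le_sup_left
          (Ideal.mem_sup_right (Ideal.mem_span_singleton_self z))
      calc ((n + 1 : ℕ) : ℕ∞) + J.height = n + (J.height + 1) := by push_cast; ring
        _ ≤ n + (J ⊔ Ideal.span {z}).height := by gcongr
        _ ≤ N := h1
    · have hnzd : Ideal.Quotient.mk J z ∈ nonZeroDivisors (MvPolynomial (Fin N) k ⧸ J) := by
        rw [mem_nonZeroDivisors_iff_left]
        intro x hx
        obtain ⟨x, rfl⟩ := Ideal.Quotient.mk_surjective x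
        rw [← map_mul, Ideal.Quotient.eq_zero_iff_mem] at hx
        rw [Ideal.Quotient.eq_zero_iff_mem]
        exact hnz _ (by simpa [mul_comm] using hx)
      have h4 := ringKrullDim_quotient_succ_le_of_nonZeroDivisor hnzd
      have e : ((MvPolynomial (Fin N) k ⧸ J) ⧸ Ideal.span {Ideal.Quotient.mk J z}) ≃+* (MvPolynomial (Fin N) k ⧸ (J ⊔ Ideal.span {z})) :=
        (Ideal.quotEquivOfEq (by rw [Ideal.map_span, Set.image_singleton])).trans (DoubleQuot.quotQuotEquivQuotSup J (Ideal.span {z}))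
      rw [ringKrullDim_eq_of_ringEquiv e] at h4
      calc ((n + 1 : ℕ) : WithBot ℕ∞) = n + 1 := by push_cast; rfl
        _ ≤ _ := by gcongr
        _ ≤ _ := h4

end

end Q6

namespace Q6

lemma heightENat_eq {R : Type u} [CommRing R] (I : Ideal R) : I.heightENat = I.height := by
  apply le_antisymm
  · rw [Ideal.height_eq_inf_minimalPrimes]
    refine le_iInf₂ fun p hp => ?_
    have := hp.1.1
    refine (iInf₂_le (⟨p, this⟩ : PrimeSpectrum R) hp.1.2).trans ?_
    exact (PrimeSpectrum.height_eq_orderHeight (⟨p, this⟩ : PrimeSpectrum R)).ge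
  · refine le_iInf₂ fun p hp => ?_
    rw [← PrimeSpectrum.height_eq_orderHeight]
    exact Ideal.height_mono hp

lemma dim_add_height {R : Type u} [CommRing R] (I : Ideal R) (N h : ℕ)
    (hR : ringKrullDim R ≤ N) (hI : (h : ℕ∞) ≤ I.height) :
    ringKrullDim (R ⧸ I) ≤ ((N - h : ℕ) : WithBot ℕ∞) := by
  rw [ringKrullDim_quotient, Order.krullDim]
  refine iSup_le fun p => ?_
  have key : ∀ (i : ℕ) (hi : i < p.length + 1), I.height + (i : ℕ) ≤ (p ⟨i, hi⟩).1.asIdeal.height := by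
    intro i
    induction i with
    | zero => intro hi; simpa using Ideal.height_mono (p ⟨0, hi⟩).2
    | succ i ih =>
      intro hi
      have h1 := ih (by omega)
      have hlt : (p ⟨i, by omega⟩).1.asIdeal < (p ⟨i+1, hi⟩).1.asIdeal := by
        have := p.strictMono (show (⟨i, by omega⟩ : Fin (p.length+1)) < ⟨i+1, hi⟩ by simp)
        exact this
      calc I.height + ((i+1 : ℕ) : ℕ∞) = (I.height + i) + 1 := by push_cast; ring
        _ ≤ (p ⟨i, by omega⟩).1.asIdeal.height + 1 := by gcongr
        _ ≤ _ := Ideal.height_add_one_le_of_lt_of_isPrime hlt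
  have h1 := key p.length (by omega)
  have h2 : (((p ⟨p.length, by omega⟩).1.asIdeal.height : ℕ∞) : WithBot ℕ∞) ≤ N :=
    (Ideal.height_le_ringKrullDim_of_isPrime).trans hR
  have h3 : (p ⟨p.length, by omega⟩).1.asIdeal.height ≤ (N : ℕ∞) := by exact_mod_cast h2
  have h4 : (h : ℕ∞) + p.length ≤ N := (add_le_add_left hI _).trans (h1.trans h3)
  have h5 : h + p.length ≤ N := by exact_mod_cast h4
  exact_mod_cast (by omega : p.length ≤ N - h)

lemma part1 (k : Type u) [Field k] (N : ℕ) (I : Ideal (MvPolynomial (Fin N) k)) (hm : I ≤ mm k N)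
    (hI : I.height = 3)
    (hpd : HasProjectiveDimensionLE (ModuleCat.of (MvPolynomial (Fin N) k) (MvPolynomial (Fin N) k ⧸ I)) 3) :
    ringKrullDim (MvPolynomial (Fin N) k ⧸ I) =
        (gradedDepth k N (MvPolynomial (Fin N) k ⧸ I) : WithBot ℕ∞) ∧
      projDim (MvPolynomial (Fin N) k) (MvPolynomial (Fin N) k ⧸ I) = (3 : ℕ∞) := by
  have hN : 3 ≤ N := by
    have := (Ideal.height_mono hm).trans (height_mm k N)
    rw [hI] at this; exact_mod_cast this
  have key : ∀ n, n + 3 ≤ N ∨ ¬ DepthGE (R := MvPolynomial (Fin N) k) (MvPolynomial (Fin N) k ⧸ mm k N) (MvPolynomial (Fin N) k ⧸ I) n := by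
    intro n
    by_contra! h
    have := (depth_le_dim k N n I hm h.2).1
    rw [hI] at this
    have : n + 3 ≤ N := by exact_mod_cast this
    omega
  have hd := depthGE_of_pd N 3 (depth_S k N) _ hpd
  have hdim := (depth_le_dim k N _ I hm hd).2
  have hdim2 : ringKrullDim (MvPolynomial (Fin N) k ⧸ I) ≤ ((N - 3 : ℕ) : WithBot ℕ∞) := by
    refine dim_add_height I N 3 ?_ (by rw [hI]; rfl)
    rw [MvPolynomial.ringKrullDim_of_isNoetherianRing]; simp
  constructor
  · rw [le_antisymm hdim2 hdim]
    have : gradedDepth k N (MvPolynomial (Fin N) k ⧸ I) = ((N - 3 : ℕ) : ℕ∞) := by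
      unfold gradedDepth
      apply le_antisymm
      · apply sInf_le
        refine ⟨N - 3, ?_, rfl⟩
        simp only [Set.mem_ofPred_eq]
        by_contra hc
        rw [not_nontrivial_iff_subsingleton, ext_bridge] at hc
        rcases key (N - 3 + 1) with h | h
        · omega
        · apply h
          intro j hj
          rcases Nat.lt_or_ge j (N - 3) with h | h
          · exact hd j h
          · obtain rfl : j = N - 3 := by omega
            exact hc
      · apply le_sInf
        rintro _ ⟨i, hi, rfl⟩
        simp only [Set.mem_ofPred_eq] at hi
        by_contra hc
        have hc' : i < N - 3 := by
          rw [not_le] at hc; exact_mod_cast hc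
        have := hd i hc'
        rw [← ext_bridge] at this
        exact not_subsingleton _ this
    rw [this]; rfl
  · unfold projDim
    apply le_antisymm
    · apply sInf_le
      refine ⟨3, ?_, rfl⟩
      intro i hi Y
      rw [ext_bridge]
      exact HasProjectiveDimensionLT.subsingleton _ 4 i hi Y
    · apply le_sInf
      rintro _ ⟨n, hn, rfl⟩
      by_contra hc
      have hc' : n < 3 := by
        rw [not_le] at hc; exact_mod_cast hc
      have hpd' : HasProjectiveDimensionLE (ModuleCat.of (MvPolynomial (Fin N) k) (MvPolynomial (Fin N) k ⧸ I)) n := by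
        refine (hasProjectiveDimensionLT_iff.{u} _ _).2 ?_
        intro i hi Y e
        have := hn i hi Y
        rw [ext_bridge] at this
        exact Subsingleton.elim _ _
      have hd' := depthGE_of_pd N n (depth_S k N) _ hpd'
      rcases key (N - n) with h | h
      · omega
      · exact h hd'

end Q6

namespace Q6
open TensorProduct

lemma pd_descent (S A : Type u) [CommRing S] [CommRing A] [Algebra S A] [IsNoetherianRing S]
    [Module.FaithfullyFlat S A] (c : ℕ) :
    ∀ (M : Type u) [AddCommGroup M] [Module S M] [Module.Finite S M]
    (_ : HasProjectiveDimensionLE (ModuleCat.of A (A ⊗[S] M)) c),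
      HasProjectiveDimensionLE (ModuleCat.of S M) c := by
  induction c with
  | zero =>
    intro M _ _ _ h
    rw [← projective_iff_hasProjectiveDimensionLE_zero, ← IsProjective.iff_projective] at h ⊢
    have : Module.Flat S M := Module.Flat.of_flat_tensorProduct S M A
    have : Module.FinitePresentation S M := Module.finitePresentation_of_finite S M
    exact Module.Flat.projective_of_finitePresentation
  | succ c ih =>
    intro M _ _ _ hM
    obtain ⟨d, f, hf⟩ := Module.Finite.exists_fin' S M
    have hS := sc_shortExact (LinearMap.ker f).subtype f (LinearMap.exact_subtype_ker_map f)
      Subtype.val_injective hf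
    have hp : Projective (ModuleCat.of S (Fin d → S)) := by
      rw [← IsProjective.iff_projective]; infer_instance
    refine (hS.hasProjectiveDimensionLT_X₃_iff c hp).2 ?_
    refine ih (LinearMap.ker f) ?_
    have hex : Function.Exact ((LinearMap.ker f).subtype.baseChange A) (f.baseChange A) :=
      lTensor_exact A (LinearMap.exact_subtype_ker_map f) hf
    have hS2 := sc_shortExact ((LinearMap.ker f).subtype.baseChange A) (f.baseChange A) hex
      (Module.Flat.lTensor_preserves_injective_linearMap _ Subtype.val_injective)
      (LinearMap.lTensor_surjective A hf)
    have hp2 : Projective (ModuleCat.of A (A ⊗[S] (Fin d → S))) := by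
      rw [← IsProjective.iff_projective]; infer_instance
    exact (hS2.hasProjectiveDimensionLT_X₃_iff c hp2).1 hM

lemma height_map_flat (S A : Type u) [CommRing S] [CommRing A] [Algebra S A] [IsNoetherianRing S]
    [IsNoetherianRing A] [Module.FaithfullyFlat S A] (I : Ideal S) (hI : I ≠ ⊤) :
    (I.map (algebraMap S A)).height = I.height := by
  apply le_antisymm
  · rw [Ideal.height_eq_inf_minimalPrimes I]
    refine le_iInf₂ fun p hp => ?_
    have hpp : p.IsPrime := hp.1.1
    obtain ⟨Q, hQ⟩ := PrimeSpectrum.comap_surjective_of_faithfullyFlat (A := S) (B := A) ⟨p, hpp⟩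
    have hle : p.map (algebraMap S A) ≤ Q.asIdeal := by
      rw [Ideal.map_le_iff_le_comap]
      exact (congrArg PrimeSpectrum.asIdeal hQ).ge
    obtain ⟨P, hP, hPQ⟩ := Ideal.exists_minimalPrimes_le hle
    have hPP : P.IsPrime := hP.1.1
    have hcomap : P.comap (algebraMap S A) = p := by
      apply le_antisymm
      · exact (Ideal.comap_mono hPQ).trans (congrArg PrimeSpectrum.asIdeal hQ).le
      · exact Ideal.map_le_iff_le_comap.1 hP.1.2
    have : P.LiesOver p := ⟨hcomap.symm⟩
    have h := Ideal.height_le_height_add_of_liesOver p P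
    have h0 : (P.map (Ideal.Quotient.mk <| p.map (algebraMap S A))).height = 0 := by
      have hpr : (P.map (Ideal.Quotient.mk <| p.map (algebraMap S A))).IsPrime :=
        Ideal.isPrime_map_quotientMk_of_isPrime hP.1.2
      rw [Ideal.height_eq_zero_iff]
      refine ⟨⟨hpr, bot_le⟩, ?_⟩
      intro q hq hqP
      have hq' := hq.1
      have h1 : P ≤ q.comap (Ideal.Quotient.mk <| p.map (algebraMap S A)) := by
        refine hP.2 ⟨Ideal.comap_isPrime _ _, ?_⟩ ?_
        · intro x hx
          rw [Ideal.mem_comap, Ideal.Quotient.eq_zero_iff_mem.2 hx]; exact zero_mem _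
        · refine (Ideal.comap_mono hqP).trans ?_
          rw [Ideal.comap_map_of_surjective _ Ideal.Quotient.mk_surjective]
          refine sup_le le_rfl ?_
          rw [← RingHom.ker_eq_comap_bot, Ideal.mk_ker]
          exact hP.1.2
      exact Ideal.map_le_iff_le_comap.2 h1
    rw [h0, add_zero] at h
    exact (Ideal.height_mono ((Ideal.map_mono hp.1.2).trans hP.1.2)).trans h
  · rw [Ideal.height_eq_inf_minimalPrimes (I.map _)]
    refine le_iInf₂ fun P hP => ?_
    have hPP : P.IsPrime := hP.1.1
    have : P.LiesOver (P.comap (algebraMap S A)) := ⟨rfl⟩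
    rw [Ideal.height_eq_height_add_of_liesOver_of_hasGoingDown (P.comap (algebraMap S A)) P]
    exact (Ideal.height_mono (Ideal.map_le_iff_le_comap.1 hP.1.2)).trans le_self_add

section
attribute [local instance] MvPolynomial.algebraMvPolynomial

lemma ff_mvPoly (σ : Type) (k K : Type u) [Field k] [Field K] [Algebra k K] :
    Module.FaithfullyFlat (MvPolynomial σ k) (MvPolynomial σ K) := by
  have : Algebra.IsPushout k (MvPolynomial σ k) K (MvPolynomial σ K) := inferInstance
  have : Module.Free (MvPolynomial σ k) (MvPolynomial σ K) := IsBaseChange.free this.out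
  infer_instance

/-- quotient base change -/
lemma quot_baseChange_pd (S A : Type u) [CommRing S] [CommRing A] [Algebra S A] [IsNoetherianRing S]
    [Module.FaithfullyFlat S A] (I : Ideal S) (c : ℕ)
    (h : HasProjectiveDimensionLE (ModuleCat.of A (A ⧸ I.map (algebraMap S A))) c) :
    HasProjectiveDimensionLE (ModuleCat.of S (S ⧸ I)) c := by
  refine pd_descent S A c (S ⧸ I) ?_
  have e : (A ⊗[S] (S ⧸ I)) ≃ₗ[A] (A ⧸ I.map (algebraMap S A)) := by
    exact (Ideal.qoutMapEquivTensorQout A).symm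
  exact hasProjectiveDimensionLT_of_iso e.symm.toModuleIso _
end

end Q6

namespace Q6
open MvPolynomial

/-- homogeneous ideal (elementary form) -/
def Hg {σ : Type} {K : Type u} [Field K] (J : Ideal (MvPolynomial σ K)) : Prop :=
  ∀ p ∈ J, ∀ n, homogeneousComponent n p ∈ J

section
variable {σ : Type} {K : Type u} [Field K]

section
attribute [local instance] MvPolynomial.gradedAlgebra

lemma Hg_iff {J : Ideal (MvPolynomial σ K)} : Hg J ↔ J.IsHomogeneous (homogeneousSubmodule σ K) := by
  constructor
  · intro h i r hr
    have := h r hr i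
    rwa [← decomposition.decompose'_apply] at this
  · intro h p hp n
    exact homogeneousComponent_mem_of_mem h hp n

lemma Hg.span {s : Set (MvPolynomial σ K)} (h : ∀ x ∈ s, ∃ n, x.IsHomogeneous n) :
    Hg (Ideal.span s) := by
  rw [Hg_iff]
  exact Ideal.homogeneous_span _ _ h

lemma hc_mul {a : MvPolynomial σ K} {e : ℕ} (ha : a.IsHomogeneous e) (p : MvPolynomial σ K) (n : ℕ) :
    homogeneousComponent (e + n) (a * p) = a * homogeneousComponent n p := by
  have := DirectSum.coe_decompose_mul_add_of_left_mem (homogeneousSubmodule σ K) (a := a) (b := p)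
    (i := e) (j := n) ha
  rw [← decomposition.decompose'_apply, ← decomposition.decompose'_apply]
  exact this

lemma hc_mul_lt {a : MvPolynomial σ K} {e : ℕ} (ha : a.IsHomogeneous e) (p : MvPolynomial σ K) {n : ℕ}
    (hn : n < e) : homogeneousComponent n (a * p) = 0 := by
  have := DirectSum.coe_decompose_mul_of_left_mem_of_not_le (homogeneousSubmodule σ K) (a := a) (b := p)
    (i := e) (n := n) ha (by omega)
  rw [← decomposition.decompose'_apply]
  exact this

/-- primes minimal over a homogeneous proper ideal are homogeneous -/
lemma Hg.minimalPrimes {J p : Ideal (MvPolynomial σ K)} (h : Hg J) (hp : p ∈ J.minimalPrimes) : Hg p := by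
  rw [Hg_iff] at h ⊢
  have hpp := hp.1.1
  have h1 : (p.homogeneousCore (homogeneousSubmodule σ K)).toIdeal.IsPrime := Ideal.IsPrime.homogeneousCore hpp
  have h2 : J ≤ (p.homogeneousCore (homogeneousSubmodule σ K)).toIdeal := by
    have := Ideal.homogeneousCore_mono (homogeneousSubmodule σ K) hp.1.2
    rw [← h.toIdeal_homogeneousCore_eq_self]
    exact this
  have h3 := Ideal.toIdeal_homogeneousCore_le (homogeneousSubmodule σ K) p
  have h4 := hp.2 ⟨h1, h2⟩ h3
  rw [← le_antisymm h3 h4]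
  exact (p.homogeneousCore (homogeneousSubmodule σ K)).isHomogeneous
end

lemma hc_self {p : MvPolynomial σ K} {n : ℕ} (h : p.IsHomogeneous n) : homogeneousComponent n p = p :=
  homogeneousComponent_eq_self h

lemma Hg.bot : Hg (⊥ : Ideal (MvPolynomial σ K)) := by
  intro p hp n
  rw [Ideal.mem_bot] at hp
  simp [hp]

lemma Hg.sup {I J : Ideal (MvPolynomial σ K)} (hI : Hg I) (hJ : Hg J) : Hg (I ⊔ J) := by
  intro p hp n
  obtain ⟨a, ha, b, hb, rfl⟩ := Submodule.mem_sup.1 hp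
  rw [map_add]
  exact add_mem (Ideal.mem_sup_left (hI a ha n)) (Ideal.mem_sup_right (hJ b hb n))

lemma Hg.sup_span {J : Ideal (MvPolynomial σ K)} (hJ : Hg J) {a : MvPolynomial σ K} {e : ℕ}
    (ha : a.IsHomogeneous e) : Hg (J ⊔ Ideal.span {a}) :=
  hJ.sup (Hg.span (by rintro x rfl; exact ⟨e, ha⟩))

lemma mem_of_hc {J : Ideal (MvPolynomial σ K)} {p : MvPolynomial σ K}
    (h : ∀ n, homogeneousComponent n p ∈ J) : p ∈ J := by
  rw [← sum_homogeneousComponent p]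
  exact sum_mem fun i _ => h i

lemma Hg.le_mm {J : Ideal (MvPolynomial σ K)} (h : Hg J) (hJ : J ≠ ⊤) :
    J ≤ Ideal.span (Set.range X) := by
  intro p hp
  rw [mem_mm]
  by_contra hc
  have := h p hp 0
  rw [homogeneousComponent_zero] at this
  apply hJ
  refine Ideal.eq_top_of_isUnit_mem _ this ?_
  rw [MvPolynomial.isUnit_iff_eq_C_of_isReduced]
  exact ⟨_, isUnit_iff_ne_zero.2 hc, rfl⟩

/-- homogeneous element of `J + (a)` -/
lemma mem_sup_hom {J : Ideal (MvPolynomial σ K)} (hJ : Hg J) {a t : MvPolynomial σ K} {e n : ℕ}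
    (ha : a.IsHomogeneous e) (ht : t.IsHomogeneous (e + n)) (h : t ∈ J ⊔ Ideal.span {a}) :
    ∃ c, c.IsHomogeneous n ∧ t - a * c ∈ J := by
  obtain ⟨c, hc⟩ := mem_sup_span.1 h
  refine ⟨homogeneousComponent n c, homogeneousComponent_isHomogeneous _ _, ?_⟩
  have := hJ _ hc (e + n)
  rwa [map_sub, hc_self ht, hc_mul ha] at this

lemma mem_sup_hom_lt {J : Ideal (MvPolynomial σ K)} (hJ : Hg J) {a t : MvPolynomial σ K} {e n : ℕ}
    (ha : a.IsHomogeneous e) (ht : t.IsHomogeneous n) (hn : n < e) (h : t ∈ J ⊔ Ideal.span {a}) :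
    t ∈ J := by
  obtain ⟨c, hc⟩ := mem_sup_span.1 h
  have := hJ _ hc n
  rwa [map_sub, hc_self ht, hc_mul_lt ha _ hn, sub_zero] at this

/-- P0 -/
lemma krull_hom {J : Ideal (MvPolynomial σ K)} (hJ : Hg J) {a u : MvPolynomial σ K} {e : ℕ}
    (ha : a.IsHomogeneous e) (he : 0 < e) (h : ∀ n, u ∈ J ⊔ Ideal.span {a ^ n}) : u ∈ J := by
  apply mem_of_hc
  intro m
  obtain ⟨c, hc⟩ := mem_sup_span.1 (h (m + 1))
  have := hJ _ hc m
  rwa [map_sub, hc_mul_lt (ha.pow (m+1)) _ (by nlinarith), sub_zero] at this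

/-- P1 -/
lemma nz_of_nz {J : Ideal (MvPolynomial σ K)} (hJ : Hg J) {a b : MvPolynomial σ K} {e : ℕ}
    (ha : a.IsHomogeneous e) (he : 0 < e) (h1 : NZ J a) (h2 : NZ (J ⊔ Ideal.span {a}) b) : NZ J b := by
  intro u hu
  refine krull_hom hJ ha he fun n => ?_
  induction n with
  | zero => rw [pow_zero, mem_sup_span]; exact ⟨u, by simp⟩
  | succ n ih =>
    obtain ⟨v, hv⟩ := mem_sup_span.1 ih
    have hpow : ∀ n w, a ^ n * w ∈ J → w ∈ J := by
      intro n
      induction n with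
      | zero => intro w hw; simpa using hw
      | succ n ih => intro w hw; rw [pow_succ, mul_assoc] at hw; exact h1 _ (ih _ hw)
    have h3 : b * v ∈ J := by
      apply hpow n
      have := J.sub_mem hu (J.mul_mem_left b hv)
      convert this using 1; ring
    obtain ⟨w, hw⟩ := mem_sup_span.1 (h2 v (Ideal.mem_sup_left h3))
    rw [mem_sup_span]
    refine ⟨w, ?_⟩
    have := J.add_mem hv (J.mul_mem_left (a ^ n) hw)
    convert this using 1; ring

/-- P2 -/
lemma nz_swap {R : Type u} [CommRing R] {J : Ideal R} {a b : R} (h1 : NZ J a)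
    (h2 : NZ (J ⊔ Ideal.span {a}) b) : NZ (J ⊔ Ideal.span {b}) a := by
  intro u hu
  obtain ⟨v, hv⟩ := mem_sup_span.1 hu
  have h3 : v ∈ J ⊔ Ideal.span {a} := by
    apply h2
    rw [mem_sup_span]
    refine ⟨u, ?_⟩
    have := J.neg_mem hv
    convert this using 1; ring
  obtain ⟨w, hw⟩ := mem_sup_span.1 h3
  rw [mem_sup_span]
  refine ⟨w, h1 _ ?_⟩
  have := J.add_mem hv (J.mul_mem_left b hw)
  convert this using 1; ring

end
end Q6

namespace Q6
open MvPolynomial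

abbrev ad {R : Type u} [CommRing R] (J : Ideal R) (a : R) : Ideal R := J ⊔ Ideal.span {a}

lemma ad_comm {R : Type u} [CommRing R] (J : Ideal R) (a b : R) : ad (ad J a) b = ad (ad J b) a :=
  sup_right_comm _ _ _

lemma ad_mono {R : Type u} [CommRing R] {J J' : Ideal R} (h : J ≤ J') (a : R) : ad J a ≤ ad J' a :=
  sup_le_sup_right h _

lemma mem_ad {R : Type u} [CommRing R] (J : Ideal R) (a : R) : a ∈ ad J a :=
  Ideal.mem_sup_right (Ideal.subset_span rfl)

/-- avoiding primes by a general member of a subspace -/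
lemma avoid {K : Type u} [Field K] [Infinite K] {A : Type u} [CommRing A] [Algebra K A]
    (V : Submodule K A) (P : Set (Ideal A)) (hP : P.Finite) (h : ∀ p ∈ P, ∃ v ∈ V, v ∉ p) :
    ∃ v ∈ V, ∀ p ∈ P, v ∉ p := by
  classical
  let f : Ideal A → Subspace K V := fun p => (p.restrictScalars K).comap V.subtype
  have hs : ⊤ ∉ hP.toFinset.image f := by
    intro hc
    obtain ⟨p, hp, hpt⟩ := Finset.mem_image.1 hc
    obtain ⟨v, hv, hvp⟩ := h p (by simpa using hp)
    have : (⟨v, hv⟩ : V) ∈ f p := by rw [hpt]; trivial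
    exact hvp this
  have := Subspace.biUnion_ne_univ_of_top_notMem hs
  rw [Set.ne_univ_iff_exists_notMem] at this
  obtain ⟨⟨v, hv⟩, hn⟩ := this
  refine ⟨v, hv, fun p hp hvp => hn ?_⟩
  simp only [Set.mem_iUnion]
  exact ⟨f p, Finset.mem_image.2 ⟨p, by simpa using hp, rfl⟩, hvp⟩

section
variable {σ : Type} {K : Type u} [Field K]

def Soc (J : Ideal (MvPolynomial σ K)) : Prop := ∀ u, (∀ i, X i * u ∈ J) → u ∈ J

def SF (J : Ideal (MvPolynomial σ K)) (n : ℕ) : Prop :=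
  ∀ i < n, ∀ u : MvPolynomial σ K, u.IsHomogeneous i → (∀ i, X i * u ∈ J) → u ∈ J

lemma Soc.of_nz {J : Ideal (MvPolynomial σ K)} (i : σ) (h : NZ J (X i)) : Soc J :=
  fun u hu => h u (hu i)

lemma exch_aux {J : Ideal (MvPolynomial σ K)} {f g u v : MvPolynomial σ K} (hf : NZ J f)
    (hv : g * u - f * v ∈ J) (i : σ) (hi : X i * u ∈ ad J f) : X i * v ∈ ad J g := by
  obtain ⟨w, hw⟩ := mem_sup_span.1 hi
  rw [mem_sup_span]
  refine ⟨w, hf _ ?_⟩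
  have := J.sub_mem (J.mul_mem_left g hw) (J.mul_mem_left (X i) hv)
  convert this using 1; ring

lemma exch_aux2 {J : Ideal (MvPolynomial σ K)} {f g u v : MvPolynomial σ K} (hg : NZ J g)
    (hv : g * u - f * v ∈ J) (h : v ∈ ad J g) : u ∈ ad J f := by
  obtain ⟨w, hw⟩ := mem_sup_span.1 h
  rw [mem_sup_span]
  refine ⟨w, hg _ ?_⟩
  have := J.add_mem hv (J.mul_mem_left f hw)
  convert this using 1; ring

lemma mul_mem_of_mm {J : Ideal (MvPolynomial σ K)} {u g : MvPolynomial σ K}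
    (hu : ∀ i, X i * u ∈ J) (hg : g ∈ Ideal.span (Set.range (X : σ → MvPolynomial σ K))) : g * u ∈ J := by
  have : Ideal.span (Set.range (X : σ → MvPolynomial σ K)) ≤ J.colon {u} := by
    rw [Ideal.span_le]
    rintro _ ⟨i, rfl⟩
    rw [SetLike.mem_coe, Submodule.mem_colon_singleton]
    exact hu i
  exact Submodule.mem_colon_singleton.1 (this hg)

lemma hom_mem_mm {p : MvPolynomial σ K} {n : ℕ} (hp : p.IsHomogeneous n) (hn : 0 < n) :
    p ∈ Ideal.span (Set.range (X : σ → MvPolynomial σ K)) := by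
  rw [mem_mm]
  exact hp.coeff_eq_zero (by simp; omega)

lemma Soc.exch {J : Ideal (MvPolynomial σ K)} {f g : MvPolynomial σ K} (hf : NZ J f) (hg : NZ J g)
    (hgm : g ∈ Ideal.span (Set.range (X : σ → MvPolynomial σ K))) (h : Soc (ad J g)) : Soc (ad J f) := by
  intro u hu
  obtain ⟨v, hv⟩ := mem_sup_span.1 (mul_mem_of_mm hu hgm)
  exact exch_aux2 hg hv (h v fun i => exch_aux hf hv i (hu i))

lemma SF.exch {J : Ideal (MvPolynomial σ K)} (hJ : Hg J) {f g : MvPolynomial σ K} (hf : NZ J f) (hg : NZ J g)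
    (hg1 : g.IsHomogeneous 1) (hf2 : f.IsHomogeneous 2) {n : ℕ} (h : SF (ad J g) n) :
    SF (ad J f) (n + 1) := by
  intro i hi u hui hu
  have hgu := mul_mem_of_mm hu (hom_mem_mm hg1 one_pos)
  rcases i with _ | i
  · exact Ideal.mem_sup_left (hg u (mem_sup_hom_lt hJ hf2 (hg1.mul hui) (by omega) hgu))
  · have h1 := hg1.mul hui
    rw [show 1 + (i + 1) = 2 + i by ring] at h1
    obtain ⟨v, hvi, hv⟩ := mem_sup_hom hJ hf2 h1 hgu
    exact exch_aux2 hg hv (h i (by omega) v hvi fun i => exch_aux hf hv i (hu i))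

/-- general linear form -/
lemma lin_avoid [Infinite K] [Finite σ] (P : Set (Ideal (MvPolynomial σ K))) (hP : P.Finite)
    (h : ∀ p ∈ P, ¬ Ideal.span (Set.range (X : σ → MvPolynomial σ K)) ≤ p) :
    ∃ e : MvPolynomial σ K, e.IsHomogeneous 1 ∧ ∀ p ∈ P, e ∉ p := by
  refine avoid (homogeneousSubmodule σ K 1) P hP fun p hp => ?_
  have := h p hp
  rw [Ideal.span_le, Set.not_subset] at this
  obtain ⟨_, ⟨i, rfl⟩, hi⟩ := this
  exact ⟨X i, isHomogeneous_X _ _, hi⟩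

lemma lin_nz [Infinite K] [Finite σ] {J₁ J₂ : Ideal (MvPolynomial σ K)} (h₁ : Soc J₁) (h₂ : Soc J₂) :
    ∃ e : MvPolynomial σ K, e.IsHomogeneous 1 ∧ NZ J₁ e ∧ NZ J₂ e := by
  have key : ∀ J : Ideal (MvPolynomial σ K), Soc J → ∀ p ∈ AssI J,
      ¬ Ideal.span (Set.range (X : σ → MvPolynomial σ K)) ≤ p := by
    rintro J hJ p ⟨hp, w, hw⟩ hm
    have h1 : w ∈ J := hJ w fun i => (hw _).1 (hm (Ideal.subset_span ⟨i, rfl⟩))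
    apply hp.ne_top
    rw [Ideal.eq_top_iff_one, hw, one_mul]; exact h1
  obtain ⟨e, he, h⟩ := lin_avoid (AssI J₁ ∪ AssI J₂) ((assI_finite _).union (assI_finite _)) (by
    rintro p (hp | hp)
    · exact key _ h₁ p hp
    · exact key _ h₂ p hp)
  refine ⟨e, he, ?_, ?_⟩
  · by_contra hc
    obtain ⟨p, hp, hep⟩ := not_nz hc
    exact h p (Or.inl hp) hep
  · by_contra hc
    obtain ⟨p, hp, hep⟩ := not_nz hc
    exact h p (Or.inr hp) hep

lemma nz_bot {a : MvPolynomial σ K} (ha : a ≠ 0) : NZ ⊥ a := by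
  intro u hu
  rw [Ideal.mem_bot] at hu ⊢
  exact (mul_eq_zero.1 hu).resolve_left ha
end

section
variable {K : Type u} [Field K]

lemma nzX0 (i : Fin 3) (hi : i ≠ 0) : NZ (ad ⊥ (X 0 : MvPolynomial (Fin 3) K)) (X i) := by
  have := X_nz (K := K) ({0} : Set (Fin 3)) i (by simpa using hi)
  simpa [ad] using this

lemma nzX01 : NZ (ad (ad ⊥ (X 0 : MvPolynomial (Fin 3) K)) (X 1)) (X 2) := by
  have := X_nz (K := K) ({0, 1} : Set (Fin 3)) 2 (by simp)
  rw [Set.image_pair, Ideal.span_insert] at this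
  simpa [ad] using this

lemma soc_one {f : MvPolynomial (Fin 3) K} (hf : f ≠ 0) : Soc (ad ⊥ f) :=
  Soc.exch (nz_bot hf) (nz_bot (X_ne_zero (0 : Fin 3))) (Ideal.subset_span ⟨0, rfl⟩)
    (Soc.of_nz 1 (nzX0 1 (by simp)))

lemma NZ.ne_zero {R : Type u} [CommRing R] {J : Ideal R} (hJ : J ≠ ⊤) {a : R} (h : NZ J a) : a ≠ 0 := by
  rintro rfl
  apply hJ
  rw [Ideal.eq_top_iff_one]
  exact h 1 (by simp)

lemma soc_two [Infinite K] {a b : MvPolynomial (Fin 3) K} {m : ℕ} (ha : a ≠ 0) (ham : a.IsHomogeneous m)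
    (hm : 0 < m) (hb : NZ (ad ⊥ a) b) : Soc (ad (ad ⊥ a) b) := by
  obtain ⟨e, he, h1, h2⟩ := lin_nz (soc_one (X_ne_zero (R := K) (0 : Fin 3))) (soc_one ha)
  have hem := hom_mem_mm he one_pos
  have hX0 := nz_bot (X_ne_zero (R := K) (0 : Fin 3))
  -- (X0, e)
  have s1 : Soc (ad (ad ⊥ (X 0)) e) := Soc.exch h1 (nzX0 1 (by simp)) (Ideal.subset_span ⟨1, rfl⟩)
    (Soc.of_nz 2 nzX01)
  rw [ad_comm] at s1
  -- (e, a)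
  have s2 : Soc (ad (ad ⊥ e) a) := Soc.exch (nz_swap (nz_bot ha) h2) (nz_swap hX0 h1)
    (Ideal.subset_span ⟨0, rfl⟩) s1
  rw [ad_comm] at s2
  exact Soc.exch hb h2 hem s2

lemma height_mm_ge {N : ℕ} (s : Finset (Fin N)) :
    (s.card : ℕ∞) ≤ (Ideal.span ((X : Fin N → MvPolynomial (Fin N) K) '' s)).height := by
  classical
  induction s using Finset.induction with
  | empty => simp
  | insert i s hi ih =>
    rw [Finset.card_insert_of_notMem hi]
    push_cast
    refine (add_le_add_left ih 1).trans ?_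
    refine height_succ_le (a := X i) (fun p hp => ?_) (Ideal.span_mono (by gcongr; simp))
      (Ideal.subset_span ⟨i, by simp, rfl⟩)
    exact nz_notMem_minimalPrimes (X_nz (K := K) (s : Set (Fin N)) i (by simpa using hi)) hp

lemma height_mm_eq (N : ℕ) : (mm K N).height = N := by
  refine le_antisymm (height_mm K N) ?_
  have := height_mm_ge (K := K) (Finset.univ : Finset (Fin N))
  simpa [mm] using this

structure CSet (f₁ f₂ f₃ : MvPolynomial (Fin 3) K) : Prop where
  h1 : f₁.IsHomogeneous 2
  h2 : f₂.IsHomogeneous 2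
  h3 : f₃.IsHomogeneous 2
  hm : ∃ s, mm K 3 ^ s ≤ ad (ad (ad ⊥ f₁) f₂) f₃

namespace CSet
variable {f₁ f₂ f₃ : MvPolynomial (Fin 3) K}

lemma ht (h : CSet f₁ f₂ f₃) : 3 ≤ (ad (ad (ad ⊥ f₁) f₂) f₃).height := by
  obtain ⟨s, hs⟩ := h.hm
  rw [Ideal.height_eq_inf_minimalPrimes]
  refine le_iInf₂ fun p hp => ?_
  have := hp.1.1
  have h3 := height_mm_eq (K := K) 3
  rw [show (3 : ℕ∞) = ((3 : ℕ) : ℕ∞) from rfl, ← h3]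
  exact Ideal.height_mono (Ideal.IsPrime.le_of_pow_le (hs.trans hp.1.2))

lemma no_two (h : CSet f₁ f₂ f₃) {g g' : MvPolynomial (Fin 3) K} (hg : g ∈ mm K 3) (hg' : g' ∈ mm K 3)
    (hle : ad (ad (ad ⊥ f₁) f₂) f₃ ≤ Ideal.span {g, g'}) : False := by
  have hmm : Ideal.span {g, g'} ≤ mm K 3 := by
    rw [Ideal.span_le]; rintro x (rfl | rfl) <;> assumption
  have hne : Ideal.span {g, g'} ≠ ⊤ := fun hc => (mm_max K 3).ne_top (top_le_iff.1 (hc ▸ hmm))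
  obtain ⟨p, hp⟩ := Ideal.nonempty_minimalPrimes hne
  have := hp.1.1
  have h2 : p.height ≤ 2 := by
    classical
    have := Ideal.height_le_card_of_mem_minimalPrimes_span_finset (s := {g, g'}) (p := p) (by simpa using hp)
    refine this.trans ?_
    exact_mod_cast Finset.card_le_two
  have h3 := h.ht.trans (Ideal.height_mono (hle.trans hp.1.2))
  have := h3.trans h2
  exact absurd this (by decide)

lemma m1 (h : CSet f₁ f₂ f₃) : f₁ ∈ mm K 3 := hom_mem_mm h.h1 two_pos
lemma m2 (h : CSet f₁ f₂ f₃) : f₂ ∈ mm K 3 := hom_mem_mm h.h2 two_pos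
lemma m3 (h : CSet f₁ f₂ f₃) : f₃ ∈ mm K 3 := hom_mem_mm h.h3 two_pos

lemma ad3_le {R : Type u} [CommRing R] {f₁ f₂ f₃ : R} {J : Ideal R} (h1 : f₁ ∈ J) (h2 : f₂ ∈ J) (h3 : f₃ ∈ J) :
    ad (ad (ad ⊥ f₁) f₂) f₃ ≤ J := by
  refine sup_le (sup_le (sup_le bot_le ?_) ?_) ?_ <;> rw [Ideal.span_le] <;> rintro x rfl <;> assumption

lemma ne1 (h : CSet f₁ f₂ f₃) : f₁ ≠ 0 := by
  rintro rfl
  exact h.no_two h.m2 h.m3 (ad3_le (zero_mem _) (Ideal.subset_span (by simp)) (Ideal.subset_span (by simp)))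

lemma nz2 (h : CSet f₁ f₂ f₃) : NZ (ad ⊥ f₁) f₂ := by
  have hrel : IsRelPrime f₁ f₂ := by
    rw [UniqueFactorizationMonoid.isRelPrime_iff_no_prime_factors h.ne1]
    intro π h1 h2 hπ
    have hpr : (Ideal.span {π}).IsPrime := (Ideal.span_singleton_prime hπ.ne_zero).2 hπ
    have hmem : Ideal.span {π} ∈ (ad ⊥ f₁).minimalPrimes := by
      apply Ideal.mem_minimalPrimes_of_height_le
      · refine sup_le bot_le ?_
        rw [Ideal.span_singleton_le_span_singleton]; exact h1
      · have e1 : (Ideal.span {π}).height ≤ 1 :=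
          Ideal.height_le_one_of_isPrincipal_of_mem_minimalPrimes (Ideal.span {π}) _ (by
            rw [Ideal.minimalPrimes_eq_subsingleton_self]; rfl)
        refine e1.trans ?_
        have := height_succ_le (J := ⊥) (J' := ad ⊥ f₁) (a := f₁) (fun p hp =>
          nz_notMem_minimalPrimes (nz_bot h.ne1) hp) bot_le (mem_ad _ _)
        exact le_add_self.trans this
    have hH : Hg (Ideal.span {π}) := (Hg.bot.sup_span h.h1).minimalPrimes hmem
    have hπm : π ∈ mm K 3 := hH.le_mm hpr.ne_top (Ideal.subset_span rfl)
    refine h.no_two hπm h.m3 (ad3_le ?_ ?_ (Ideal.subset_span (by simp)))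
    · exact Ideal.mem_of_dvd _ h1 (Ideal.subset_span (by simp))
    · exact Ideal.mem_of_dvd _ h2 (Ideal.subset_span (by simp))
  intro u hu
  simp only [ad, bot_sup_eq, Ideal.mem_span_singleton] at hu ⊢
  exact hrel.dvd_of_dvd_mul_left hu

variable [Infinite K]
lemma nz3 (h : CSet f₁ f₂ f₃) : NZ (ad (ad ⊥ f₁) f₂) f₃ := by
  by_contra hc
  obtain ⟨p, hp, h3⟩ := not_nz hc
  have hle := assI_le hp
  obtain ⟨hpp, w, hw⟩ := hp
  obtain ⟨s, hs⟩ := h.hm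
  have hmp : mm K 3 ≤ p := Ideal.IsPrime.le_of_pow_le (hs.trans (sup_le hle (by
    rw [Ideal.span_le]; rintro x rfl; exact h3)))
  have hS := soc_two h.ne1 h.h1 two_pos h.nz2
  have h1 := hS w fun i => (hw _).1 (hmp (Ideal.subset_span ⟨i, rfl⟩))
  apply hpp.ne_top
  rw [Ideal.eq_top_iff_one, hw, one_mul]; exact h1

lemma sf (h : CSet f₁ f₂ f₃) : SF (ad (ad (ad ⊥ f₁) f₂) f₃) 3 := by
  have g1 := Hg.bot.sup_span h.h1
  obtain ⟨a, ha, hn, -⟩ := lin_nz (soc_two h.ne1 h.h1 two_pos h.nz2) (soc_two h.ne1 h.h1 two_pos h.nz2)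
  refine SF.exch (g1.sup_span h.h2) h.nz3 hn ha h.h3 ?_
  rw [ad_comm]
  have n1 : NZ (ad ⊥ f₁) a := nz_of_nz g1 h.h2 two_pos h.nz2 hn
  obtain ⟨b, hb, hn', -⟩ := lin_nz (soc_two h.ne1 h.h1 two_pos n1) (soc_two h.ne1 h.h1 two_pos n1)
  refine SF.exch (g1.sup_span ha) (nz_swap h.nz2 hn) hn' hb h.h2 ?_
  change SF (ad (ad (ad ⊥ f₁) a) b) 1
  rw [ad_comm ⊥ f₁ a, ad_comm _ f₁ b]
  have n2 : NZ ⊥ a := nz_of_nz Hg.bot h.h1 two_pos (nz_bot h.ne1) n1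
  have n3 : NZ (ad ⊥ a) f₁ := nz_swap (nz_bot h.ne1) n1
  have g2 := Hg.bot.sup_span ha
  rw [ad_comm] at hn'
  have n4 : NZ (ad ⊥ a) b := nz_of_nz g2 h.h1 two_pos n3 hn'
  have n5 : NZ (ad (ad ⊥ a) b) f₁ := nz_swap n3 hn'
  have ha0 : a ≠ 0 := NZ.ne_zero bot_ne_top n2
  obtain ⟨c, hc, hn'', -⟩ := lin_nz (soc_two ha0 ha one_pos n4) (soc_two ha0 ha one_pos n4)
  refine SF.exch (g2.sup_span hb) n5 hn'' hc h.h1 ?_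
  intro i hi; omega
end CSet
end
end Q6

namespace Q6
open MvPolynomial Module

section
variable {σ : Type} {K : Type u} [Field K]

noncomputable def HF (J : Ideal (MvPolynomial σ K)) (n : ℕ) : ℕ :=
  finrank K (Submodule.map (Ideal.Quotient.mkₐ K J).toLinearMap (homogeneousSubmodule σ K n))

lemma hilbertFunction_eq {N : ℕ} (J : Ideal (MvPolynomial (Fin N) K)) (n : ℕ) :
    hilbertFunction K J n = HF J n := rfl

noncomputable def Jn (J : Ideal (MvPolynomial σ K)) (n : ℕ) : Submodule K (MvPolynomial σ K) :=
  (J.restrictScalars K) ⊓ homogeneousSubmodule σ K n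

lemma mem_Jn {J : Ideal (MvPolynomial σ K)} {n : ℕ} {t : MvPolynomial σ K} :
    t ∈ Jn J n ↔ t ∈ J ∧ t.IsHomogeneous n := Iff.rfl

variable [Finite σ]

instance finHom (n : ℕ) : Module.Finite K (homogeneousSubmodule σ K n) :=
  Module.Finite.iff_fg.2 (homogeneousSubmodule_fg σ K n)

instance finJn (J : Ideal (MvPolynomial σ K)) (n : ℕ) : Module.Finite K (Jn J n) :=
  Submodule.finiteDimensional_of_le (inf_le_right : Jn J n ≤ homogeneousSubmodule σ K n)

lemma HF_add (J : Ideal (MvPolynomial σ K)) (n : ℕ) :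
    HF J n + finrank K (Jn J n) = finrank K (homogeneousSubmodule σ K n) := by
  let f := (Ideal.Quotient.mkₐ K J).toLinearMap.domRestrict (homogeneousSubmodule σ K n)
  have h1 : LinearMap.range f = Submodule.map (Ideal.Quotient.mkₐ K J).toLinearMap (homogeneousSubmodule σ K n) := by
    exact LinearMap.range_domRestrict _ _
  have h2 : (LinearMap.ker f).map (homogeneousSubmodule σ K n).subtype = Jn J n := by
    ext t
    simp only [Submodule.mem_map, LinearMap.mem_ker, Submodule.coe_subtype, mem_Jn, Subtype.exists,
      exists_and_right, exists_eq_right, f, LinearMap.domRestrict_apply, AlgHom.toLinearMap_apply,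
      Ideal.Quotient.mkₐ_eq_mk, Ideal.Quotient.eq_zero_iff_mem, mem_homogeneousSubmodule]
    exact ⟨fun ⟨a, b⟩ => ⟨b, a⟩, fun ⟨a, b⟩ => ⟨b, a⟩⟩
  have h3 := LinearMap.finrank_range_add_finrank_ker f
  rw [h1] at h3
  rw [← h2, Submodule.finrank_map_subtype_eq]
  exact h3

lemma HF_mono {J J' : Ideal (MvPolynomial σ K)} (h : J ≤ J') (n : ℕ) : HF J' n ≤ HF J n := by
  have h1 := HF_add J n
  have h2 := HF_add J' n
  have h3 : finrank K (Jn J n) ≤ finrank K (Jn J' n) :=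
    Submodule.finrank_mono (inf_le_inf_right _ h)
  omega

lemma HF_lt {J J' : Ideal (MvPolynomial σ K)} (h : J ≤ J') {n : ℕ} {t : MvPolynomial σ K}
    (ht : t.IsHomogeneous n) (h1 : t ∈ J') (h2 : t ∉ J) : HF J' n < HF J n := by
  have e1 := HF_add J n
  have e2 := HF_add J' n
  have h3 : finrank K (Jn J n) < finrank K (Jn J' n) := by
    apply Submodule.finrank_lt_finrank_of_lt
    refine lt_of_le_of_ne (inf_le_inf_right _ h) fun hc => h2 ?_
    have : t ∈ Jn J' n := ⟨h1, ht⟩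
    rw [← hc] at this
    exact this.1
  omega

/-- H1 -/
lemma HF_ad {J : Ideal (MvPolynomial σ K)} (hJ : Hg J) {a : MvPolynomial σ K} {e : ℕ}
    (ha : a.IsHomogeneous e) (h : NZ J a) (n : ℕ) :
    HF (ad J a) (e + n) + HF J n = HF J (e + n) := by
  have e1 := HF_add J n
  have e2 := HF_add J (e + n)
  have e3 := HF_add (ad J a) (e + n)
  -- linear map T_n → (ad J a)_{e+n} / ...
  let φ : (homogeneousSubmodule σ K n × Jn J (e + n)) →ₗ[K] MvPolynomial σ K :=
    LinearMap.coprod ((LinearMap.mulLeft K a).domRestrict _) (Jn J (e + n)).subtype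
  have hφ : ∀ x, φ x = a * x.1 + x.2 := fun x => rfl
  have h1 : LinearMap.range φ = Jn (ad J a) (e + n) := by
    ext t
    rw [LinearMap.mem_range, mem_Jn]
    constructor
    · rintro ⟨⟨⟨x, hx⟩, ⟨y, hy⟩⟩, rfl⟩
      rw [hφ]
      refine ⟨add_mem (Ideal.mul_mem_right _ _ (mem_ad _ _)) (Ideal.mem_sup_left hy.1), ?_⟩
      exact (ha.mul hx).add hy.2
    · rintro ⟨h1, h2⟩
      obtain ⟨c, hc, hc'⟩ := mem_sup_hom hJ ha h2 h1
      refine ⟨⟨⟨c, hc⟩, ⟨t - a * c, hc', h2.sub (ha.mul hc)⟩⟩, ?_⟩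
      rw [hφ]; ring
  have h2 : finrank K (LinearMap.ker φ) = finrank K (Jn J n) := by
    let ψ : LinearMap.ker φ →ₗ[K] MvPolynomial σ K :=
      (homogeneousSubmodule σ K n).subtype ∘ₗ LinearMap.fst K _ _ ∘ₗ (LinearMap.ker φ).subtype
    have hψ : ∀ x : LinearMap.ker φ, ψ x = x.1.1 := fun x => rfl
    have hinj : Function.Injective ψ := by
      rintro ⟨⟨⟨x, hx⟩, ⟨y, hy⟩⟩, hk⟩ ⟨⟨⟨x', hx'⟩, ⟨y', hy'⟩⟩, hk'⟩ hxx
      rw [LinearMap.mem_ker, hφ] at hk hk'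
      rw [hψ, hψ] at hxx
      simp only at hxx hk hk'
      subst hxx
      have : y = y' := add_left_cancel (hk.trans hk'.symm)
      subst this
      rfl
    rw [← LinearMap.finrank_range_of_inj hinj]
    suffices LinearMap.range ψ = Jn J n by rw [this]
    ext t
    rw [LinearMap.mem_range, mem_Jn]
    constructor
    · rintro ⟨⟨⟨⟨x, hx⟩, ⟨y, hy⟩⟩, hk⟩, rfl⟩
      rw [LinearMap.mem_ker, hφ] at hk
      rw [hψ]
      refine ⟨h _ ?_, hx⟩
      have : a * x = - y := eq_neg_of_add_eq_zero_left hk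
      show a * x ∈ J
      rw [this]; exact J.neg_mem hy.1
    · rintro ⟨h1, h2⟩
      refine ⟨⟨⟨⟨t, h2⟩, ⟨-(a * t), J.neg_mem (J.mul_mem_left _ h1), (ha.mul h2).neg⟩⟩, ?_⟩, rfl⟩
      rw [LinearMap.mem_ker, hφ]; simp
  have h3 := LinearMap.finrank_range_add_finrank_ker φ
  rw [h1, h2, finrank_prod] at h3
  omega

lemma HF_ad_lt {J : Ideal (MvPolynomial σ K)} (hJ : Hg J) {a : MvPolynomial σ K} {e n : ℕ}
    (ha : a.IsHomogeneous e) (hn : n < e) : HF (ad J a) n = HF J n := by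
  have e1 := HF_add J n
  have e2 := HF_add (ad J a) n
  have : Jn (ad J a) n = Jn J n := by
    ext t
    rw [mem_Jn, mem_Jn]
    exact ⟨fun h => ⟨mem_sup_hom_lt hJ ha h.2 hn h.1, h.2⟩, fun h => ⟨Ideal.mem_sup_left h.1, h.2⟩⟩
  rw [this] at e2
  omega

lemma HF_eq_of_basis {J : Ideal (MvPolynomial σ K)} {n m : ℕ} (v : Fin m → MvPolynomial σ K)
    (hv : ∀ i, (v i).IsHomogeneous n) (hind : ∀ c : Fin m → K, ∑ i, c i • v i ∈ J → c = 0)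
    (hspan : ∀ t : MvPolynomial σ K, t.IsHomogeneous n → ∃ c : Fin m → K, t - ∑ i, c i • v i ∈ J) :
    HF J n = m := by
  have hli : LinearIndependent K (fun i => (Ideal.Quotient.mkₐ K J).toLinearMap (v i)) := by
    rw [Fintype.linearIndependent_iff]
    intro c hc
    have : c = 0 := by
      apply hind
      rw [← Ideal.Quotient.eq_zero_iff_mem, ← Ideal.Quotient.mkₐ_eq_mk K, ← hc]
      exact (map_sum ((Ideal.Quotient.mkₐ K J).toLinearMap) (fun i => c i • v i) _).trans
        (Finset.sum_congr rfl fun i _ => by rw [map_smul])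
    intro i; rw [this]; rfl
  have hsp : Submodule.map (Ideal.Quotient.mkₐ K J).toLinearMap (homogeneousSubmodule σ K n) =
      Submodule.span K (Set.range fun i => (Ideal.Quotient.mkₐ K J).toLinearMap (v i)) := by
    apply le_antisymm
    · rintro _ ⟨t, ht, rfl⟩
      obtain ⟨c, hc⟩ := hspan t ht
      have : (Ideal.Quotient.mkₐ K J).toLinearMap t = ∑ i, c i • (Ideal.Quotient.mkₐ K J).toLinearMap (v i) := by
        rw [← Ideal.Quotient.eq_zero_iff_mem, map_sub, sub_eq_zero] at hc
        refine hc.trans ?_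
        exact (map_sum ((Ideal.Quotient.mkₐ K J).toLinearMap) (fun i => c i • v i) _).trans
          (Finset.sum_congr rfl fun i _ => by rw [map_smul])
      rw [this]
      exact sum_mem fun i _ => Submodule.smul_mem _ _ (Submodule.subset_span ⟨i, rfl⟩)
    · rw [Submodule.span_le]
      rintro _ ⟨i, rfl⟩
      exact ⟨v i, hv i, rfl⟩
  rw [HF, hsp, finrank_span_eq_card hli, Fintype.card_fin]

lemma HF_basis (J : Ideal (MvPolynomial σ K)) (n : ℕ) : ∃ v : Fin (HF J n) → MvPolynomial σ K,
    (∀ i, (v i).IsHomogeneous n) ∧ (∀ c : Fin (HF J n) → K, ∑ i, c i • v i ∈ J → c = 0) ∧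
    (∀ t : MvPolynomial σ K, t.IsHomogeneous n → ∃ c : Fin (HF J n) → K, t - ∑ i, c i • v i ∈ J) := by
  let M := Submodule.map (Ideal.Quotient.mkₐ K J).toLinearMap (homogeneousSubmodule σ K n)
  let b : Basis (Fin (HF J n)) K M := finBasisOfFinrankEq K M rfl
  have : ∀ i, ∃ t : MvPolynomial σ K, t.IsHomogeneous n ∧ (Ideal.Quotient.mkₐ K J).toLinearMap t = b i := by
    intro i
    obtain ⟨t, ht, h⟩ := (b i).2
    exact ⟨t, ht, h⟩
  choose v hv hvb using this
  have hsum : ∀ c : Fin (HF J n) → K, (Ideal.Quotient.mk J) (∑ i, c i • v i) = ((∑ i, c i • b i : M) : MvPolynomial σ K ⧸ J) := by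
    intro c
    rw [Submodule.coe_sum]
    refine (map_sum ((Ideal.Quotient.mkₐ K J).toLinearMap) (fun i => c i • v i) _).trans
          (Finset.sum_congr rfl fun i _ => ?_)
    rw [map_smul, hvb]; rfl
  refine ⟨v, hv, fun c hc => ?_, fun t ht => ?_⟩
  · rw [← Ideal.Quotient.eq_zero_iff_mem, hsum] at hc
    have h0 : (∑ i, c i • b i : M) = 0 := Subtype.ext hc
    funext i
    exact Fintype.linearIndependent_iff.1 b.linearIndependent c h0 i
  · let m : M := ⟨_, Submodule.mem_map_of_mem (f := (Ideal.Quotient.mkₐ K J).toLinearMap) ht⟩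
    refine ⟨fun i => b.repr m i, ?_⟩
    rw [← Ideal.Quotient.eq_zero_iff_mem, map_sub, hsum, b.sum_repr, sub_eq_zero]
    rfl
end

section
variable {σ : Type} {K : Type u} [Field K] [Fintype σ]

lemma finrank_hom (n : ℕ) : finrank K (homogeneousSubmodule σ K n) = (Fintype.card σ + n - 1).choose n := by
  classical
  rw [homogeneousSubmodule_eq_finsupp_supported]
  have hset : {d : σ →₀ ℕ | d.degree = n} = ((Finset.univ : Finset σ).finsuppAntidiag n : Set (σ →₀ ℕ)) := by
    ext d
    simp [Finsupp.degree_eq_sum]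
  have e := AddMonoidAlgebra.supportedEquivFinsupp (R := K) (S := K) {d : σ →₀ ℕ | d.degree = n}
  rw [LinearEquiv.finrank_eq e, hset]
  rw [finrank_finsupp_self, ← Set.toFinset_card, Finset.toFinset_coe, Finset.card_finsuppAntidiag_nat_eq_choose, Finset.card_univ]

lemma HF_bot (n : ℕ) : HF (⊥ : Ideal (MvPolynomial σ K)) n = (Fintype.card σ + n - 1).choose n := by
  have := HF_add (⊥ : Ideal (MvPolynomial σ K)) n
  have h : Jn (⊥ : Ideal (MvPolynomial σ K)) n = ⊥ := by
    rw [eq_bot_iff]; rintro t ⟨h, -⟩; exact h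
  rw [h, finrank_bot, finrank_hom] at this
  simpa using this

end

lemma numeric (h0 h1 h2 h3 : ℕ → ℕ) (b : ∀ n, h0 n = (3 + n - 1).choose n)
    (p1 : ∀ n, h1 (2 + n) + h0 n = h0 (2 + n)) (p2 : ∀ n, h2 (2 + n) + h1 n = h1 (2 + n))
    (p3 : ∀ n, h3 (2 + n) + h2 n = h2 (2 + n)) (q1 : ∀ n < 2, h1 n = h0 n) (q2 : ∀ n < 2, h2 n = h1 n)
    (q3 : ∀ n < 2, h3 n = h2 n) : h3 0 = 1 ∧ h3 1 = 3 ∧ h3 2 = 3 ∧ h3 3 = 1 ∧ h3 4 = 0 := by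
  have b0 := b 0
  have b1 := b 1
  have b2 := b 2
  have b3 := b 3
  have b4 := b 4
  simp [Nat.choose] at b0 b1 b2 b3 b4
  have := p1 0; have := p1 1; have := p1 2; have := p2 0; have := p2 1; have := p2 2
  have := p3 0; have := p3 1; have := p3 2
  have := q1 0 (by omega); have := q1 1 (by omega); have := q2 0 (by omega); have := q2 1 (by omega)
  have := q3 0 (by omega); have := q3 1 (by omega)
  simp at *
  omega

lemma CSet.HF {K : Type u} [Field K] [Infinite K] {f₁ f₂ f₃ : MvPolynomial (Fin 3) K} (h : CSet f₁ f₂ f₃) :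
    Q6.HF (ad (ad (ad ⊥ f₁) f₂) f₃) 0 = 1 ∧ Q6.HF (ad (ad (ad ⊥ f₁) f₂) f₃) 1 = 3 ∧
    Q6.HF (ad (ad (ad ⊥ f₁) f₂) f₃) 2 = 3 ∧ Q6.HF (ad (ad (ad ⊥ f₁) f₂) f₃) 3 = 1 ∧
    Q6.HF (ad (ad (ad ⊥ f₁) f₂) f₃) 4 = 0 := by
  have g1 := Hg.bot.sup_span h.h1
  have g2 := g1.sup_span h.h2
  have b : ∀ n, Q6.HF (⊥ : Ideal (MvPolynomial (Fin 3) K)) n = (3 + n - 1).choose n := by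
    intro n; rw [HF_bot, Fintype.card_fin]
  have p1 := HF_ad Hg.bot h.h1 (nz_bot h.ne1)
  have p2 := HF_ad g1 h.h2 h.nz2
  have p3 := HF_ad g2 h.h3 h.nz3
  have q1 := fun n (hn : n < 2) => HF_ad_lt Hg.bot h.h1 hn
  have q2 := fun n (hn : n < 2) => HF_ad_lt g1 h.h2 hn
  have q3 := fun n (hn : n < 2) => HF_ad_lt g2 h.h3 hn
  exact numeric _ _ _ _ b p1 p2 p3 q1 q2 q3
end Q6

namespace Q6
open Polynomial Filter Topology

def cc (d n : ℕ) : ℕ := (d + n - 1).choose n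

lemma cc_eval (d n : ℕ) : (cc (d + 1) n : ℚ) = (preHilbertPoly ℚ d 0).eval (n : ℚ) := by
  rw [preHilbertPoly_eq_choose_sub_add ℚ d (Nat.zero_le n), cc, Nat.sub_zero,
    show d + 1 + n - 1 = n + d by omega, Nat.choose_symm_add]

lemma cc_pos (d n : ℕ) : 0 < cc (d + 1) n := Nat.choose_pos (by omega)

lemma deg_pre (d : ℕ) : (preHilbertPoly ℚ d 0).natDegree = d := natDegree_preHilbertPoly ℚ d 0
lemma lead_pre (d : ℕ) : (preHilbertPoly ℚ d 0).leadingCoeff = (d.factorial : ℚ)⁻¹ :=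
  leadingCoeff_preHilbertPoly ℚ d 0
lemma pre_ne (d : ℕ) : preHilbertPoly ℚ d 0 ≠ 0 := by
  rw [← leadingCoeff_ne_zero, lead_pre]; positivity

lemma growth (d : ℕ) (h : ℕ → ℕ) (P : ℚ[X]) (hP : ∀ᶠ n : ℕ in atTop, (h n : ℚ) = P.eval (n : ℚ))
    (h6 : (P.natDegree.factorial : ℚ) * P.leadingCoeff = 6)
    (hl : ∀ᶠ n in atTop, cc (d + 1) n ≤ h n) (M : ℕ) (hu : ∀ᶠ n in atTop, h n ≤ M * cc (d + 1) n) :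
    Tendsto (fun n : ℕ => (h n : ℚ) / cc (d + 1) n) atTop (𝓝 6) := by
  set Q := preHilbertPoly ℚ d 0 with hQ
  have hev : (fun n : ℕ => (h n : ℚ) / cc (d + 1) n) =ᶠ[atTop] fun n : ℕ => (P.eval (n : ℚ) / Q.eval (n : ℚ)) := by
    filter_upwards [hP] with n hn
    rw [hn, cc_eval]
  have hP0 : P ≠ 0 := by
    rintro rfl; norm_num at h6
  have hcast := tendsto_natCast_atTop_atTop (R := ℚ)
  have hpos : ∀ n, (0 : ℚ) < cc (d + 1) n := fun n => by exact_mod_cast cc_pos d n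
  rcases lt_trichotomy P.degree Q.degree with hlt | heq | hgt
  · have h1 := ((div_tendsto_zero_of_degree_lt P Q hlt).comp hcast).congr' hev.symm
    have h2 := ge_of_tendsto h1 (b := (1 : ℚ)) (by
      filter_upwards [hl] with n hn
      rw [le_div_iff₀ (hpos n), one_mul]; exact_mod_cast hn)
    norm_num at h2
  · have h1 := ((div_tendsto_leadingCoeff_div_of_degree_eq P Q heq).comp hcast).congr' hev.symm
    convert h1 using 2
    rw [hQ, lead_pre, div_inv_eq_mul, ← h6, natDegree_eq_of_degree_eq heq, deg_pre, mul_comm]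
  · have h1 := (abs_div_tendsto_atTop_of_degree_gt P Q hgt (pre_ne d)).comp hcast
    have h2 := (h1.eventually (eventually_gt_atTop (M : ℚ))).and (hP.and hu)
    obtain ⟨n, hn1, hn2, hn3⟩ := h2.exists
    simp only [Function.comp] at hn1
    rw [← hn2, ← cc_eval, abs_of_nonneg (div_nonneg (Nat.cast_nonneg _) (hpos n).le), lt_div_iff₀ (hpos n)] at hn1
    have : M * cc (d + 1) n < h n := by exact_mod_cast hn1
    omega

lemma cc_shift (d a : ℕ) :
    Tendsto (fun n : ℕ => (cc (d + 1) (n - a) : ℚ) / cc (d + 1) n) atTop (𝓝 1) := by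
  set Q := preHilbertPoly ℚ d 0 with hQ
  have hnd : (X - C (a : ℚ)).natDegree = 1 := natDegree_X_sub_C _
  have hcomp0 : Q.comp (X - C (a : ℚ)) ≠ 0 := by
    rw [← leadingCoeff_ne_zero, leadingCoeff_comp (by rw [hnd]; exact one_ne_zero), leadingCoeff_X_sub_C, one_pow, mul_one,
      leadingCoeff_ne_zero]
    exact pre_ne d
  have heq : (Q.comp (X - C (a : ℚ))).degree = Q.degree := by
    rw [degree_eq_natDegree hcomp0, degree_eq_natDegree (pre_ne d), natDegree_comp, hnd, mul_one]
  have h1 := ((div_tendsto_leadingCoeff_div_of_degree_eq _ _ heq).comp (tendsto_natCast_atTop_atTop (R := ℚ)))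
  have e1 : (Q.comp (X - C (a : ℚ))).leadingCoeff / Q.leadingCoeff = 1 := by
    rw [leadingCoeff_comp (by rw [hnd]; exact one_ne_zero), leadingCoeff_X_sub_C, one_pow, mul_one, div_self]
    rw [leadingCoeff_ne_zero]; exact pre_ne d
  rw [e1] at h1
  refine h1.congr' ?_
  filter_upwards [eventually_ge_atTop a] with n hn
  simp only [Function.comp, eval_comp, eval_sub, eval_X, eval_C]
  rw [cc_eval, cc_eval, Nat.cast_sub hn]

lemma cc_sum {v : Type*} [Fintype v] (d : ℕ) (a : v → ℕ) :
    Tendsto (fun n : ℕ => ((∑ j, cc (d + 1) (n - a j) : ℕ) : ℚ) / cc (d + 1) n) atTop (𝓝 (Fintype.card v)) := by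
  have : Tendsto (fun n : ℕ => ∑ j, (cc (d + 1) (n - a j) : ℚ) / cc (d + 1) n) atTop (𝓝 (∑ j : v, 1)) :=
    tendsto_finsetSum _ fun j _ => cc_shift d (a j)
  simp only [Finset.sum_const, Finset.card_univ, nsmul_eq_mul, mul_one] at this
  refine this.congr fun n => ?_
  rw [← Finset.sum_div]; push_cast; rfl

lemma growth_upper {d : ℕ} {h : ℕ → ℕ} (ht : Tendsto (fun n : ℕ => (h n : ℚ) / cc (d + 1) n) atTop (𝓝 6))
    {u v : Type*} [Fintype u] [Fintype v] (b : u → ℕ) (a : v → ℕ)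
    (hle : ∀ᶠ n in atTop, h n + ∑ i, cc (d + 1) (n - b i) ≤ ∑ j, cc (d + 1) (n - a j)) :
    6 + Fintype.card u ≤ Fintype.card v := by
  have h1 := le_of_tendsto_of_tendsto (ht.add (cc_sum d b)) (cc_sum d a) (by
    filter_upwards [hle] with n hn
    have hpos : (0 : ℚ) < cc (d + 1) n := by exact_mod_cast cc_pos d n
    rw [← add_div]
    gcongr
    exact_mod_cast hn)
  exact_mod_cast h1

lemma growth_lower {d : ℕ} {h : ℕ → ℕ} (ht : Tendsto (fun n : ℕ => (h n : ℚ) / cc (d + 1) n) atTop (𝓝 6))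
    {v : Type*} [Fintype v] (a : v → ℕ)
    (hle : ∀ᶠ n in atTop, ∑ j, cc (d + 1) (n - a j) ≤ h n) :
    Fintype.card v ≤ 6 := by
  have h1 := le_of_tendsto_of_tendsto (cc_sum d a) ht (by
    filter_upwards [hle] with n hn
    have hpos : (0 : ℚ) < cc (d + 1) n := by exact_mod_cast cc_pos d n
    show _ / _ ≤ _ / _
    gcongr)
  exact_mod_cast h1

lemma cc_bound {v : Type*} [Fintype v] (d : ℕ) (a : v → ℕ) :
    ∀ᶠ n in atTop, ∑ j, cc (d + 1) (n - a j) ≤ (Fintype.card v + 1) * cc (d + 1) n := by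
  have h := (cc_sum d a).eventually (eventually_lt_nhds (show ((Fintype.card v : ℕ) : ℚ) < Fintype.card v + 1 by linarith))
  filter_upwards [h] with n hn
  have hpos : (0 : ℚ) < cc (d + 1) n := by exact_mod_cast cc_pos d n
  rw [div_lt_iff₀ hpos] at hn
  exact_mod_cast hn.le

end Q6

namespace Q6
open MvPolynomial

section
variable {σ : Type} {K : Type u} [Field K]

lemma reg_step {Z : Ideal (MvPolynomial σ K)} (hZ : Hg Z) {z f₁ f₂ f₃ : MvPolynomial σ K}
    (hz : z.IsHomogeneous 1) (h1 : f₁.IsHomogeneous 2) (h2 : f₂.IsHomogeneous 2)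
    (a0 : NZ Z z) (a1 : NZ (ad Z z) f₁) (a2 : NZ (ad (ad Z z) f₁) f₂)
    (a3 : NZ (ad (ad (ad Z z) f₁) f₂) f₃) :
    NZ Z f₁ ∧ NZ (ad Z f₁) f₂ ∧ NZ (ad (ad Z f₁) f₂) f₃ ∧ NZ (ad (ad (ad Z f₁) f₂) f₃) z := by
  have b1 : NZ Z f₁ := nz_of_nz hZ hz one_pos a0 a1
  have c1 : NZ (ad Z f₁) z := nz_swap a0 a1
  have g1 : Hg (ad Z f₁) := hZ.sup_span h1
  rw [ad_comm Z z f₁] at a2 a3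
  have b2 : NZ (ad Z f₁) f₂ := nz_of_nz g1 hz one_pos c1 a2
  have c2 : NZ (ad (ad Z f₁) f₂) z := nz_swap c1 a2
  have g2 : Hg (ad (ad Z f₁) f₂) := g1.sup_span h2
  rw [ad_comm (ad Z f₁) z f₂] at a3
  exact ⟨b1, b2, nz_of_nz g2 hz one_pos c2 a3, nz_swap c2 a3⟩
end

section
variable {d : ℕ} {K : Type u} [Field K]

/-- the variables `z_k`, `k < i` -/
def zset (d i : ℕ) : Set (Fin 3 ⊕ Fin d) := Sum.inr '' {k : Fin d | (k : ℕ) < i}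

noncomputable def Zi (K : Type u) [Field K] (d i : ℕ) : Ideal (MvPolynomial (Fin 3 ⊕ Fin d) K) :=
  Ideal.span (X '' zset d i)

lemma Hg_Zi (i : ℕ) : Hg (Zi K d i) := by
  apply Hg.span
  rintro _ ⟨s, -, rfl⟩
  exact ⟨1, isHomogeneous_X _ _⟩

lemma Zi_zero : Zi K d 0 = ⊥ := by simp [Zi, zset]

lemma Zi_succ (i : Fin d) : Zi K d (i + 1) = ad (Zi K d i) (X (Sum.inr i)) := by
  have : zset d (i + 1) = zset d i ∪ {Sum.inr i} := by
    ext s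
    simp only [zset, Set.mem_image, Set.mem_union, Set.mem_singleton_iff, Set.mem_ofPred_eq]
    constructor
    · rintro ⟨k, hk, rfl⟩
      rcases Nat.lt_succ_iff_lt_or_eq.1 hk with h | h
      · exact Or.inl ⟨k, h, rfl⟩
      · exact Or.inr (congrArg _ (Fin.ext h))
    · rintro (⟨k, hk, rfl⟩ | rfl)
      · exact ⟨k, by omega, rfl⟩
      · exact ⟨i, by omega, rfl⟩
  rw [Zi, this, Set.image_union, Ideal.span_union, Set.image_singleton]; rfl

lemma nz_Zi (i : Fin d) : NZ (Zi K d i) (X (Sum.inr i)) := by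
  apply X_nz
  rintro ⟨k, hk, h⟩
  have := Sum.inr_injective h
  subst this
  rw [Set.mem_ofPred_eq] at hk
  exact lt_irrefl _ hk

noncomputable def pr (K : Type u) [Field K] (d : ℕ) :
    MvPolynomial (Fin 3 ⊕ Fin d) K →ₐ[K] MvPolynomial (Fin 3) K :=
  aeval (Sum.elim X 0)

noncomputable def il (K : Type u) [Field K] (d : ℕ) :
    MvPolynomial (Fin 3) K →ₐ[K] MvPolynomial (Fin 3 ⊕ Fin d) K := rename Sum.inl

noncomputable def ir (K : Type u) [Field K] (d : ℕ) :
    MvPolynomial (Fin d) K →ₐ[K] MvPolynomial (Fin 3 ⊕ Fin d) K := rename Sum.inr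

lemma pr_il (p : MvPolynomial (Fin 3) K) : pr K d (il K d p) = p := by
  simp only [pr, il, aeval_rename]
  exact aeval_X_left_apply p

lemma pr_ir (p : MvPolynomial (Fin d) K) : pr K d (ir K d p) = C (constantCoeff p) := by
  simp only [pr, ir, aeval_rename]
  have : (Sum.elim X 0 ∘ Sum.inr : Fin d → MvPolynomial (Fin 3) K) = 0 := by ext; simp
  rw [this, aeval_zero]; rfl

lemma pr_surj : Function.Surjective (pr K d) := fun p => ⟨_, pr_il p⟩

lemma pr_hom {p : MvPolynomial (Fin 3 ⊕ Fin d) K} {n : ℕ} (hp : p.IsHomogeneous n) :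
    (pr K d p).IsHomogeneous n := by
  have := hp.aeval (n := 1) (Sum.elim X 0 : _ → MvPolynomial (Fin 3) K) (by
    rintro (i | i)
    · exact isHomogeneous_X _ _
    · exact isHomogeneous_zero _ _ _)
  simpa [pr] using this

lemma il_hom {p : MvPolynomial (Fin 3) K} {n : ℕ} (hp : p.IsHomogeneous n) :
    (il K d p).IsHomogeneous n := hp.rename_isHomogeneous

lemma ir_hom {p : MvPolynomial (Fin d) K} {n : ℕ} (hp : p.IsHomogeneous n) :
    (ir K d p).IsHomogeneous n := hp.rename_isHomogeneous

lemma X_mem_Zi (k : Fin d) : X (Sum.inr k) ∈ Zi K d d :=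
  Ideal.subset_span ⟨_, ⟨k, k.2, rfl⟩, rfl⟩

lemma sub_mem_Zi (p : MvPolynomial (Fin 3 ⊕ Fin d) K) : p - il K d (pr K d p) ∈ Zi K d d := by
  induction p using MvPolynomial.induction_on with
  | C a => simp [pr, il]
  | add p q hp hq =>
    have := Ideal.add_mem _ hp hq
    rw [map_add, map_add]; convert this using 1; ring
  | mul_X p i hp =>
    rw [map_mul, map_mul]
    rcases i with i | i
    · have h : il K d (pr K d (X (Sum.inl i))) = X (Sum.inl i) := by simp [pr, il]
      rw [h, ← sub_mul]
      exact Ideal.mul_mem_right _ _ hp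
    · have h : il K d (pr K d (X (Sum.inr i))) = 0 := by simp [pr, il]
      rw [h, mul_zero, sub_zero]
      exact Ideal.mul_mem_left _ _ (X_mem_Zi i)

lemma pr_eq_zero {p : MvPolynomial (Fin 3 ⊕ Fin d) K} : pr K d p = 0 ↔ p ∈ Zi K d d := by
  constructor
  · intro h
    have := sub_mem_Zi p
    rwa [h, map_zero, sub_zero] at this
  · intro h
    have : Zi K d d ≤ RingHom.ker (pr K d) := by
      rw [Zi, Ideal.span_le]
      rintro _ ⟨_, ⟨k, -, rfl⟩, rfl⟩
      simp [RingHom.mem_ker, pr]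
    exact this h

lemma comap_bot : (⊥ : Ideal (MvPolynomial (Fin 3) K)).comap (pr K d) = Zi K d d := by
  ext x; rw [Ideal.mem_comap, Ideal.mem_bot, pr_eq_zero]

lemma comap_ad (J : Ideal (MvPolynomial (Fin 3) K)) (f : MvPolynomial (Fin 3 ⊕ Fin d) K) :
    (ad J (pr K d f)).comap (pr K d) = ad (J.comap (pr K d)) f := by
  ext x
  rw [Ideal.mem_comap, mem_sup_span, mem_sup_span]
  constructor
  · rintro ⟨c, hc⟩
    refine ⟨il K d c, ?_⟩
    rw [Ideal.mem_comap, map_sub, map_mul, pr_il]; exact hc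
  · rintro ⟨c, hc⟩
    refine ⟨pr K d c, ?_⟩
    rwa [Ideal.mem_comap, map_sub, map_mul] at hc

lemma comap_nz {J : Ideal (MvPolynomial (Fin 3) K)} {f : MvPolynomial (Fin 3 ⊕ Fin d) K}
    (h : NZ J (pr K d f)) : NZ (J.comap (pr K d)) f := by
  intro u hu
  rw [Ideal.mem_comap, map_mul] at hu
  exact h _ hu

lemma mem_sup_Zi (I : Ideal (MvPolynomial (Fin 3 ⊕ Fin d) K)) (t : MvPolynomial (Fin 3 ⊕ Fin d) K) :
    t ∈ I ⊔ Zi K d d ↔ pr K d t ∈ I.map (pr K d) := by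
  rw [← Ideal.mem_comap, Ideal.comap_map_of_surjective' _ pr_surj, ← comap_bot]; rfl

/-- the hypotheses on the chosen complete intersection -/
structure TSet (f₁ f₂ f₃ : MvPolynomial (Fin 3 ⊕ Fin d) K) : Prop where
  h1 : f₁.IsHomogeneous 2
  h2 : f₂.IsHomogeneous 2
  h3 : f₃.IsHomogeneous 2
  cs : CSet (pr K d f₁) (pr K d f₂) (pr K d f₃)

variable [Infinite K]

lemma TSet.reg {f₁ f₂ f₃ : MvPolynomial (Fin 3 ⊕ Fin d) K} (h : TSet f₁ f₂ f₃) (i : ℕ) (hi : i ≤ d) :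
    NZ (Zi K d i) f₁ ∧ NZ (ad (Zi K d i) f₁) f₂ ∧ NZ (ad (ad (Zi K d i) f₁) f₂) f₃ := by
  induction hi using Nat.decreasingInduction with
  | self =>
    rw [← comap_bot, ← comap_ad, ← comap_ad]
    exact ⟨comap_nz (nz_bot h.cs.ne1), comap_nz h.cs.nz2, comap_nz h.cs.nz3⟩
  | of_succ i hi ih =>
    have e := Zi_succ (K := K) (⟨i, hi⟩ : Fin d)
    simp only at e
    rw [e] at ih
    have := reg_step (Hg_Zi i) (isHomogeneous_X _ _) h.h1 h.h2 (nz_Zi ⟨i, hi⟩) ih.1 ih.2.1 ih.2.2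
    exact ⟨this.1, this.2.1, this.2.2.1⟩

lemma TSet.regz {f₁ f₂ f₃ : MvPolynomial (Fin 3 ⊕ Fin d) K} (h : TSet f₁ f₂ f₃) (i : Fin d) :
    NZ (ad (ad (ad (Zi K d i) f₁) f₂) f₃) (X (Sum.inr i)) := by
  have := h.reg (i + 1) i.2
  rw [Zi_succ] at this
  exact (reg_step (Hg_Zi i) (isHomogeneous_X _ _) h.h1 h.h2 (nz_Zi i) this.1 this.2.1 this.2.2).2.2.2

lemma TSet.height {f₁ f₂ f₃ : MvPolynomial (Fin 3 ⊕ Fin d) K} (h : TSet f₁ f₂ f₃) :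
    3 ≤ (ad (ad (ad ⊥ f₁) f₂) f₃).height := by
  have := h.reg 0 (Nat.zero_le _)
  rw [Zi_zero] at this
  obtain ⟨a, b, c⟩ := this
  have e1 := height_succ_le (fun p hp => nz_notMem_minimalPrimes a hp) (le_sup_left : ⊥ ≤ ad ⊥ f₁) (mem_ad _ _)
  have e2 := height_succ_le (fun p hp => nz_notMem_minimalPrimes b hp) (le_sup_left : _ ≤ ad (ad ⊥ f₁) f₂) (mem_ad _ _)
  have e3 := height_succ_le (fun p hp => nz_notMem_minimalPrimes c hp) (le_sup_left : _ ≤ ad (ad (ad ⊥ f₁) f₂) f₃) (mem_ad _ _)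
  calc (3 : ℕ∞) = 0 + 1 + 1 + 1 := by norm_num
    _ ≤ (⊥ : Ideal (MvPolynomial (Fin 3 ⊕ Fin d) K)).height + 1 + 1 + 1 := by gcongr; exact zero_le
    _ ≤ _ := by
      refine le_trans ?_ e3
      gcongr
      refine le_trans ?_ e2
      gcongr

end
end Q6

namespace Q6
open MvPolynomial

section
variable {d : ℕ} {K : Type u} [Field K]

/-- homogeneous polynomials of degree `n - a` (zero if `n < a`) -/
noncomputable def homS (K : Type u) [Field K] (d n a : ℕ) : Submodule K (MvPolynomial (Fin d) K) :=
  if a ≤ n then homogeneousSubmodule (Fin d) K (n - a) else ⊥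

lemma homS_of_le {n a : ℕ} (h : a ≤ n) : homS K d n a = homogeneousSubmodule (Fin d) K (n - a) := if_pos h

lemma homS_of_lt {n a : ℕ} (h : n < a) : homS K d n a = ⊥ := if_neg (by omega)

lemma homS_mul {n m a : ℕ} {x r : MvPolynomial (Fin d) K} (hx : x.IsHomogeneous m) (hr : r ∈ homS K d n a) :
    x * r ∈ homS K d (m + n) a := by
  by_cases h : a ≤ n
  · rw [homS_of_le h] at hr
    rw [homS_of_le (by omega), show m + n - a = m + (n - a) by omega]
    exact hx.mul hr
  · rw [homS_of_lt (by omega)] at hr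
    rw [(Submodule.mem_bot K).1 hr, mul_zero]; exact zero_mem _

lemma homS_C {n a : ℕ} {c : K} (h : c ≠ 0 → a = n) : (C c : MvPolynomial (Fin d) K) ∈ homS K d n a := by
  by_cases hc : c = 0
  · rw [hc, C_0]; exact zero_mem _
  · rw [h hc, homS_of_le le_rfl, Nat.sub_self]; exact isHomogeneous_C _ _

lemma Zi_repr {y : MvPolynomial (Fin 3 ⊕ Fin d) K} (hy : y ∈ Zi K d d) :
    ∃ c : Fin d → MvPolynomial (Fin 3 ⊕ Fin d) K, y = ∑ k, X (Sum.inr k) * c k := by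
  have : Zi K d d = Ideal.span (Set.range fun k : Fin d => X (Sum.inr k)) := by
    apply le_antisymm
    · rw [Zi, Ideal.span_le]
      rintro _ ⟨_, ⟨k, -, rfl⟩, rfl⟩
      exact Ideal.subset_span ⟨k, rfl⟩
    · rw [Ideal.span_le]
      rintro _ ⟨k, rfl⟩
      exact X_mem_Zi k
  rw [this, Ideal.mem_span_range_iff_exists_fun] at hy
  obtain ⟨c, hc⟩ := hy
  exact ⟨c, by rw [← hc]; exact Finset.sum_congr rfl fun k _ => mul_comm _ _⟩

lemma hc_sum_z (c : Fin d → MvPolynomial (Fin 3 ⊕ Fin d) K) (n : ℕ) :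
    homogeneousComponent (n + 1) (∑ k, X (Sum.inr k) * c k) =
      ∑ k, X (Sum.inr k) * homogeneousComponent n (c k) := by
  rw [map_sum]
  refine Finset.sum_congr rfl fun k _ => ?_
  rw [add_comm n 1, hc_mul (isHomogeneous_X _ _)]

lemma hc_sum_z0 (c : Fin d → MvPolynomial (Fin 3 ⊕ Fin d) K) :
    homogeneousComponent 0 (∑ k, X (Sum.inr k) * c k) = 0 := by
  rw [map_sum]
  exact Finset.sum_eq_zero fun k _ => hc_mul_lt (isHomogeneous_X _ _) _ one_pos

lemma hom_C_mul {c : K} {e : MvPolynomial (Fin 3 ⊕ Fin d) K} {a n : ℕ} (he : e.IsHomogeneous a)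
    (h : c ≠ 0 → a = n) : (C c * e).IsHomogeneous n := by
  by_cases hc : c = 0
  · rw [hc, C_0, zero_mul]; exact isHomogeneous_zero _ _ _
  · rw [← h hc]; simpa using (isHomogeneous_C _ c).mul he

variable {v : Type} [Fintype v]

/-- `e` generates `T/I` over `R` in the graded sense. -/
structure Gens (I : Ideal (MvPolynomial (Fin 3 ⊕ Fin d) K)) (a : v → ℕ)
    (e : v → MvPolynomial (Fin 3 ⊕ Fin d) K) : Prop where
  hom : ∀ j, (e j).IsHomogeneous (a j)
  gen : ∀ n t, t.IsHomogeneous n → ∃ r : v → MvPolynomial (Fin d) K,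
    (∀ j, r j ∈ homS K d n (a j)) ∧ t - ∑ j, ir K d (r j) * e j ∈ I

/-- `e` is linearly independent modulo `I` over `R`. -/
def Ind (I : Ideal (MvPolynomial (Fin 3 ⊕ Fin d) K)) (e : v → MvPolynomial (Fin 3 ⊕ Fin d) K) : Prop :=
  ∀ r : v → MvPolynomial (Fin d) K, ∑ j, ir K d (r j) * e j ∈ I → r = 0

lemma nak {I : Ideal (MvPolynomial (Fin 3 ⊕ Fin d) K)} (hI : Hg I) {a : v → ℕ}
    {e : v → MvPolynomial (Fin 3 ⊕ Fin d) K} (he : ∀ j, (e j).IsHomogeneous (a j))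
    (hg : ∀ n t, t.IsHomogeneous n → ∃ c : v → K, (∀ j, c j ≠ 0 → a j = n) ∧
      t - ∑ j, c j • pr K d (e j) ∈ I.map (pr K d)) : Gens I a e := by
  refine ⟨he, fun n => ?_⟩
  induction n with
  | zero =>
    intro t ht
    obtain ⟨c, hc, h⟩ := hg 0 _ (pr_hom ht)
    refine ⟨fun j => C (c j), fun j => homS_C (hc j), ?_⟩
    set y := t - ∑ j, ir K d (C (c j)) * e j with hy
    have hyh : y.IsHomogeneous 0 := by
      refine ht.sub (IsHomogeneous.sum _ _ _ fun j _ => ?_)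
      simp only [ir, rename_C]
      exact hom_C_mul (he j) (hc j)
    have h1 : y ∈ I ⊔ Zi K d d := by
      rw [mem_sup_Zi, hy, map_sub, map_sum]
      simpa [pr_ir, smul_eq_C_mul] using h
    obtain ⟨i, hi, z, hz, hiz⟩ := Submodule.mem_sup.1 h1
    obtain ⟨q, rfl⟩ := Zi_repr hz
    have := congrArg (homogeneousComponent 0) hiz
    rw [map_add, hc_sum_z0, add_zero, hc_self hyh] at this
    rw [← this]
    exact hI _ hi _
  | succ n ih =>
    intro t ht
    obtain ⟨c, hc, h⟩ := hg (n + 1) _ (pr_hom ht)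
    set y := t - ∑ j, ir K d (C (c j)) * e j with hy
    have hyh : y.IsHomogeneous (n + 1) := by
      refine ht.sub (IsHomogeneous.sum _ _ _ fun j _ => ?_)
      simp only [ir, rename_C]
      exact hom_C_mul (he j) (hc j)
    have h1 : y ∈ I ⊔ Zi K d d := by
      rw [mem_sup_Zi, hy, map_sub, map_sum]
      simpa [pr_ir, smul_eq_C_mul] using h
    obtain ⟨i, hi, z, hz, hiz⟩ := Submodule.mem_sup.1 h1
    obtain ⟨q, rfl⟩ := Zi_repr hz
    have := congrArg (homogeneousComponent (n + 1)) hiz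
    rw [map_add, hc_sum_z, hc_self hyh] at this
    choose r hr hrI using fun k => ih (homogeneousComponent n (q k)) (homogeneousComponent_isHomogeneous _ _)
    refine ⟨fun j => C (c j) + ∑ k, X k * r k j, fun j => ?_, ?_⟩
    · refine add_mem (homS_C (hc j)) (sum_mem fun k _ => ?_)
      rw [add_comm n 1]
      exact homS_mul (isHomogeneous_X _ _) (hr k j)
    · have e1 : t - ∑ j, ir K d (C (c j) + ∑ k, X k * r k j) * e j =
          homogeneousComponent (n + 1) i +
            ∑ k, X (Sum.inr k) * (homogeneousComponent n (q k) - ∑ j, ir K d (r k j) * e j) := by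
        have e2 : ∑ j, ir K d (C (c j) + ∑ k, X k * r k j) * e j =
            ∑ j, ir K d (C (c j)) * e j + ∑ k, X (Sum.inr k) * ∑ j, ir K d (r k j) * e j := by
          simp only [map_add, add_mul, Finset.sum_add_distrib, map_sum, map_mul, Finset.sum_mul, Finset.mul_sum]
          congr 1
          rw [Finset.sum_comm]
          refine Finset.sum_congr rfl fun k _ => Finset.sum_congr rfl fun j _ => ?_
          rw [show ir K d (X k) = X (Sum.inr k) by simp [ir], mul_assoc]
        rw [e2, ← sub_sub, ← hy, ← this]
        simp only [mul_sub, Finset.sum_sub_distrib]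
        ring
      rw [e1]
      exact add_mem (hI _ hi _) (sum_mem fun k _ => Ideal.mul_mem_left _ _ (hrI k))

/-- nonhomogeneous generation -/
lemma Gens.gen' {I : Ideal (MvPolynomial (Fin 3 ⊕ Fin d) K)} {a : v → ℕ}
    {e : v → MvPolynomial (Fin 3 ⊕ Fin d) K} (h : Gens I a e) (t : MvPolynomial (Fin 3 ⊕ Fin d) K) :
    ∃ r : v → MvPolynomial (Fin d) K, t - ∑ j, ir K d (r j) * e j ∈ I := by
  choose r hr hrI using fun n => h.gen n (homogeneousComponent n t) (homogeneousComponent_isHomogeneous _ _)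
  refine ⟨fun j => ∑ n ∈ Finset.range (t.totalDegree + 1), r n j, ?_⟩
  have : t - ∑ j, ir K d (∑ n ∈ Finset.range (t.totalDegree + 1), r n j) * e j =
      ∑ n ∈ Finset.range (t.totalDegree + 1), (homogeneousComponent n t - ∑ j, ir K d (r n j) * e j) := by
    rw [Finset.sum_sub_distrib, sum_homogeneousComponent]
    congr 1
    simp only [map_sum, Finset.sum_mul]
    rw [Finset.sum_comm]
  rw [this]
  exact sum_mem fun n _ => hrI n

/-! ### the ideal of the first variables in `R` -/

noncomputable def ZR (K : Type u) [Field K] (d i : ℕ) : Ideal (MvPolynomial (Fin d) K) :=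
  Ideal.span (X '' {k : Fin d | (k : ℕ) < i})

lemma Hg_ZR (i : ℕ) : Hg (ZR K d i) := by
  apply Hg.span
  rintro _ ⟨s, -, rfl⟩
  exact ⟨1, isHomogeneous_X _ _⟩

lemma ZR_zero : ZR K d 0 = ⊥ := by simp [ZR]

lemma ZR_succ (i : Fin d) : ZR K d (i + 1) = ad (ZR K d i) (X i) := by
  have : {k : Fin d | (k : ℕ) < i + 1} = {k : Fin d | (k : ℕ) < i} ∪ {i} := by
    ext k
    simp only [Set.mem_union, Set.mem_singleton_iff, Set.mem_ofPred_eq, Fin.ext_iff]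
    omega
  rw [ZR, this, Set.image_union, Ideal.span_union, Set.image_singleton]; rfl

lemma ZR_last (p : MvPolynomial (Fin d) K) (h : constantCoeff p = 0) : p ∈ ZR K d d := by
  rw [← mem_mm] at h
  refine Ideal.span_mono ?_ h
  rintro _ ⟨k, rfl⟩
  exact ⟨k, k.2, rfl⟩

lemma ir_ZR {i : ℕ} {p : MvPolynomial (Fin d) K} (h : p ∈ ZR K d i) : ir K d p ∈ Zi K d i := by
  have : ZR K d i ≤ (Zi K d i).comap (ir K d) := by
    rw [ZR, Ideal.span_le]
    rintro _ ⟨k, hk, rfl⟩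
    change ir K d (X k) ∈ Zi K d i
    rw [show ir K d (X k) = X (Sum.inr k) by simp [ir]]
    exact Ideal.subset_span ⟨_, ⟨k, hk, rfl⟩, rfl⟩
  exact this h

/-- freeness from regularity -/
lemma free_of_reg {J : ℕ → Ideal (MvPolynomial (Fin 3 ⊕ Fin d) K)}
    (hJ : ∀ i : Fin d, J (i + 1) = ad (J i) (X (Sum.inr i))) (hZ : ∀ i, Zi K d i ≤ J i)
    (hnz : ∀ i : Fin d, NZ (J i) (X (Sum.inr i)))
    {e : v → MvPolynomial (Fin 3 ⊕ Fin d) K}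
    (hlast : ∀ r : v → MvPolynomial (Fin d) K, ∑ j, ir K d (r j) * e j ∈ J d →
      ∀ j, constantCoeff (r j) = 0) : Ind (J 0) e := by
  have key : ∀ i ≤ d, ∀ r : v → MvPolynomial (Fin d) K, ∑ j, ir K d (r j) * e j ∈ J i →
      ∀ j, r j ∈ ZR K d i := by
    intro i hi
    induction hi using Nat.decreasingInduction with
    | self => exact fun r hr j => ZR_last _ (hlast r hr j)
    | of_succ i hi ih =>
      have main : ∀ n, ∀ r : v → MvPolynomial (Fin d) K, ∑ j, ir K d (r j) * e j ∈ J i →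
          ∀ j, r j ∈ ZR K d i ⊔ Ideal.span {(X (⟨i, hi⟩ : Fin d)) ^ n} := by
        intro n
        induction n with
        | zero => intro r _ j; rw [pow_zero, mem_sup_span]; exact ⟨r j, by simp⟩
        | succ n ihn =>
          intro r hr
          have h1 : ∀ j, r j ∈ ad (ZR K d i) (X ⟨i, hi⟩) := by
            have := ZR_succ (K := K) (⟨i, hi⟩ : Fin d)
            simp only at this
            rw [← this]
            refine ih r ?_
            have h2 := hJ ⟨i, hi⟩
            simp only at h2
            rw [h2]
            exact Ideal.mem_sup_left hr
          choose s hs using fun j => mem_sup_span.1 (h1 j)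
          have h3 : ∑ j, ir K d (s j) * e j ∈ J i := by
            apply hnz ⟨i, hi⟩
            have h4 : X (Sum.inr ⟨i, hi⟩) * ∑ j, ir K d (s j) * e j =
                ∑ j, ir K d (r j) * e j - ∑ j, ir K d (r j - X ⟨i, hi⟩ * s j) * e j := by
              rw [← Finset.sum_sub_distrib, Finset.mul_sum]
              refine Finset.sum_congr rfl fun j _ => ?_
              rw [map_sub, map_mul, show ir K d (X ⟨i, hi⟩) = X (Sum.inr ⟨i, hi⟩) by simp [ir]]
              ring
            rw [h4]
            exact sub_mem hr (sum_mem fun j _ => Ideal.mul_mem_right _ _ (hZ i (ir_ZR (hs j))))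
          intro j
          obtain ⟨c, hc⟩ := mem_sup_span.1 (ihn s h3 j)
          rw [mem_sup_span]
          refine ⟨c, ?_⟩
          have := add_mem (hs j) (Ideal.mul_mem_left _ (X ⟨i, hi⟩) hc)
          convert this using 1; ring
      exact fun r hr j => krull_hom (Hg_ZR i) (isHomogeneous_X _ _) one_pos fun n => main n r hr j
  intro r hr
  funext j
  have := key 0 (Nat.zero_le _) r hr j
  rwa [ZR_zero] at this

end
end Q6

namespace Q6
open MvPolynomial

section
variable {σ : Type} [Finite σ] {K : Type u} [Field K]

lemma HF_zero_iff {J : Ideal (MvPolynomial σ K)} {n : ℕ} (h : HF J n = 0) {t : MvPolynomial σ K}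
    (ht : t.IsHomogeneous n) : t ∈ J := by
  obtain ⟨v, -, -, hs⟩ := HF_basis J n
  obtain ⟨c, hc⟩ := hs t ht
  have : IsEmpty (Fin (HF J n)) := by rw [h]; infer_instance
  simpa using hc

lemma hom_succ_repr {n : ℕ} {t : MvPolynomial σ K} (ht : t.IsHomogeneous (n + 1)) :
    ∃ (s : Finset σ) (c : σ → MvPolynomial σ K), (∀ i, (c i).IsHomogeneous n) ∧ t = ∑ i ∈ s, X i * c i := by
  cases nonempty_fintype σ
  have := hom_mem_mm ht (Nat.succ_pos n)
  rw [Ideal.mem_span_range_iff_exists_fun] at this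
  obtain ⟨c, hc⟩ := this
  refine ⟨Finset.univ, fun i => homogeneousComponent n (c i), fun i => homogeneousComponent_isHomogeneous _ _, ?_⟩
  have h2 := congrArg (homogeneousComponent (n + 1)) hc
  rw [hc_self ht, map_sum] at h2
  rw [← h2]
  refine Finset.sum_congr rfl fun i _ => ?_
  rw [mul_comm, add_comm n 1, hc_mul (isHomogeneous_X _ _)]

lemma top_of_le {J : Ideal (MvPolynomial σ K)} {m n : ℕ} (hmn : m ≤ n)
    (h : ∀ t : MvPolynomial σ K, t.IsHomogeneous m → t ∈ J) (t : MvPolynomial σ K) (ht : t.IsHomogeneous n) : t ∈ J := by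
  induction n, hmn using Nat.le_induction generalizing t with
  | base => exact h t ht
  | succ n _ ih =>
    obtain ⟨s, c, hc, rfl⟩ := hom_succ_repr ht
    exact sum_mem fun i _ => Ideal.mul_mem_left _ _ (ih _ (hc i))

lemma HF_eq_zero {J : Ideal (MvPolynomial σ K)} {n : ℕ} (h : ∀ t : MvPolynomial σ K, t.IsHomogeneous n → t ∈ J) :
    HF J n = 0 :=
  HF_eq_of_basis (m := 0) (fun i => i.elim0) (fun i => i.elim0) (fun c _ => Subsingleton.elim _ _)
    (fun t ht => ⟨0, by simpa using h t ht⟩)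

lemma Hg_map_pr {d : ℕ} {I : Ideal (MvPolynomial (Fin 3 ⊕ Fin d) K)} (hI : Hg I) : Hg (I.map (pr K d)) := by
  intro p hp n
  rw [Ideal.mem_map_iff_of_surjective _ pr_surj] at hp ⊢
  obtain ⟨x, hx, rfl⟩ := hp
  refine ⟨homogeneousComponent n x, hI _ hx n, ?_⟩
  have e1 : pr K d x = ∑ i ∈ Finset.range (x.totalDegree + 1), pr K d (homogeneousComponent i x) := by
    rw [← map_sum, sum_homogeneousComponent]
  rw [e1, map_sum]
  by_cases hn : n ∈ Finset.range (x.totalDegree + 1)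
  · rw [Finset.sum_eq_single_of_mem n hn]
    · exact (hc_self (pr_hom (homogeneousComponent_isHomogeneous _ _))).symm
    · intro i _ hi
      rw [homogeneousComponent_of_mem (pr_hom (homogeneousComponent_isHomogeneous i x)), if_neg (Ne.symm hi)]
  · rw [Finset.sum_eq_zero]
    · rw [homogeneousComponent_eq_zero, map_zero]
      simpa [Nat.lt_succ_iff] using hn
    · intro i hi
      rw [homogeneousComponent_of_mem (pr_hom (homogeneousComponent_isHomogeneous i x)), if_neg]
      rintro rfl; exact hn hi

/-- basis of `C / J` in all degrees `< 4`. -/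
lemma basisC {J : Ideal (MvPolynomial σ K)} (hJ : Hg J) (h4 : HF J 4 = 0) :
    ∃ e : (Σ n : Fin 4, Fin (HF J n)) → MvPolynomial σ K, (∀ j, (e j).IsHomogeneous (j.1 : ℕ)) ∧
      (∀ c : (Σ n : Fin 4, Fin (HF J n)) → K, ∑ j, c j • e j ∈ J → c = 0) ∧
      (∀ n t, t.IsHomogeneous n → ∃ c : (Σ n : Fin 4, Fin (HF J n)) → K,
        (∀ j, c j ≠ 0 → (j.1 : ℕ) = n) ∧ t - ∑ j, c j • e j ∈ J) := by
  classical
  choose e he hi hs using fun n => HF_basis J n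
  refine ⟨fun j => e j.1 j.2, fun j => he _ _, ?_, ?_⟩
  · intro c hc
    funext ⟨n, j⟩
    have h1 := hJ _ hc n
    rw [Fintype.sum_sigma, map_sum, Finset.sum_eq_single_of_mem n (Finset.mem_univ _)] at h1
    · rw [hc_self] at h1
      · exact congrFun (hi n _ h1) j
      · exact IsHomogeneous.sum _ _ _ fun i _ => (homogeneousSubmodule σ K n).smul_mem _ (he _ _)
    · intro m _ hm
      have : (∑ i, c ⟨m, i⟩ • e m i).IsHomogeneous m :=
        IsHomogeneous.sum _ _ _ fun i _ => (homogeneousSubmodule σ K m).smul_mem _ (he _ _)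
      rw [homogeneousComponent_of_mem this, if_neg]
      intro h; exact hm (Fin.ext h.symm)
  · intro n t ht
    by_cases hn : n < 4
    · obtain ⟨c, hc⟩ := hs n t ht
      refine ⟨fun j => if h : (j.1 : ℕ) = n then c (Fin.cast (by rw [h]) j.2) else 0, ?_, ?_⟩
      · intro j hj
        by_contra h
        simp [h] at hj
      · rw [Fintype.sum_sigma, Finset.sum_eq_single_of_mem ⟨n, hn⟩ (Finset.mem_univ _)]
        · simpa using hc
        · intro m _ hm
          refine Finset.sum_eq_zero fun i _ => ?_
          have h : ¬ (m : ℕ) = n := fun h => hm (Fin.ext h)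
          simp [h]
    · refine ⟨0, by simp, ?_⟩
      simpa using top_of_le (show 4 ≤ n by omega) (fun t ht => HF_zero_iff h4 ht) t ht
end

section
variable {d : ℕ} {K : Type u} [Field K]

lemma gens_I {I : Ideal (MvPolynomial (Fin 3 ⊕ Fin d) K)} (hI : Hg I) (h4 : HF (I.map (pr K d)) 4 = 0) :
    ∃ e : (Σ n : Fin 4, Fin (HF (I.map (pr K d)) n)) → MvPolynomial (Fin 3 ⊕ Fin d) K,
      Gens I (fun j => (j.1 : ℕ)) e ∧
      (∀ c : (Σ n : Fin 4, Fin (HF (I.map (pr K d)) n)) → K, ∑ j, c j • pr K d (e j) ∈ I.map (pr K d) → c = 0) := by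
  obtain ⟨e, he, hi, hs⟩ := basisC (Hg_map_pr hI) h4
  refine ⟨fun j => il K d (e j), nak hI (fun j => il_hom (he j)) ?_, ?_⟩
  · simpa only [pr_il] using hs
  · simpa only [pr_il] using hi

lemma map_pr_ad3 (f₁ f₂ f₃ : MvPolynomial (Fin 3 ⊕ Fin d) K) :
    (ad (ad (ad ⊥ f₁) f₂) f₃).map (pr K d) = ad (ad (ad ⊥ (pr K d f₁)) (pr K d f₂)) (pr K d f₃) := by
  simp only [ad, Ideal.map_sup, Ideal.map_span, Set.image_singleton, Ideal.map_bot]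

lemma TSet.hg {f₁ f₂ f₃ : MvPolynomial (Fin 3 ⊕ Fin d) K} (h : TSet f₁ f₂ f₃) :
    Hg (ad (ad (ad ⊥ f₁) f₂) f₃) := ((Hg.bot.sup_span h.h1).sup_span h.h2).sup_span h.h3

variable [Infinite K]

lemma TSet.ind {f₁ f₂ f₃ : MvPolynomial (Fin 3 ⊕ Fin d) K} (h : TSet f₁ f₂ f₃) {v : Type} [Fintype v]
    {e : v → MvPolynomial (Fin 3 ⊕ Fin d) K}
    (hi : ∀ c : v → K, ∑ j, c j • pr K d (e j) ∈ (ad (ad (ad ⊥ f₁) f₂) f₃).map (pr K d) → c = 0) :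
    Ind (ad (ad (ad ⊥ f₁) f₂) f₃) e := by
  have := free_of_reg (J := fun i => ad (ad (ad (Zi K d i) f₁) f₂) f₃) (e := e) ?_ ?_ h.regz ?_
  · simpa only [Zi_zero] using this
  · intro i
    rw [Zi_succ, ad_comm (Zi K d i) _ f₁, ad_comm _ _ f₂, ad_comm _ _ f₃]
  · intro i
    exact le_trans (le_trans le_sup_left le_sup_left) le_sup_left
  · intro r hr
    rw [← comap_bot, ← comap_ad, ← comap_ad, ← comap_ad, Ideal.mem_comap, ← map_pr_ad3, map_sum] at hr
    simp only [map_mul, pr_ir, ← smul_eq_C_mul] at hr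
    exact congrFun (hi _ hr)

/-- data of generators for the complete intersection -/
lemma TSet.gens {f₁ f₂ f₃ : MvPolynomial (Fin 3 ⊕ Fin d) K} (h : TSet f₁ f₂ f₃) :
    ∃ (v : Type) (_ : Fintype v) (a : v → ℕ) (e : v → MvPolynomial (Fin 3 ⊕ Fin d) K),
      Fintype.card v = 8 ∧ Gens (ad (ad (ad ⊥ f₁) f₂) f₃) a e ∧ Ind (ad (ad (ad ⊥ f₁) f₂) f₃) e := by
  have hh := h.cs.HF
  rw [← map_pr_ad3] at hh
  obtain ⟨e, he, hi⟩ := gens_I h.hg hh.2.2.2.2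
  refine ⟨_, _, _, e, ?_, he, h.ind hi⟩
  rw [Fintype.card_sigma]
  obtain ⟨g0, g1, g2, g3, -⟩ := hh
  simp only [Fintype.card_fin, Fin.sum_univ_four]
  exact (congrArg₂ (· + ·) (congrArg₂ (· + ·) (congrArg₂ (· + ·) g0 g1) g2) g3)

lemma TSet.nz_ir {f₁ f₂ f₃ : MvPolynomial (Fin 3 ⊕ Fin d) K} (h : TSet f₁ f₂ f₃) {r : MvPolynomial (Fin d) K}
    (hr : r ≠ 0) : NZ (ad (ad (ad ⊥ f₁) f₂) f₃) (ir K d r) := by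
  obtain ⟨v, _, a, e, -, hg, hi⟩ := h.gens
  intro u hu
  obtain ⟨s, hs⟩ := hg.gen' u
  have : ∑ j, ir K d (r * s j) * e j ∈ ad (ad (ad ⊥ f₁) f₂) f₃ := by
    have h1 := sub_mem hu (Ideal.mul_mem_left _ (ir K d r) hs)
    convert h1 using 1
    rw [mul_sub, sub_sub_cancel, Finset.mul_sum]
    exact Finset.sum_congr rfl fun j _ => by rw [map_mul, mul_assoc]
  have h2 := hi _ this
  have h3 : s = 0 := by
    funext j
    exact (mul_eq_zero.1 (congrFun h2 j)).resolve_left hr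
  simpa [h3] using hs

lemma TSet.inter {f₁ f₂ f₃ : MvPolynomial (Fin 3 ⊕ Fin d) K} (h : TSet f₁ f₂ f₃)
    {I : Ideal (MvPolynomial (Fin 3 ⊕ Fin d) K)} (hJI : ad (ad (ad ⊥ f₁) f₂) f₃ ≤ I) (hI : I.height = 3)
    {r : MvPolynomial (Fin d) K} (hr : ir K d r ∈ I) : r = 0 := by
  by_contra hr0
  obtain ⟨p, hp, hIp, hpe⟩ := I.exists_isPrime_height_eq (n := 3) hI
  have hfin : p.FiniteHeight := by
    refine ⟨Or.inr ?_⟩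
    rw [hpe]; exact ENat.natCast_ne_top 3
  have : p ∈ (ad (ad (ad ⊥ f₁) f₂) f₃).minimalPrimes := by
    refine Ideal.mem_minimalPrimes_of_height_le (hJI.trans hIp) ?_
    rw [hpe]; exact h.height
  exact nz_notMem_minimalPrimes (h.nz_ir hr0) this (hIp hr)

end
end Q6

namespace Q6
open MvPolynomial Module

section
variable {d : ℕ} {K : Type u} [Field K]

instance finHomS (n a : ℕ) : Module.Finite K (homS K d n a) := by
  by_cases h : a ≤ n
  · rw [homS_of_le h]; infer_instance
  · rw [homS_of_lt (by omega)]; infer_instance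

lemma finrank_homS {n a : ℕ} (h : a ≤ n) : finrank K (homS K d n a) = cc d (n - a) := by
  rw [homS_of_le h, finrank_hom, Fintype.card_fin]; rfl

lemma homS_comp {n b a : ℕ} {w s : MvPolynomial (Fin d) K} (hw : w ∈ homS K d n b) (hs : s ∈ homS K d b a) :
    w * s ∈ homS K d n a := by
  by_cases h : b ≤ n
  · rw [homS_of_le h] at hw
    have := homS_mul hw hs
    rwa [Nat.sub_add_cancel h] at this
  · rw [homS_of_lt (by omega)] at hw
    rw [(Submodule.mem_bot K).1 hw, zero_mul]; exact zero_mem _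

lemma ir_homS_mul {n a : ℕ} {r : MvPolynomial (Fin d) K} {e : MvPolynomial (Fin 3 ⊕ Fin d) K}
    (hr : r ∈ homS K d n a) (he : e.IsHomogeneous a) : (ir K d r * e).IsHomogeneous n := by
  by_cases h : a ≤ n
  · rw [homS_of_le h] at hr
    have := (ir_hom hr).mul he
    rwa [Nat.sub_add_cancel h] at this
  · rw [homS_of_lt (by omega)] at hr
    rw [(Submodule.mem_bot K).1 hr, map_zero, zero_mul]; exact isHomogeneous_zero _ _ _

variable {v : Type} [Fintype v]

abbrev VV (K : Type u) [Field K] (d n : ℕ) (a : v → ℕ) : Type u := (j : v) → homS K d n (a j)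

lemma finrank_VV {n : ℕ} {a : v → ℕ} (h : ∀ j, a j ≤ n) : finrank K (VV K d n a) = ∑ j, cc d (n - a j) := by
  rw [finrank_pi_fintype]
  exact Finset.sum_congr rfl fun j _ => finrank_homS (h j)

noncomputable def phi (n : ℕ) (a : v → ℕ) (e : v → MvPolynomial (Fin 3 ⊕ Fin d) K) :
    VV K d n a →ₗ[K] MvPolynomial (Fin 3 ⊕ Fin d) K where
  toFun r := ∑ j, ir K d (r j : MvPolynomial (Fin d) K) * e j
  map_add' r s := by
    rw [← Finset.sum_add_distrib]
    exact Finset.sum_congr rfl fun j _ => by simp [add_mul]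
  map_smul' c r := by
    rw [RingHom.id_apply, Finset.smul_sum]
    exact Finset.sum_congr rfl fun j _ => by simp

noncomputable def psi (I : Ideal (MvPolynomial (Fin 3 ⊕ Fin d) K)) (n : ℕ) (a : v → ℕ)
    (e : v → MvPolynomial (Fin 3 ⊕ Fin d) K) :
    VV K d n a →ₗ[K] (MvPolynomial (Fin 3 ⊕ Fin d) K ⧸ I) :=
  (Ideal.Quotient.mkₐ K I).toLinearMap ∘ₗ phi n a e

lemma psi_eq_zero {I : Ideal (MvPolynomial (Fin 3 ⊕ Fin d) K)} {n : ℕ} {a : v → ℕ}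
    {e : v → MvPolynomial (Fin 3 ⊕ Fin d) K} {r : VV K d n a} :
    psi I n a e r = 0 ↔ ∑ j, ir K d (r j : MvPolynomial (Fin d) K) * e j ∈ I :=
  Ideal.Quotient.eq_zero_iff_mem

lemma psi_range {I : Ideal (MvPolynomial (Fin 3 ⊕ Fin d) K)} {n : ℕ} {a : v → ℕ}
    {e : v → MvPolynomial (Fin 3 ⊕ Fin d) K} (he : ∀ j, (e j).IsHomogeneous (a j)) :
    LinearMap.range (psi I n a e) ≤
      Submodule.map (Ideal.Quotient.mkₐ K I).toLinearMap (homogeneousSubmodule (Fin 3 ⊕ Fin d) K n) := by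
  rintro _ ⟨r, rfl⟩
  exact ⟨phi n a e r, IsHomogeneous.sum _ _ _ fun j _ => ir_homS_mul (r j).2 (he j), rfl⟩

lemma HF_lower {I : Ideal (MvPolynomial (Fin 3 ⊕ Fin d) K)} {n : ℕ} {a : v → ℕ}
    {e : v → MvPolynomial (Fin 3 ⊕ Fin d) K} (he : ∀ j, (e j).IsHomogeneous (a j)) (hi : Ind I e)
    (hn : ∀ j, a j ≤ n) : ∑ j, cc d (n - a j) ≤ HF I n := by
  have hinj : Function.Injective (psi I n a e) := by
    intro r s hrs
    have h0 : psi I n a e (r - s) = 0 := by rw [map_sub, hrs, sub_self]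
    have h1 := hi _ (psi_eq_zero.1 h0)
    funext j
    have h2 : (((r - s) j : homS K d n (a j)) : MvPolynomial (Fin d) K) = 0 := congrFun h1 j
    exact sub_eq_zero.1 (Subtype.ext h2)
  rw [← finrank_VV (K := K) (d := d) hn, ← LinearMap.finrank_range_of_inj hinj]
  exact Submodule.finrank_mono (psi_range he)

lemma HF_upper {I : Ideal (MvPolynomial (Fin 3 ⊕ Fin d) K)} {n : ℕ} {a : v → ℕ}
    {e : v → MvPolynomial (Fin 3 ⊕ Fin d) K} (hg : Gens I a e) (hn : ∀ j, a j ≤ n)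
    {u : Type} [Fintype u] {b : u → ℕ} (hb : ∀ i, b i ≤ n) (s : u → v → MvPolynomial (Fin d) K)
    (hs : ∀ i j, s i j ∈ homS K d (b i) (a j)) (hsI : ∀ i, ∑ j, ir K d (s i j) * e j ∈ I)
    (hind : ∀ w : u → MvPolynomial (Fin d) K, (∀ j, ∑ i, w i * s i j = 0) → w = 0) :
    HF I n + ∑ i, cc d (n - b i) ≤ ∑ j, cc d (n - a j) := by
  have hr : LinearMap.range (psi I n a e) =
      Submodule.map (Ideal.Quotient.mkₐ K I).toLinearMap (homogeneousSubmodule (Fin 3 ⊕ Fin d) K n) := by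
    refine le_antisymm (psi_range hg.hom) ?_
    rintro _ ⟨t, ht, rfl⟩
    obtain ⟨r, hr, hrI⟩ := hg.gen n t ht
    refine ⟨fun j => ⟨r j, hr j⟩, ?_⟩
    exact (Ideal.Quotient.eq.2 hrI).symm
  have h1 := LinearMap.finrank_range_add_finrank_ker (psi I n a e)
  rw [hr, finrank_VV hn] at h1
  let g : VV K d n b →ₗ[K] VV K d n a :=
    { toFun := fun w j => ⟨∑ i, (w i : MvPolynomial (Fin d) K) * s i j,
        sum_mem fun i _ => homS_comp (w i).2 (hs i j)⟩
      map_add' := fun x y => by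
        funext j; apply Subtype.ext
        simp [add_mul, Finset.sum_add_distrib]
      map_smul' := fun c x => by
        funext j; apply Subtype.ext
        simp [Finset.smul_sum] }
  have hginj : Function.Injective g := by
    intro x y hxy
    have h0 : g (x - y) = 0 := by rw [map_sub, hxy, sub_self]
    have h2 := hind (fun i => ((x - y) i : MvPolynomial (Fin d) K))
      (fun j => congrArg Subtype.val (congrFun h0 j))
    funext i
    have h3 : (((x - y) i : homS K d n (b i)) : MvPolynomial (Fin d) K) = 0 := congrFun h2 i
    exact sub_eq_zero.1 (Subtype.ext h3)
  have hgr : LinearMap.range g ≤ LinearMap.ker (psi I n a e) := by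
    rintro _ ⟨w, rfl⟩
    rw [LinearMap.mem_ker, psi_eq_zero]
    have : ∑ j, ir K d (g w j : MvPolynomial (Fin d) K) * e j =
        ∑ i, ir K d (w i : MvPolynomial (Fin d) K) * ∑ j, ir K d (s i j) * e j := by
      simp only [g, LinearMap.coe_mk, AddHom.coe_mk, map_sum, map_mul, Finset.sum_mul, Finset.mul_sum]
      rw [Finset.sum_comm]
      exact Finset.sum_congr rfl fun i _ => Finset.sum_congr rfl fun j _ => mul_assoc _ _ _
    rw [this]
    exact sum_mem fun i _ => Ideal.mul_mem_left _ _ (hsI i)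
  have h2 : ∑ i, cc d (n - b i) ≤ finrank K (LinearMap.ker (psi I n a e)) := by
    rw [← finrank_VV (K := K) (d := d) hb, ← LinearMap.finrank_range_of_inj hginj]
    exact Submodule.finrank_mono hgr
  have h3 : HF I n + finrank K (LinearMap.ker (psi I n a e)) = ∑ j, cc d (n - a j) := h1
  omega

end
end Q6

namespace Q6
open MvPolynomial Module Filter Topology

section
variable {d : ℕ} {K : Type u} [Field K]

/-- multiplicity six, in the form we use it -/
def Mult6 (h : ℕ → ℕ) : Prop := ∃ P : Polynomial ℚ, (∀ᶠ n : ℕ in atTop, (h n : ℚ) = P.eval (n : ℚ)) ∧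
  (P.natDegree.factorial : ℚ) * P.leadingCoeff = 6

lemma Mult6.not_zero {h : ℕ → ℕ} (hm : Mult6 h) (h0 : ∀ᶠ n in atTop, h n = 0) : False := by
  obtain ⟨P, hP, h6⟩ := hm
  have hP0 : P = 0 := by
    apply Polynomial.eq_zero_of_infinite_isRoot
    obtain ⟨m, hm⟩ := eventually_atTop.1 (hP.and h0)
    refine Set.Infinite.mono (s := (fun n : ℕ => (n : ℚ)) '' Set.Ici m) ?_ ?_
    · rintro _ ⟨n, hn, rfl⟩
      obtain ⟨a, b⟩ := hm n hn
      change P.eval (n : ℚ) = 0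
      rw [← a, b]; norm_num
    · exact (Set.Ici_infinite m).image (Nat.cast_injective.injOn)
  rw [hP0] at h6
  norm_num at h6

lemma ev_le {v : Type} [Fintype v] (a : v → ℕ) : ∀ᶠ n in atTop, ∀ j, a j ≤ n := by
  filter_upwards [eventually_ge_atTop (Finset.univ.sup a)] with n hn j
  exact (Finset.le_sup (Finset.mem_univ j)).trans hn

lemma Gens.mono {v : Type} [Fintype v] {I J : Ideal (MvPolynomial (Fin 3 ⊕ Fin d) K)} {a : v → ℕ}
    {e : v → MvPolynomial (Fin 3 ⊕ Fin d) K} (h : Gens J a e) (hJI : J ≤ I) : Gens I a e :=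
  ⟨h.hom, fun n t ht => by
    obtain ⟨r, hr, hr2⟩ := h.gen n t ht
    exact ⟨r, hr, hJI hr2⟩⟩

lemma HF_upper0 {v : Type} [Fintype v] {I : Ideal (MvPolynomial (Fin 3 ⊕ Fin d) K)} {n : ℕ} {a : v → ℕ}
    {e : v → MvPolynomial (Fin 3 ⊕ Fin d) K} (hg : Gens I a e) (hn : ∀ j, a j ≤ n) :
    HF I n ≤ ∑ j, cc d (n - a j) := by
  have := HF_upper hg hn (u := Empty) (b := fun i => i.elim) (fun i => i.elim) (fun i => i.elim)
    (fun i => i.elim) (fun i => i.elim) (fun w _ => Subsingleton.elim _ _)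
  simpa using this

variable [Infinite K]

lemma TSet.d_pos {f₁ f₂ f₃ : MvPolynomial (Fin 3 ⊕ Fin d) K} (h : TSet f₁ f₂ f₃)
    {I : Ideal (MvPolynomial (Fin 3 ⊕ Fin d) K)} (hJI : ad (ad (ad ⊥ f₁) f₂) f₃ ≤ I)
    (hm : Mult6 (HF I)) : ∃ d', d = d' + 1 := by
  rcases d with _ | d
  · exfalso
    obtain ⟨v, _, a, e, -, hg, -⟩ := h.gens
    refine hm.not_zero ?_
    filter_upwards [ev_le (fun j => a j + 1)] with n hn
    have := HF_upper0 (hg.mono hJI) (fun j => (Nat.le_succ _).trans (hn j))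
    rw [Finset.sum_eq_zero] at this
    · omega
    · intro j _
      have := hn j
      unfold cc
      exact Nat.choose_eq_zero_of_lt (by omega)
  · exact ⟨d, rfl⟩

lemma TSet.tend {f₁ f₂ f₃ : MvPolynomial (Fin 3 ⊕ Fin (d + 1)) K} (h : TSet f₁ f₂ f₃)
    {I : Ideal (MvPolynomial (Fin 3 ⊕ Fin (d + 1)) K)} (hJI : ad (ad (ad ⊥ f₁) f₂) f₃ ≤ I)
    (hI : I.height = 3) (hm : Mult6 (HF I)) :
    Tendsto (fun n : ℕ => (HF I n : ℚ) / cc (d + 1) n) atTop (𝓝 6) := by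
  obtain ⟨P, hP, h6⟩ := hm
  obtain ⟨v, _, a, e, -, hg, -⟩ := h.gens
  refine growth d (HF I) P hP h6 ?_ (Fintype.card v + 1) ?_
  · refine Eventually.of_forall fun n => ?_
    have := HF_lower (I := I) (v := Unit) (a := fun _ => 0) (e := fun _ => 1) (n := n)
      (fun _ => isHomogeneous_one _ _) ?_ (fun _ => Nat.zero_le _)
    · simpa using this
    · intro r hr
      funext x
      exact h.inter hJI hI (by simpa using hr)
  · filter_upwards [ev_le a, cc_bound d a] with n hn h2
    exact (HF_upper0 (hg.mono hJI) hn).trans h2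

lemma no_rel {v : Type} [Fintype v] {I : Ideal (MvPolynomial (Fin 3 ⊕ Fin (d + 1)) K)}
    (ht : Tendsto (fun n : ℕ => (HF I n : ℚ) / cc (d + 1) n) atTop (𝓝 6))
    {a : v → ℕ} {e : v → MvPolynomial (Fin 3 ⊕ Fin (d + 1)) K} (hg : Gens I a e)
    {u : Type} [Fintype u] {b : u → ℕ} (s : u → v → MvPolynomial (Fin (d + 1)) K)
    (hs : ∀ i j, s i j ∈ homS K (d + 1) (b i) (a j)) (hsI : ∀ i, ∑ j, ir K (d + 1) (s i j) * e j ∈ I)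
    (hind : ∀ w : u → MvPolynomial (Fin (d + 1)) K, (∀ j, ∑ i, w i * s i j = 0) → w = 0) :
    6 + Fintype.card u ≤ Fintype.card v := by
  refine growth_upper ht b a ?_
  filter_upwards [ev_le a, ev_le b] with n hn hb
  exact HF_upper hg hn hb s hs hsI hind

end
end Q6

namespace Q6
open MvPolynomial Module Filter Topology

lemma hc_map {σ τ : Type} {K : Type u} [Field K] (f : MvPolynomial σ K →ₗ[K] MvPolynomial τ K)
    (hf : ∀ p n, p.IsHomogeneous n → (f p).IsHomogeneous n) (x : MvPolynomial σ K) (n : ℕ) :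
    homogeneousComponent n (f x) = f (homogeneousComponent n x) := by
  have e1 : f x = ∑ i ∈ Finset.range (x.totalDegree + 1), f (homogeneousComponent i x) := by
    rw [← map_sum, sum_homogeneousComponent]
  rw [e1, map_sum]
  by_cases hn : n ∈ Finset.range (x.totalDegree + 1)
  · rw [Finset.sum_eq_single_of_mem n hn]
    · exact hc_self (hf _ _ (homogeneousComponent_isHomogeneous _ _))
    · intro i _ hi
      rw [homogeneousComponent_of_mem (hf _ _ (homogeneousComponent_isHomogeneous i x)), if_neg (Ne.symm hi)]
  · rw [Finset.sum_eq_zero]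
    · rw [homogeneousComponent_eq_zero, map_zero]
      simpa [Nat.lt_succ_iff] using hn
    · intro i hi
      rw [homogeneousComponent_of_mem (hf _ _ (homogeneousComponent_isHomogeneous i x)), if_neg]
      rintro rfl; exact hn hi

section
variable {d : ℕ} {K : Type u} [Field K]

lemma hc_ir (r : MvPolynomial (Fin d) K) (n : ℕ) :
    homogeneousComponent n (ir K d r) = ir K d (homogeneousComponent n r) :=
  hc_map (ir K d).toLinearMap (fun _ _ h => ir_hom h) r n

lemma ind_of_no_hom_rel {v : Type} [Fintype v] {I : Ideal (MvPolynomial (Fin 3 ⊕ Fin d) K)} (hI : Hg I)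
    {a : v → ℕ} {e : v → MvPolynomial (Fin 3 ⊕ Fin d) K} (he : ∀ j, (e j).IsHomogeneous (a j))
    (h : ∀ (n : ℕ) (s : v → MvPolynomial (Fin d) K), (∀ j, s j ∈ homS K d n (a j)) →
      ∑ j, ir K d (s j) * e j ∈ I → s = 0) : Ind I e := by
  intro r hr
  by_contra hne
  obtain ⟨j₀, hj₀⟩ := Function.ne_iff.1 hne
  have : ∃ m, homogeneousComponent m (r j₀) ≠ 0 := by
    by_contra hc
    push Not at hc
    apply hj₀
    rw [← sum_homogeneousComponent (r j₀)]
    exact Finset.sum_eq_zero fun i _ => hc i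
  obtain ⟨m, hm⟩ := this
  have h1 := h (m + a j₀) (fun j => if a j ≤ m + a j₀ then homogeneousComponent (m + a j₀ - a j) (r j) else 0) ?_ ?_
  · have h2 := congrFun h1 j₀
    simp only [le_add_iff_nonneg_left, zero_le, if_true, Nat.add_sub_cancel] at h2
    exact hm h2
  · intro j
    split_ifs with hj
    · rw [homS_of_le hj]; exact homogeneousComponent_isHomogeneous _ _
    · exact zero_mem _
  · have h3 := hI _ hr (m + a j₀)
    rw [map_sum] at h3
    convert h3 using 2 with j
    rw [mul_comm (ir K d (r j))]
    by_cases hj : a j ≤ m + a j₀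
    · have e1 := hc_mul (he j) (ir K d (r j)) (m + a j₀ - a j)
      rw [Nat.add_sub_cancel' hj] at e1
      rw [e1, if_pos hj, hc_ir, mul_comm]
    · rw [if_neg hj, hc_mul_lt (he j) _ (by omega), map_zero, zero_mul]

variable [Infinite K]

lemma caseA {f₁ f₂ f₃ : MvPolynomial (Fin 3 ⊕ Fin (d + 1)) K} (h : TSet f₁ f₂ f₃)
    {I : Ideal (MvPolynomial (Fin 3 ⊕ Fin (d + 1)) K)} (hJI : ad (ad (ad ⊥ f₁) f₂) f₃ ≤ I)
    (hH : Hg I) (ht : Tendsto (fun n : ℕ => (HF I n : ℚ) / cc (d + 1) n) atTop (𝓝 6))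
    {q : MvPolynomial (Fin 3 ⊕ Fin (d + 1)) K} (hqI : q ∈ I) (hq : q.IsHomogeneous 2)
    (hqJ : pr K (d + 1) q ∉ ad (ad (ad ⊥ (pr K (d + 1) f₁)) (pr K (d + 1) f₂)) (pr K (d + 1) f₃)) :
    (∃ (v : Type) (_ : Fintype v) (a : v → ℕ) (e : v → MvPolynomial (Fin 3 ⊕ Fin (d + 1)) K),
      Gens I a e ∧ Ind I e) ∧ finrank K (Jn I 2) ≤ 4 := by
  have hle : ad (ad (ad ⊥ (pr K (d + 1) f₁)) (pr K (d + 1) f₂)) (pr K (d + 1) f₃) ≤ I.map (pr K (d + 1)) := by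
    rw [← map_pr_ad3]; exact Ideal.map_mono hJI
  have hqm : pr K (d + 1) q ∈ I.map (pr K (d + 1)) := Ideal.mem_map_of_mem _ hqI
  obtain ⟨g0, g1, g2, g3, g4⟩ := h.cs.HF
  have k0 := HF_mono hle 0
  have k1 := HF_mono hle 1
  have k2 := HF_lt hle (pr_hom hq) hqm hqJ
  have k3 : HF (I.map (pr K (d + 1))) 3 < 1 := by
    have : ∃ i, X i * pr K (d + 1) q ∉ ad (ad (ad ⊥ (pr K (d + 1) f₁)) (pr K (d + 1) f₂)) (pr K (d + 1) f₃) := by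
      by_contra hc
      push Not at hc
      exact hqJ (h.cs.sf 2 (by norm_num) _ (pr_hom hq) hc)
    obtain ⟨i, hi⟩ := this
    refine lt_of_lt_of_eq ?_ g3
    refine HF_lt hle (t := X i * pr K (d + 1) q) ?_ (Ideal.mul_mem_left _ _ hqm) hi
    exact (isHomogeneous_X K i).mul (pr_hom hq)
  have k4 := HF_mono hle 4
  rw [g0] at k0; rw [g1] at k1; rw [g2] at k2; rw [g4] at k4
  obtain ⟨e, hg, hi⟩ := gens_I hH (Nat.le_zero.1 k4)
  have hcard : Fintype.card (Σ n : Fin 4, Fin (HF (I.map (pr K (d + 1))) n)) =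
      HF (I.map (pr K (d + 1))) 0 + HF (I.map (pr K (d + 1))) 1 + HF (I.map (pr K (d + 1))) 2 +
        HF (I.map (pr K (d + 1))) 3 := by
    rw [Fintype.card_sigma]
    simp only [Fintype.card_fin, Fin.sum_univ_four]
    rfl
  have h6 := no_rel ht hg (u := Empty) (b := fun i => i.elim) (fun i => i.elim)
    (fun i => i.elim) (fun i => i.elim) (fun w _ => Subsingleton.elim _ _)
  rw [hcard, Fintype.card_empty] at h6
  have hind : Ind I e := by
    refine ind_of_no_hom_rel hH hg.hom fun n s hs hsI => ?_
    by_contra hne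
    obtain ⟨j₀, hj₀⟩ := Function.ne_iff.1 hne
    have := no_rel ht hg (u := Unit) (b := fun _ => n) (fun _ => s) (fun _ => hs) (fun _ => hsI) ?_
    · rw [hcard, Fintype.card_unit] at this
      omega
    · intro w hw
      funext x
      have := hw j₀
      rw [Fintype.sum_unique] at this
      exact (mul_eq_zero.1 this).resolve_right hj₀
  refine ⟨⟨_, _, _, e, hg, hind⟩, ?_⟩
  have hlow := HF_lower (n := 2) hg.hom hind ?_
  · rw [Fintype.sum_sigma] at hlow
    simp only [Fin.sum_univ_four, Finset.sum_const, Finset.card_univ, Fintype.card_fin, smul_eq_mul] at hlow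
    have l0 : HF (I.map (pr K (d + 1))) 0 = 1 := by omega
    have l1 : HF (I.map (pr K (d + 1))) 1 = 3 := by omega
    have l2 : HF (I.map (pr K (d + 1))) 2 = 2 := by omega
    have l3 : HF (I.map (pr K (d + 1))) 3 = 0 := by omega
    have e1 : cc (d + 1) 2 + 3 * cc (d + 1) 1 + 2 * cc (d + 1) 0 ≤ HF I 2 := by
      have hlow' : HF (I.map (pr K (d + 1))) 0 * cc (d + 1) 2 + HF (I.map (pr K (d + 1))) 1 * cc (d + 1) 1 +
        HF (I.map (pr K (d + 1))) 2 * cc (d + 1) 0 + HF (I.map (pr K (d + 1))) 3 * cc (d + 1) (2 - 3) ≤ HF I 2 := hlow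
      rw [l0, l1, l2, l3] at hlow'
      linarith
    have e2 := HF_add I 2
    rw [finrank_hom] at e2
    simp only [cc, Fintype.card_sum, Fintype.card_fin] at e1 e2
    have e3 : (3 + (d + 1) + 2 - 1).choose 2 = (d + 1 + 2 - 1).choose 2 + 3 * (d + 1 + 1 - 1).choose 1 + 2 * (d + 1 + 0 - 1).choose 0 + 4 := by
      rw [show 3 + (d + 1) + 2 - 1 = d + 1 + 1 + 1 + 1 + 1 by omega, show d + 1 + 2 - 1 = d + 1 + 1 by omega]
      simp [Nat.choose_succ_succ']
      ring
    omega
  · rintro ⟨n, j⟩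
    by_contra hc
    have : n = 3 := by
      apply Fin.ext
      change ¬ ((n : ℕ) ≤ 2) at hc
      have := n.2
      change (n : ℕ) = 3
      omega
    subst this
    have hj := j.2
    have : HF (I.map (pr K (d + 1))) ((3 : Fin 4) : ℕ) = HF (I.map (pr K (d + 1))) 3 := rfl
    omega

end
end Q6

namespace Q6
open MvPolynomial Module Filter Topology

section
variable {K : Type u} [Field K]

lemma hom0 {σ : Type} {t : MvPolynomial σ K} (h : t.IsHomogeneous 0) : t = C (coeff 0 t) := by
  rw [← homogeneousComponent_zero, hc_self h]

lemma lin_const {d : ℕ} {t : Fin d → MvPolynomial (Fin d) K} (ht : ∀ k, (t k).IsHomogeneous 0)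
    (h : ∑ k, X k * t k = 0) (k : Fin d) : t k = 0 := by
  classical
  have h1 := congrArg (coeff (Finsupp.single k 1)) h
  rw [coeff_sum, coeff_zero, Finset.sum_eq_single_of_mem k (Finset.mem_univ _)] at h1
  · rw [hom0 (ht k), mul_comm, coeff_C_mul, coeff_X, if_pos rfl, mul_one] at h1
    rw [hom0 (ht k), h1, C_0]
  · intro l _ hl
    rw [hom0 (ht l), mul_comm, coeff_C_mul, coeff_X, if_neg, mul_zero]
    intro hc
    exact hl (Finsupp.single_left_injective one_ne_zero hc)

lemma TSet.deg1 {d : ℕ} {f₁ f₂ f₃ : MvPolynomial (Fin 3 ⊕ Fin d) K} (h : TSet f₁ f₂ f₃)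
    {t : MvPolynomial (Fin 3) K} (ht : t.IsHomogeneous 1)
    (hm : t ∈ ad (ad (ad ⊥ (pr K d f₁)) (pr K d f₂)) (pr K d f₃)) : t = 0 := by
  have a1 := mem_sup_hom_lt ((Hg.bot.sup_span h.cs.h1).sup_span h.cs.h2) h.cs.h3 ht (by norm_num) hm
  have a2 := mem_sup_hom_lt (Hg.bot.sup_span h.cs.h1) h.cs.h2 ht (by norm_num) a1
  exact mem_sup_hom_lt Hg.bot h.cs.h1 ht (by norm_num) a2

variable [Infinite K]

lemma exists_lift {d : ℕ} {f₁ f₂ f₃ : MvPolynomial (Fin 3 ⊕ Fin d) K} (h : TSet f₁ f₂ f₃)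
    {b : MvPolynomial (Fin 3 ⊕ Fin d) K} (hb : b.IsHomogeneous 1)
    (hbn : pr K d b ∉ ad (ad (ad ⊥ (pr K d f₁)) (pr K d f₂)) (pr K d f₃)) :
    ∃ w : Fin 3 → MvPolynomial (Fin 3 ⊕ Fin d) K, (∀ o, (w o).IsHomogeneous (o : ℕ)) ∧
      ∀ o, pr K d (w o * b) ∉ ad (ad (ad ⊥ (pr K d f₁)) (pr K d f₂)) (pr K d f₃) := by
  have s1 : ∃ i, X i * pr K d b ∉ ad (ad (ad ⊥ (pr K d f₁)) (pr K d f₂)) (pr K d f₃) := by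
    by_contra hc
    push Not at hc
    exact hbn (h.cs.sf 1 (by norm_num) _ (pr_hom hb) hc)
  obtain ⟨i, hi⟩ := s1
  have s2 : ∃ i', X i' * (X i * pr K d b) ∉ ad (ad (ad ⊥ (pr K d f₁)) (pr K d f₂)) (pr K d f₃) := by
    by_contra hc
    push Not at hc
    exact hi (h.cs.sf 2 (by norm_num) _ ((isHomogeneous_X K i).mul (pr_hom hb)) hc)
  obtain ⟨i', hi'⟩ := s2
  have hX : ∀ i : Fin 3, pr K d (X (Sum.inl i)) = X i := fun i => by simp [pr]
  refine ⟨![1, X (Sum.inl i), X (Sum.inl i') * X (Sum.inl i)], ?_, ?_⟩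
  · intro o
    fin_cases o
    · exact isHomogeneous_one _ _
    · exact isHomogeneous_X _ _
    · exact (isHomogeneous_X K _).mul (isHomogeneous_X K _)
  · intro o
    fin_cases o
    · simpa using hbn
    · simpa [hX] using hi
    · simpa [hX, mul_assoc] using hi'

lemma caseB {d : ℕ} {f₁ f₂ f₃ : MvPolynomial (Fin 3 ⊕ Fin (d + 1)) K} (h : TSet f₁ f₂ f₃)
    {I : Ideal (MvPolynomial (Fin 3 ⊕ Fin (d + 1)) K)} (hJI : ad (ad (ad ⊥ f₁) f₂) f₃ ≤ I)
    (hI : I.height = 3)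
    (ht : Tendsto (fun n : ℕ => (HF I n : ℚ) / cc (d + 1) n) atTop (𝓝 6))
    (hQ : ∀ J' : Ideal (MvPolynomial (Fin 3 ⊕ Fin (d + 1)) K), (∀ q ∈ I, q.IsHomogeneous 2 → q ∈ J') → I ≤ J')
    (hB : ∀ q ∈ I, q.IsHomogeneous 2 →
      pr K (d + 1) q ∈ ad (ad (ad ⊥ (pr K (d + 1) f₁)) (pr K (d + 1) f₂)) (pr K (d + 1) f₃)) : False := by
  obtain ⟨v, _, a, e, hcard, hg, hi⟩ := h.gens
  by_cases hIJ : I ≤ ad (ad (ad ⊥ f₁) f₂) f₃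
  · have hEq := le_antisymm hIJ hJI
    have := growth_lower ht a ?_
    · omega
    · filter_upwards [ev_le a] with n hn
      rw [hEq]
      exact HF_lower hg.hom hi hn
  have : ∃ q ∈ I, q.IsHomogeneous 2 ∧ q ∉ ad (ad (ad ⊥ f₁) f₂) f₃ := by
    by_contra hc
    push Not at hc
    exact hIJ (hQ _ hc)
  obtain ⟨q, hqI, hq, hqJ⟩ := this
  have h1 : q ∈ ad (ad (ad ⊥ f₁) f₂) f₃ ⊔ Zi K (d + 1) (d + 1) := by
    rw [mem_sup_Zi, map_pr_ad3]; exact hB q hqI hq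
  obtain ⟨j, hj, y, hy, hjy⟩ := Submodule.mem_sup.1 h1
  obtain ⟨c, rfl⟩ := Zi_repr hy
  have h2 := congrArg (homogeneousComponent (1 + 1)) hjy
  rw [map_add, hc_sum_z, hc_self hq] at h2
  have hjJ := h.hg _ hj (1 + 1)
  set b : Fin (d + 1) → MvPolynomial (Fin 3 ⊕ Fin (d + 1)) K := fun k => homogeneousComponent 1 (c k) with hb
  have hb1 : ∀ k, (b k).IsHomogeneous 1 := fun k => homogeneousComponent_isHomogeneous _ _
  change _ + ∑ k, X (Sum.inr k) * b k = q at h2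
  have hq0I : ∑ k, X (Sum.inr k) * b k ∈ I := by
    rw [← add_sub_cancel_left (homogeneousComponent (1 + 1) j) (∑ k, X (Sum.inr k) * b k), h2]
    exact sub_mem hqI (hJI hjJ)
  have hq0J : ∑ k, X (Sum.inr k) * b k ∉ ad (ad (ad ⊥ f₁) f₂) f₃ := by
    intro hc
    exact hqJ (h2 ▸ add_mem hjJ hc)
  clear_value b
  clear hb hjJ h2 hjy hy c hj j h1
  have hirX : ∀ k, ir K (d + 1) (X k) = X (Sum.inr k) := fun k => by simp [ir]
  by_cases hall : ∀ k, pr K (d + 1) (b k) ∈ ad (ad (ad ⊥ (pr K (d + 1) f₁)) (pr K (d + 1) f₂)) (pr K (d + 1) f₃)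
  · have hbz : ∀ k, ∃ r : MvPolynomial (Fin (d + 1)) K, ir K (d + 1) r = b k := by
      intro k
      have hz := pr_eq_zero.1 (h.deg1 (pr_hom (hb1 k)) (hall k))
      obtain ⟨c, hc⟩ := Zi_repr hz
      have h3 := congrArg (homogeneousComponent (0 + 1)) hc
      rw [hc_sum_z, hc_self (hb1 k)] at h3
      refine ⟨∑ l, X l * C (coeff 0 (c l)), ?_⟩
      rw [h3, map_sum]
      refine Finset.sum_congr rfl fun l _ => ?_
      rw [map_mul, hirX, homogeneousComponent_zero]
      simp [ir]
    choose r hr using hbz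
    have h4 : ∑ k, X (Sum.inr k) * b k = ir K (d + 1) (∑ k, X k * r k) := by
      rw [map_sum]
      exact Finset.sum_congr rfl fun k _ => by rw [map_mul, hirX, hr]
    rw [h4] at hq0I hq0J
    have h5 := h.inter hJI hI hq0I
    rw [h5, map_zero] at hq0J
    exact hq0J (zero_mem _)
  · push Not at hall
    obtain ⟨k₀, hk₀⟩ := hall
    obtain ⟨w, hw, hwn⟩ := exists_lift h (hb1 k₀) hk₀
    choose t htS htJ using fun (o : Fin 3) (k : Fin (d + 1)) => hg.gen ((o : ℕ) + 1) (w o * b k) ((hw o).mul (hb1 k))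
    have hS : ∀ (o : Fin 3) j, ∑ k, X k * t o k j ∈ homS K (d + 1) (1 + ((o : ℕ) + 1)) (a j) := fun o j =>
      sum_mem fun k _ => homS_mul (isHomogeneous_X _ _) (htS o k j)
    have hz : ∀ (o : Fin 3) j, (o : ℕ) + 1 < a j → ∑ k, X k * t o k j = 0 := by
      intro o j hlt
      refine Finset.sum_eq_zero fun k _ => ?_
      have := htS o k j
      rw [homS_of_lt hlt] at this
      rw [(Submodule.mem_bot K).1 this, mul_zero]
    have hnz : ∀ o : Fin 3, ∃ j, a j = (o : ℕ) + 1 ∧ ∑ k, X k * t o k j ≠ 0 := by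
      intro o
      by_contra hc
      push Not at hc
      have hcc : ∀ j, constantCoeff (t o k₀ j) = 0 := by
        intro j
        have hm := htS o k₀ j
        rcases lt_trichotomy (a j) ((o : ℕ) + 1) with hl | he | hl
        · rw [homS_of_le hl.le] at hm
          rw [constantCoeff_eq]
          refine hm.coeff_eq_zero ?_
          simp; omega
        · have : t o k₀ j = 0 := by
            refine lin_const (t := fun k => t o k j) (fun k => ?_) (hc j he) k₀
            have := htS o k j
            rw [he, homS_of_le le_rfl, Nat.sub_self] at this
            exact this
          rw [this, map_zero]
        · rw [homS_of_lt hl] at hm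
          rw [(Submodule.mem_bot K).1 hm, map_zero]
      refine hwn o ?_
      rw [← map_pr_ad3]
      have h6 := Ideal.mem_map_of_mem (pr K (d + 1)) (htJ o k₀)
      rw [map_sub, map_sum] at h6
      simpa [pr_ir, hcc] using h6
    have := no_rel ht (hg.mono hJI) (u := Fin 3) (b := fun o : Fin 3 => 1 + ((o : ℕ) + 1)) (fun o j => ∑ k, X k * t o k j) hS ?_ ?_
    · rw [hcard, Fintype.card_fin] at this
      omega
    · intro o
      have h7 : ∑ j, ir K (d + 1) (∑ k, X k * t o k j) * e j =
          w o * (∑ k, X (Sum.inr k) * b k) - ∑ k, X (Sum.inr k) * (w o * b k - ∑ j, ir K (d + 1) (t o k j) * e j) := by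
        simp only [map_sum, map_mul, hirX, mul_sub, Finset.sum_sub_distrib, Finset.mul_sum, Finset.sum_mul]
        rw [Finset.sum_comm]
        have : ∀ k, w o * (X (Sum.inr k) * b k) = X (Sum.inr k) * (w o * b k) := fun k => by ring
        simp only [this, sub_sub_cancel, mul_assoc]
      rw [h7]
      exact sub_mem (Ideal.mul_mem_left _ _ hq0I) (sum_mem fun k _ => Ideal.mul_mem_left _ _ (hJI (htJ o k)))
    · intro x hx
      choose jj hjj hjn using hnz
      have x2 : x 2 = 0 := by
        have := hx (jj 2)
        have e2 := hjj 2
        rw [Fin.sum_univ_three, hz 0 _ (by rw [e2]; decide), hz 1 _ (by rw [e2]; decide), mul_zero, mul_zero,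
          zero_add, zero_add] at this
        exact (mul_eq_zero.1 this).resolve_right (hjn 2)
      have x1 : x 1 = 0 := by
        have := hx (jj 1)
        have e2 := hjj 1
        rw [Fin.sum_univ_three, hz 0 _ (by rw [e2]; decide), x2, mul_zero, zero_mul, zero_add, add_zero] at this
        exact (mul_eq_zero.1 this).resolve_right (hjn 1)
      have x0 : x 0 = 0 := by
        have := hx (jj 0)
        rw [Fin.sum_univ_three, x1, x2, zero_mul, zero_mul, add_zero, add_zero] at this
        exact (mul_eq_zero.1 this).resolve_right (hjn 0)
      funext o
      fin_cases o
      · exact x0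
      · exact x1
      · exact x2

end
end Q6

namespace Q6
open TensorProduct Polynomial

lemma pd_baseChange (S A : Type u) [CommRing S] [CommRing A] [Algebra S A]
    [Module.Flat S A] (c : ℕ) :
    ∀ (M : Type u) [AddCommGroup M] [Module S M]
    (_ : HasProjectiveDimensionLE (ModuleCat.of S M) c),
      HasProjectiveDimensionLE (ModuleCat.of A (A ⊗[S] M)) c := by
  induction c with
  | zero =>
    intro M _ _ h
    rw [← projective_iff_hasProjectiveDimensionLE_zero, ← IsProjective.iff_projective] at h ⊢
    infer_instance
  | succ c ih =>
    intro M _ _ hM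
    obtain ⟨N, _, _, _, f, hf⟩ : ∃ (N : Type u) (_ : AddCommGroup N) (_ : Module S N)
        (_ : Module.Projective S N) (f : N →ₗ[S] M), Function.Surjective f :=
      ⟨M →₀ S, inferInstance, inferInstance, inferInstance, _,
        Finsupp.linearCombination_id_surjective S M⟩
    have hfi : Function.Injective (LinearMap.ker f).subtype := Submodule.injective_subtype _
    have hS := sc_shortExact (LinearMap.ker f).subtype f (LinearMap.exact_subtype_ker_map f)
      hfi hf
    have hp : Projective (ModuleCat.of S N) := by
      rw [← IsProjective.iff_projective]; infer_instance
    have h1 := (hS.hasProjectiveDimensionLT_X₃_iff c hp).1 hM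
    have h2 := ih (LinearMap.ker f) h1
    have hex : Function.Exact ((LinearMap.ker f).subtype.baseChange A) (f.baseChange A) :=
      lTensor_exact A (LinearMap.exact_subtype_ker_map f) hf
    have hS2 := sc_shortExact ((LinearMap.ker f).subtype.baseChange A) (f.baseChange A) hex
      (Module.Flat.lTensor_preserves_injective_linearMap _ Subtype.val_injective)
      (LinearMap.lTensor_surjective A hf)
    have hp2 : Projective (ModuleCat.of A (A ⊗[S] N)) := by
      rw [← IsProjective.iff_projective]; infer_instance
    exact (hS2.hasProjectiveDimensionLT_X₃_iff c hp2).2 h2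

section
variable (A M : Type u) [CommRing A] [AddCommGroup M] [Module A M] [Module A[X] M]
  [IsScalarTower A A[X] M]

noncomputable def mX : M →ₗ[A] M := Module.toModuleEnd A (S := A[X]) M X

lemma mX_apply (m : M) : mX A M m = (X : A[X]) • m := rfl

noncomputable def dX : A[X] ⊗[A] M →ₗ[A[X]] A[X] ⊗[A] M :=
  (X : A[X]) • LinearMap.id - (mX A M).baseChange A[X]

noncomputable def eX : A[X] ⊗[A] M →ₗ[A[X]] M :=
  LinearMap.liftBaseChange A[X] (LinearMap.id : M →ₗ[A] M)

lemma eX_tmul (p : A[X]) (m : M) : eX A M (p ⊗ₜ m) = p • m := by simp [eX]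

lemma dX_tmul (p : A[X]) (m : M) : dX A M (p ⊗ₜ m) = (X * p) ⊗ₜ m - p ⊗ₜ ((X : A[X]) • m) := by
  simp [dX, mX_apply, TensorProduct.smul_tmul']

lemma eX_dX (t) : eX A M (dX A M t) = 0 := by
  induction t with
  | zero => simp
  | add a b ha hb => simp [ha, hb]
  | tmul p m => rw [dX_tmul, map_sub, eX_tmul, eX_tmul, smul_smul, mul_comm, sub_self]

lemma sub_mem_dX (t) : t - 1 ⊗ₜ eX A M t ∈ LinearMap.range (dX A M) := by
  induction t with
  | zero => simp
  | add a b ha hb =>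
    rw [map_add, TensorProduct.tmul_add, add_sub_add_comm]
    exact add_mem ha hb
  | tmul p m =>
    rw [eX_tmul]
    induction p using Polynomial.induction_on generalizing m with
    | C a =>
      have : (C a : A[X]) ⊗ₜ[A] m = 1 ⊗ₜ ((C a : A[X]) • m) := by
        rw [← mul_one (C a), ← Polynomial.smul_eq_C_mul, TensorProduct.smul_tmul, smul_assoc, one_smul]
      rw [this, sub_self]; exact zero_mem _
    | add p q hp hq =>
      rw [add_smul, TensorProduct.tmul_add, TensorProduct.add_tmul, add_sub_add_comm]
      exact add_mem (hp m) (hq m)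
    | monomial n a ih =>
      have h := ih ((X : A[X]) • m)
      have h2 : dX A M ((C a * X ^ n) ⊗ₜ m) ∈ LinearMap.range (dX A M) := ⟨_, rfl⟩
      rw [dX_tmul] at h2
      have h3 := add_mem h h2
      rw [smul_smul] at h3
      have e1 : C a * X ^ n * X = C a * X ^ (n+1) := by ring
      have e2 : X * (C a * X ^ n) = C a * X ^ (n+1) := by ring
      rw [e1, e2] at h3
      convert h3 using 1
      abel

noncomputable def eP := PolynomialModule.polynomialTensorProductLEquivPolynomialModule A M

lemma eP_tmul (p : A[X]) (m : M) (n : ℕ) : (eP A M (p ⊗ₜ m)).coeff n = p.coeff n • m := by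
  have : eP A M (p ⊗ₜ m) = p • PolynomialModule.single A 0 m := by
    rw [← mul_one p, ← smul_eq_mul, ← TensorProduct.smul_tmul', map_smul]
    change p • (LinearMap.liftBaseChange A[X] (PolynomialModule.lsingle A (M := M) 0)) _ = _
    simp; rfl
  rw [this, PolynomialModule.smul_single_apply]
  simp

lemma eP_dX (t) (n : ℕ) : (eP A M (dX A M t)).coeff (n+1) =
    (eP A M t).coeff n - (X : A[X]) • (eP A M t).coeff (n+1) := by
  induction t with
  | zero => simp
  | add a b ha hb =>
    simp only [map_add, PolynomialModule.coeff_add, Finsupp.add_apply, ha, hb, smul_add]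
    abel
  | tmul p m =>
    rw [dX_tmul, map_sub]
    change (eP A M ((X * p) ⊗ₜ m)).coeff (n+1) - (eP A M (p ⊗ₜ ((X : A[X]) • m))).coeff (n+1) = _
    rw [eP_tmul, eP_tmul, eP_tmul, eP_tmul, Polynomial.coeff_X_mul, smul_comm]

lemma dX_inj : Function.Injective (dX A M) := by
  rw [injective_iff_map_eq_zero]
  intro t ht
  have h : ∀ n, (eP A M t).coeff n = (X : A[X]) • (eP A M t).coeff (n+1) := by
    intro n
    have := eP_dX A M t n
    rw [ht, map_zero] at this
    exact (sub_eq_zero.1 this.symm)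
  have h0 : ∀ j n, (eP A M t).coeff (n + j) = 0 → (eP A M t).coeff n = 0 := by
    intro j
    induction j with
    | zero => intro n h; exact h
    | succ j ih => intro n hn; exact ih n (by rw [h, add_assoc, hn, smul_zero])
  obtain ⟨B, hB⟩ := (eP A M t).coeff.support.bddAbove
  have : eP A M t = 0 := by
    ext n
    apply h0 (B+1) n
    by_contra hne
    have := hB (Finsupp.mem_support_iff.2 hne)
    omega
  exact (LinearEquiv.map_eq_zero_iff _).1 this

lemma pd_poly (c : ℕ) (h : HasProjectiveDimensionLE (ModuleCat.of A M) c) :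
    HasProjectiveDimensionLE (ModuleCat.of A[X] M) (c+1) := by
  have hex : Function.Exact (dX A M) (eX A M) := by
    intro t
    constructor
    · intro ht
      have := sub_mem_dX A M t
      rwa [ht, TensorProduct.tmul_zero, sub_zero] at this
    · rintro ⟨s, rfl⟩; exact eX_dX A M s
  have hS := sc_shortExact (dX A M) (eX A M) hex (dX_inj A M)
    (fun m => ⟨1 ⊗ₜ m, by rw [eX_tmul, one_smul]⟩)
  have h1 := pd_baseChange A A[X] c M h
  have h2 : HasProjectiveDimensionLT (sc (dX A M) (eX A M) hex).X₂ (c+1) := h1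
  exact hS.hasProjectiveDimensionLT_X₃ (c+1) h1
    (hasProjectiveDimensionLT_of_ge _ (c+1) (c+2) (by omega))
end

section
attribute [local instance] RingHomInvPair.of_ringEquiv

/-- transfer along a ring equiv with the same underlying module -/
lemma pd_ringEquiv {R R' : Type u} [CommRing R] [CommRing R'] (e : R ≃+* R') (M : Type u)
    [AddCommGroup M] [Module R M] [Module R' M] (he : ∀ (r : R) (m : M), e r • m = r • m) (n : ℕ)
    (h : HasProjectiveDimensionLE (ModuleCat.of R M) n) :
    HasProjectiveDimensionLE (ModuleCat.of R' M) n := by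
  let e' : M ≃ₛₗ[RingHomClass.toRingHom e] M :=
    { AddEquiv.refl M with
      map_smul' := fun r m => (he r m).symm }
  exact ModuleCat.hasProjectiveDimensionLE_of_semiLinearEquiv (M := ModuleCat.of R M)
    (N := ModuleCat.of R' M) e e' n
end

lemma pd_mvPoly (A : Type u) [CommRing A] (n m : ℕ) : ∀ (M : Type u) [AddCommGroup M] [Module A M]
    [Module (MvPolynomial (Fin m) A) M] [IsScalarTower A (MvPolynomial (Fin m) A) M]
    (_ : HasProjectiveDimensionLE (ModuleCat.of A M) n),
    HasProjectiveDimensionLE (ModuleCat.of (MvPolynomial (Fin m) A) M) (n + m) := by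
  induction m with
  | zero =>
    intro M _ _ _ _ h
    refine pd_ringEquiv (MvPolynomial.isEmptyRingEquiv A (Fin 0)).symm M ?_ n h
    intro r m
    rw [MvPolynomial.isEmptyRingEquiv_symm_apply, ← MvPolynomial.algebraMap_eq, algebraMap_smul]
  | succ m ih =>
    intro M _ _ _ _ h
    let B := MvPolynomial (Fin m) A
    let φ := MvPolynomial.finSuccEquiv A m
    let _ : Module B[X] M := Module.compHom M φ.symm.toRingEquiv.toRingHom
    let _ : Module B M := Module.compHom M (algebraMap B B[X])
    have : IsScalarTower B B[X] M := IsScalarTower.of_algebraMap_smul fun r m => rfl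
    have : IsScalarTower A B M := IsScalarTower.of_algebraMap_smul fun r m => by
      change φ.symm (algebraMap B B[X] (algebraMap A B r)) • m = r • m
      rw [← IsScalarTower.algebraMap_apply A B B[X], AlgEquiv.commutes, algebraMap_smul]
    refine pd_ringEquiv φ.symm.toRingEquiv M (fun r m => rfl) (n + (m + 1)) ?_
    exact pd_poly B M (n+m) (ih M h)

lemma pd_free_aux {R T M : Type u} [CommRing R] [CommRing T] [AddCommGroup M] [Module T M]
    (φ : T ≃+* MvPolynomial (Fin 3) R) {v : Type} [Fintype v] {f : (v → R) → M}
    (hadd : ∀ x y, f (x + y) = f x + f y) (hsm : ∀ (c : R) x, f (c • x) = φ.symm (MvPolynomial.C c) • f x)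
    (hb : Function.Bijective f) : HasProjectiveDimensionLE (ModuleCat.of T M) 3 := by
  let m1 : Module (MvPolynomial (Fin 3) R) M := Module.compHom M φ.symm.toRingHom
  let m2 : Module R M := Module.compHom M (algebraMap R (MvPolynomial (Fin 3) R))
  have : IsScalarTower R (MvPolynomial (Fin 3) R) M := IsScalarTower.of_algebraMap_smul fun r m => rfl
  refine pd_ringEquiv φ.symm M (fun r m => rfl) 3 ?_
  refine pd_mvPoly R 0 3 M ?_
  rw [← projective_iff_hasProjectiveDimensionLE_zero, ← IsProjective.iff_projective]
  let g : (v → R) →ₗ[R] M := { toFun := f, map_add' := hadd, map_smul' := hsm }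
  exact Module.Projective.of_equiv (LinearEquiv.ofBijective g hb)

section
open MvPolynomial
variable {d : ℕ} {K : Type u} [Field K]

lemma pd_free {I : Ideal (MvPolynomial (Fin 3 ⊕ Fin d) K)} {v : Type} [Fintype v] {a : v → ℕ}
    {e : v → MvPolynomial (Fin 3 ⊕ Fin d) K} (hg : Gens I a e) (hi : Ind I e) :
    HasProjectiveDimensionLE (ModuleCat.of (MvPolynomial (Fin 3 ⊕ Fin d) K)
      (MvPolynomial (Fin 3 ⊕ Fin d) K ⧸ I)) 3 := by
  have hφ : ∀ r : MvPolynomial (Fin d) K,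
      (sumAlgEquiv K (Fin 3) (Fin d)).symm (C r) = ir K d r := by
    intro r
    rw [AlgEquiv.symm_apply_eq]
    have : (Algebra.ofId (MvPolynomial (Fin d) K) (MvPolynomial (Fin 3) (MvPolynomial (Fin d) K))).restrictScalars K
        = (sumAlgEquiv K (Fin 3) (Fin d)).toAlgHom.comp (ir K d) := by
      apply MvPolynomial.algHom_ext
      intro i
      change (C (X i) : MvPolynomial (Fin 3) (MvPolynomial (Fin d) K)) =
        sumAlgEquiv K (Fin 3) (Fin d) (rename Sum.inr (X i))
      rw [rename_X, sumAlgEquiv_X_inr]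
    exact DFunLike.congr_fun this r
  refine pd_free_aux (sumAlgEquiv K (Fin 3) (Fin d)).toRingEquiv
    (f := fun r : v → MvPolynomial (Fin d) K => Ideal.Quotient.mk I (∑ j, ir K d (r j) * e j)) ?_ ?_ ⟨?_, ?_⟩
  · intro r s
    rw [← map_add, ← Finset.sum_add_distrib]
    congr 1
    refine Finset.sum_congr rfl fun j _ => ?_
    rw [Pi.add_apply, map_add, add_mul]
  · intro c r
    change _ = (sumAlgEquiv K (Fin 3) (Fin d)).symm (C c) • _
    rw [hφ]
    change _ = Ideal.Quotient.mk I (ir K d c * ∑ j, ir K d (r j) * e j)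
    rw [Finset.mul_sum]
    congr 1
    refine Finset.sum_congr rfl fun j _ => ?_
    rw [Pi.smul_apply, smul_eq_mul, map_mul, mul_assoc]
  · intro r s hrs
    have h1 := Ideal.Quotient.eq.1 hrs
    rw [← Finset.sum_sub_distrib] at h1
    have h2 := hi (r - s) (by
      convert h1 using 2
      rw [Pi.sub_apply, map_sub, sub_mul])
    exact sub_eq_zero.1 h2
  · intro m
    obtain ⟨t, rfl⟩ := Ideal.Quotient.mk_surjective m
    obtain ⟨r, hr⟩ := hg.gen' t
    refine ⟨r, ?_⟩
    rw [eq_comm, Ideal.Quotient.eq]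
    exact hr
end

end Q6

namespace Q6
open MvPolynomial Module Filter Topology

section
variable {d : ℕ} {K : Type u} [Field K] [Infinite K]

lemma coreT {f₁ f₂ f₃ : MvPolynomial (Fin 3 ⊕ Fin d) K} (h : TSet f₁ f₂ f₃)
    {I : Ideal (MvPolynomial (Fin 3 ⊕ Fin d) K)} (hJI : ad (ad (ad ⊥ f₁) f₂) f₃ ≤ I)
    {Q : Set (MvPolynomial (Fin 3 ⊕ Fin d) K)} (hQ : ∀ q ∈ Q, q.IsHomogeneous 2)
    (hIQ : I = Ideal.span Q) (hI : I.height = 3) (hm : Mult6 (HF I)) :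
    HasProjectiveDimensionLE (ModuleCat.of (MvPolynomial (Fin 3 ⊕ Fin d) K)
      (MvPolynomial (Fin 3 ⊕ Fin d) K ⧸ I)) 3 ∧ finrank K (Jn I 2) ≤ 4 := by
  obtain ⟨d, rfl⟩ := h.d_pos hJI hm
  have ht := h.tend hJI hI hm
  have hH : Hg I := by rw [hIQ]; exact Hg.span fun x hx => ⟨2, hQ x hx⟩
  by_cases hB : ∀ q ∈ I, q.IsHomogeneous 2 →
      pr K (d + 1) q ∈ ad (ad (ad ⊥ (pr K (d + 1) f₁)) (pr K (d + 1) f₂)) (pr K (d + 1) f₃)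
  · exfalso
    refine caseB h hJI hI ht (fun J' hJ' => ?_) hB
    rw [hIQ, Ideal.span_le]
    intro q hq
    exact hJ' q (hIQ ▸ Ideal.subset_span hq) (hQ q hq)
  · push Not at hB
    obtain ⟨q, hqI, hq, hqJ⟩ := hB
    obtain ⟨⟨v, _, a, e, hg, hi⟩, h4⟩ := caseA h hJI hH ht hqI hq hqJ
    exact ⟨pd_free hg hi, h4⟩

end

lemma select {K : Type u} [Field K] [Infinite K] {A : Type u} [CommRing A] [IsNoetherianRing A]
    [Algebra K A] (V : Submodule K A) (I : Ideal A) (hV : ∀ p : Ideal A, (∀ v ∈ V, v ∈ p) → I ≤ p)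
    (c : ℕ) (s : Finset A) (hs : s.card ≤ c) (hsc : (c : ℕ∞) ≤ (Ideal.span (s : Set A)).height)
    (m : Ideal A) (hm : m ≠ ⊤) (hsm : ∀ x ∈ s, x ∈ m) (hVm : ∀ v ∈ V, v ∈ m)
    (n : ℕ) (hn : ((c + n : ℕ) : ℕ∞) ≤ I.height) :
    ∃ z : Fin n → A, (∀ i, z i ∈ V) ∧ LinearIndependent K z ∧
      ((c + n : ℕ) : ℕ∞) ≤ (Ideal.span ((s : Set A) ∪ Set.range z)).height := by
  classical
  induction n with
  | zero =>
    refine ⟨Fin.elim0, fun i => i.elim0, linearIndependent_empty_type, ?_⟩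
    simpa using hsc
  | succ n ih =>
    obtain ⟨z, hzV, hzi, hz⟩ := ih (le_trans (by exact_mod_cast (by omega)) hn)
    set J := Ideal.span ((s : Set A) ∪ Set.range z) with hJ
    have hJs : J = Ideal.span ((s ∪ Finset.univ.image z : Finset A) : Set A) := by
      rw [hJ]; simp
    have hcard : (s ∪ Finset.univ.image z).card ≤ c + n := by
      refine (Finset.card_union_le _ _).trans (add_le_add hs ?_)
      exact Finset.card_image_le.trans (by simp)
    obtain ⟨v, hvV, hv⟩ := avoid V J.minimalPrimes (Ideal.finite_minimalPrimes_of_isNoetherianRing A J) (by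
      intro p hp
      by_contra hc
      push Not at hc
      have h1 := Ideal.height_mono (hV p hc)
      have h2 : p.height ≤ (s ∪ Finset.univ.image z).card := by
        rw [hJs] at hp
        exact Ideal.height_le_card_of_mem_minimalPrimes_span_finset hp
      have h3 := hn.trans (h1.trans h2)
      have h4 : c + (n + 1) ≤ (s ∪ Finset.univ.image z).card := by exact_mod_cast h3
      omega)
    refine ⟨Fin.snoc z v, ?_, ?_, ?_⟩
    · intro i
      refine Fin.lastCases ?_ (fun j => ?_) i
      · simpa using hvV
      · simpa using hzV j
    · rw [linearIndependent_finSnoc]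
      refine ⟨hzi, fun hmem => ?_⟩
      have hvJ : v ∈ J := by
        have : Submodule.span K (Set.range z) ≤ J.restrictScalars K := by
          rw [Submodule.span_le]
          intro x hx
          exact Ideal.subset_span (Or.inr hx)
        exact this hmem
      have hne : J ≠ ⊤ := by
        intro hT
        refine hm (eq_top_iff.2 (hT ▸ ?_))
        rw [hJ, Ideal.span_le]
        rintro x (hx | ⟨i, rfl⟩)
        · exact hsm x hx
        · exact hVm _ (hzV i)
      obtain ⟨p, hp⟩ := Ideal.nonempty_minimalPrimes hne
      exact hv p hp (hp.1.2 hvJ)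
    · have := height_succ_le (J' := Ideal.span ((s : Set A) ∪ Set.range (Fin.snoc z v : Fin (n+1) → A))) hv ?_ ?_
      · refine le_trans ?_ this
        rw [← add_assoc]
        push_cast at hz ⊢
        gcongr
      · refine Ideal.span_mono (Set.union_subset_union_right _ ?_)
        rintro _ ⟨i, rfl⟩
        exact ⟨i.castSucc, by simp⟩
      · exact Ideal.subset_span (Or.inr ⟨Fin.last n, by simp⟩)

end Q6

namespace Q6
open MvPolynomial Module

lemma ext_basis {K V : Type u} [Field K] [AddCommGroup V] [Module K V] [Module.Finite K V] {d : ℕ}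
    (hV : finrank K V = d + 3) (z : Fin d → V) (hz : LinearIndependent K z) :
    ∃ b : Basis (Fin 3 ⊕ Fin d) K V, ∀ i, b (Sum.inr i) = z i := by
  obtain ⟨x1, h1⟩ := exists_linearIndependent_snoc_of_lt_finrank hz (by omega)
  obtain ⟨x2, h2⟩ := exists_linearIndependent_snoc_of_lt_finrank h1 (by omega)
  obtain ⟨x3, h3⟩ := exists_linearIndependent_snoc_of_lt_finrank h2 (by omega)
  let e : Fin 3 ⊕ Fin d ≃ Fin (d + 1 + 1 + 1) := (Equiv.sumComm _ _).trans finSumFinEquiv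
  let b := (basisOfLinearIndependentOfCardEqFinrank h3 (by simp [hV])).reindex e.symm
  refine ⟨b, fun i => ?_⟩
  have : e (Sum.inr i) = i.castSucc.castSucc.castSucc := by
    simp only [e, Equiv.trans_apply, Equiv.sumComm_apply, Sum.swap_inr, finSumFinEquiv_apply_left]
    rfl
  simp only [b, Basis.reindex_apply, Equiv.symm_symm, coe_basisOfLinearIndependentOfCardEqFinrank, this, Fin.snoc_castSucc]

lemma coord {K : Type u} [Field K] {N d : ℕ} (hN : N = d + 3) (z : Fin d → MvPolynomial (Fin N) K)
    (hz1 : ∀ i, (z i).IsHomogeneous 1) (hz : LinearIndependent K z) :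
    ∃ φ : MvPolynomial (Fin N) K ≃ₐ[K] MvPolynomial (Fin 3 ⊕ Fin d) K,
      (∀ p n, p.IsHomogeneous n → (φ p).IsHomogeneous n) ∧
      (∀ p n, p.IsHomogeneous n → (φ.symm p).IsHomogeneous n) ∧ ∀ i, φ (z i) = X (Sum.inr i) := by
  let V := homogeneousSubmodule (Fin N) K 1
  have hV : finrank K V = d + 3 := by
    rw [finrank_hom]; simp [hN]
  let z' : Fin d → V := fun i => ⟨z i, hz1 i⟩
  have hz' : LinearIndependent K z' := LinearIndependent.of_comp V.subtype hz
  obtain ⟨b, hb⟩ := ext_basis hV z' hz'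
  let xv : Fin N → V := fun i => ⟨X i, isHomogeneous_X _ _⟩
  let L : V →ₗ[K] MvPolynomial (Fin 3 ⊕ Fin d) K := b.constr K X
  have hLhom : ∀ w, (L w).IsHomogeneous 1 := by
    intro w
    have : L w = ∑ j, b.repr w j • X j := by
      rw [Basis.constr_apply_fintype]; rfl
    rw [this]
    refine IsHomogeneous.sum _ _ _ fun j _ => ?_
    exact (homogeneousSubmodule _ K 1).smul_mem _ (isHomogeneous_X _ _)
  let φ : MvPolynomial (Fin N) K →ₐ[K] MvPolynomial (Fin 3 ⊕ Fin d) K := aeval fun i => L (xv i)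
  let ψ : MvPolynomial (Fin 3 ⊕ Fin d) K →ₐ[K] MvPolynomial (Fin N) K := aeval fun j => (b j : MvPolynomial (Fin N) K)
  have hφL : ∀ w : V, φ w = L w := by
    rintro ⟨w, hw⟩
    have hw2 : w ∈ Submodule.span K (Set.range (X : Fin N → MvPolynomial (Fin N) K)) := by
      rwa [← homogeneousSubmodule_one_eq_span_X]
    rw [Submodule.mem_span_range_iff_exists_fun] at hw2
    obtain ⟨c, hc⟩ := hw2
    have : (⟨w, hw⟩ : V) = ∑ i, c i • xv i := by
      apply Subtype.ext
      simp [← hc, xv]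
    rw [this]
    simp [φ, xv]
  have h1 : φ.comp ψ = AlgHom.id K _ := by
    apply MvPolynomial.algHom_ext
    intro j
    simp only [AlgHom.comp_apply, ψ, aeval_X, hφL, L, Basis.constr_basis, AlgHom.id_apply]
  have h2 : ψ.comp φ = AlgHom.id K _ := by
    apply MvPolynomial.algHom_ext
    intro i
    have : L (xv i) = ∑ j, b.repr (xv i) j • X j := by
      rw [Basis.constr_apply_fintype]; rfl
    have h3 := congrArg (Subtype.val) (b.sum_repr (xv i))
    simp only [AlgHom.comp_apply, φ, aeval_X, this, AlgHom.id_apply, map_sum, map_smul, ψ]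
    rw [AddSubmonoidClass.coe_finsetSum] at h3
    exact h3
  refine ⟨AlgEquiv.ofAlgHom φ ψ h1 h2, ?_, ?_, ?_⟩
  · intro p n hp
    have := hp.aeval (n := 1) (fun i => L (xv i)) (fun i => hLhom _)
    rwa [one_mul] at this
  · intro p n hp
    have := hp.aeval (n := 1) (fun j => (b j : MvPolynomial (Fin N) K)) (fun j => (b j).2)
    rwa [one_mul] at this
  · intro i
    change φ (z' i : MvPolynomial (Fin N) K) = _
    rw [hφL, ← hb]
    exact b.constr_basis K _ _

end Q6

namespace Q6
open MvPolynomial Module Filter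

section
variable {K : Type u} [Field K] {σ τ : Type} [Fintype σ] [Fintype τ]
  (φ : MvPolynomial σ K ≃ₐ[K] MvPolynomial τ K)

lemma mem_map_phi (I : Ideal (MvPolynomial σ K)) (x : MvPolynomial σ K) :
    φ x ∈ I.map (φ : MvPolynomial σ K →+* MvPolynomial τ K) ↔ x ∈ I := by
  constructor
  · intro h
    have h2 := Ideal.mem_map_of_mem (φ.symm : MvPolynomial τ K →+* MvPolynomial σ K) h
    rw [Ideal.map_map] at h2
    have : (φ.symm : MvPolynomial τ K →+* MvPolynomial σ K).comp (φ : MvPolynomial σ K →+* MvPolynomial τ K) = RingHom.id _ := by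
      ext <;> simp
    rw [this, Ideal.map_id] at h2
    simpa using h2
  · exact fun h => Ideal.mem_map_of_mem _ h

lemma HF_phi (hφ : ∀ p n, p.IsHomogeneous n → (φ p).IsHomogeneous n)
    (hφ' : ∀ p n, p.IsHomogeneous n → (φ.symm p).IsHomogeneous n) (I : Ideal (MvPolynomial σ K)) (n : ℕ) :
    HF (I.map (φ : MvPolynomial σ K →+* MvPolynomial τ K)) n = HF I n := by
  obtain ⟨v, hv, hi, hs⟩ := HF_basis I n
  refine HF_eq_of_basis (fun i => φ (v i)) (fun i => hφ _ _ (hv i)) ?_ ?_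
  · intro c hc
    apply hi
    rw [← mem_map_phi φ, map_sum]
    simpa using hc
  · intro t ht
    obtain ⟨c, hc⟩ := hs _ (hφ' t n ht)
    refine ⟨c, ?_⟩
    rw [← mem_map_phi φ, map_sub, map_sum] at hc
    simpa using hc

lemma Jn_phi (hc : Fintype.card σ = Fintype.card τ) (hφ : ∀ p n, p.IsHomogeneous n → (φ p).IsHomogeneous n)
    (hφ' : ∀ p n, p.IsHomogeneous n → (φ.symm p).IsHomogeneous n) (I : Ideal (MvPolynomial σ K)) (n : ℕ) :
    finrank K (Jn (I.map (φ : MvPolynomial σ K →+* MvPolynomial τ K)) n) = finrank K (Jn I n) := by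
  have h1 := HF_add I n
  have h2 := HF_add (I.map (φ : MvPolynomial σ K →+* MvPolynomial τ K)) n
  rw [HF_phi φ hφ hφ', finrank_hom] at h2
  rw [finrank_hom] at h1
  rw [hc] at h1
  omega

lemma height_phi (I : Ideal (MvPolynomial σ K)) :
    (I.map (φ : MvPolynomial σ K →+* MvPolynomial τ K)).height = I.height :=
  RingEquiv.height_map φ.toRingEquiv I

attribute [local instance] RingHomInvPair.of_ringEquiv

lemma pd_phi (I : Ideal (MvPolynomial σ K)) (c : ℕ)
    (h : HasProjectiveDimensionLE (ModuleCat.of (MvPolynomial τ K)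
      (MvPolynomial τ K ⧸ I.map (φ : MvPolynomial σ K →+* MvPolynomial τ K))) c) :
    HasProjectiveDimensionLE (ModuleCat.of (MvPolynomial σ K) (MvPolynomial σ K ⧸ I)) c := by
  let q := Ideal.quotientEquiv I (I.map (φ : MvPolynomial σ K →+* MvPolynomial τ K)) φ.toRingEquiv rfl
  let e' : (MvPolynomial τ K ⧸ I.map (φ : MvPolynomial σ K →+* MvPolynomial τ K)) ≃ₛₗ[RingHomClass.toRingHom φ.symm.toRingEquiv]
      (MvPolynomial σ K ⧸ I) :=
    { q.symm.toAddEquiv with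
      map_smul' := by
        intro r m
        obtain ⟨t, rfl⟩ := Ideal.Quotient.mk_surjective m
        change q.symm (Ideal.Quotient.mk _ (r * t)) = Ideal.Quotient.mk _ (φ.symm r) * q.symm (Ideal.Quotient.mk _ t)
        rw [map_mul, map_mul]
        rfl }
  exact ModuleCat.hasProjectiveDimensionLE_of_semiLinearEquiv
    (M := ModuleCat.of (MvPolynomial τ K) (MvPolynomial τ K ⧸ I.map (φ : MvPolynomial σ K →+* MvPolynomial τ K)))
    (N := ModuleCat.of (MvPolynomial σ K) (MvPolynomial σ K ⧸ I)) φ.symm.toRingEquiv e' c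
end

end Q6

namespace Q6
open MvPolynomial Module Filter

lemma pow_mm_le {K : Type u} [Field K] {N : ℕ} {J : Ideal (MvPolynomial (Fin N) K)} (hJ : Hg J)
    (h : (N : ℕ∞) ≤ J.height) : ∃ s, mm K N ^ s ≤ J := by
  have hrad : mm K N ≤ J.radical := by
    rw [← Ideal.sInf_minimalPrimes]
    refine le_sInf fun p hp => ?_
    have hpp : p.IsPrime := hp.1.1
    have hpm : p ≤ mm K N := (hJ.minimalPrimes hp).le_mm hpp.ne_top
    rcases hpm.eq_or_lt with h1 | h1
    · exact h1.ge
    · exfalso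
      have h2 := height_mm_eq (K := K) N
      have : p.FiniteHeight := inferInstance
      have h3 := Ideal.height_strict_mono_of_isPrime h1
      rw [h2] at h3
      exact absurd (lt_of_le_of_lt (h.trans (Ideal.height_mono hp.1.2)) h3) (lt_irrefl _)
  exact Ideal.exists_pow_le_of_le_radical_of_fg hrad (IsNoetherian.noetherian _)

lemma coreA {K : Type u} [Field K] [Infinite K] {N : ℕ} {I : Ideal (MvPolynomial (Fin N) K)}
    {Q : Set (MvPolynomial (Fin N) K)} (hQ : ∀ q ∈ Q, q.IsHomogeneous 2)
    (hIQ : I = Ideal.span Q) (hI : I.height = 3) (hm : Mult6 (HF I)) :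
    HasProjectiveDimensionLE (ModuleCat.of (MvPolynomial (Fin N) K)
      (MvPolynomial (Fin N) K ⧸ I)) 3 ∧ finrank K (Jn I 2) ≤ 4 := by
  classical
  have hH : Hg I := by rw [hIQ]; exact Hg.span fun x hx => ⟨2, hQ x hx⟩
  have hIT : I ≠ ⊤ := by
    rintro rfl
    rw [Ideal.height_top] at hI
    exact absurd hI (by decide)
  have hIm : I ≤ mm K N := hH.le_mm hIT
  have hmT : mm K N ≠ ⊤ := (mm_max K N).ne_top
  have h3N : 3 ≤ N := by
    have := Ideal.height_mono hIm
    rw [hI, height_mm_eq] at this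
    exact_mod_cast this
  obtain ⟨d, rfl⟩ := Nat.exists_eq_add_of_le' h3N
  obtain ⟨f, hfV, -, hf⟩ := select (Jn I 2) I (by
      intro p hp
      rw [hIQ, Ideal.span_le]
      intro q hq
      exact hp q ⟨hIQ ▸ Ideal.subset_span hq, hQ q hq⟩) 0 ∅ (by simp) (by simp) (mm K (d+3)) hmT (by simp)
      (fun v hv => hIm hv.1) 3 (by rw [hI]; norm_num)
  have hfI : ∀ i, f i ∈ I := fun i => (hfV i).1
  have hf2 : ∀ i, (f i).IsHomogeneous 2 := fun i => (hfV i).2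
  obtain ⟨z, hzV, hzi, hz⟩ := select (homogeneousSubmodule (Fin (d+3)) K 1) (mm K (d+3)) (by
      intro p hp
      rw [Ideal.span_le]
      rintro _ ⟨i, rfl⟩
      exact hp _ (isHomogeneous_X _ _)) 3 (Finset.univ.image f) (Finset.card_image_le.trans (by simp))
      (by simpa using hf) (mm K (d+3)) hmT (by
        intro x hx
        simp only [Finset.mem_image, Finset.mem_univ, true_and] at hx
        obtain ⟨i, rfl⟩ := hx
        exact hIm (hfI i)) (fun v hv => hom_mem_mm hv one_pos) d (by rw [height_mm_eq, add_comm])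
  rw [Finset.coe_image, Finset.coe_univ, Set.image_univ] at hz
  have hz1 : ∀ i, (z i).IsHomogeneous 1 := hzV
  set J := Ideal.span (Set.range f ∪ Set.range z) with hJ
  have hJH : Hg J := Hg.span (by
    rintro x (⟨i, rfl⟩ | ⟨i, rfl⟩)
    · exact ⟨2, hf2 i⟩
    · exact ⟨1, hz1 i⟩)
  obtain ⟨s, hs⟩ := pow_mm_le hJH (le_trans (by exact_mod_cast (by omega)) hz)
  obtain ⟨φ, hφ, hφ', hφz⟩ := coord rfl z hz1 hzi
  let I' := I.map (φ : MvPolynomial (Fin (d+3)) K →+* MvPolynomial (Fin 3 ⊕ Fin d) K)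
  have hT : TSet (φ (f 0)) (φ (f 1)) (φ (f 2)) := by
    refine ⟨hφ _ _ (hf2 0), hφ _ _ (hf2 1), hφ _ _ (hf2 2), pr_hom (hφ _ _ (hf2 0)), pr_hom (hφ _ _ (hf2 1)),
      pr_hom (hφ _ _ (hf2 2)), s, ?_⟩
    let g : MvPolynomial (Fin (d+3)) K →+* MvPolynomial (Fin 3) K :=
      (pr K d : MvPolynomial (Fin 3 ⊕ Fin d) K →+* MvPolynomial (Fin 3) K).comp
        (φ : MvPolynomial (Fin (d+3)) K →+* MvPolynomial (Fin 3 ⊕ Fin d) K)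
    have h1 : mm K 3 ≤ (mm K (d+3)).map g := by
      rw [Ideal.span_le]
      rintro _ ⟨i, rfl⟩
      have h2 : φ.symm (il K d (X i)) ∈ mm K (d+3) := hom_mem_mm (hφ' _ _ (il_hom (isHomogeneous_X _ _))) one_pos
      have h3 := Ideal.mem_map_of_mem g h2
      have h4 : g (φ.symm (il K d (X i))) = X i := by
        change pr K d (φ (φ.symm _)) = _
        rw [AlgEquiv.apply_symm_apply, pr_il]
      rwa [h4] at h3
    calc mm K 3 ^ s ≤ ((mm K (d+3)).map g) ^ s := Ideal.pow_right_mono h1 s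
      _ = (mm K (d+3) ^ s).map g := (Ideal.map_pow _ _ _).symm
      _ ≤ J.map g := Ideal.map_mono hs
      _ ≤ _ := by
        rw [hJ, Ideal.map_span, Ideal.span_le]
        rintro _ ⟨x, (⟨i, rfl⟩ | ⟨i, rfl⟩), rfl⟩
        · change pr K d (φ (f i)) ∈ _
          fin_cases i
          · exact Ideal.mem_sup_left (Ideal.mem_sup_left (mem_ad _ _))
          · exact Ideal.mem_sup_left (mem_ad _ _)
          · exact mem_ad _ _
        · change pr K d (φ (z i)) ∈ _
          rw [hφz, (pr_eq_zero).2 (X_mem_Zi i)]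
          exact zero_mem _
  have hJI : ad (ad (ad ⊥ (φ (f 0))) (φ (f 1))) (φ (f 2)) ≤ I' := by
    have : ∀ i, Ideal.span {φ (f i)} ≤ I' := by
      intro i
      rw [Ideal.span_singleton_le_iff_mem]
      exact Ideal.mem_map_of_mem _ (hfI i)
    exact sup_le (sup_le (sup_le bot_le (this 0)) (this 1)) (this 2)
  have key := coreT hT hJI (Q := φ '' Q) (by rintro _ ⟨q, hq, rfl⟩; exact hφ _ _ (hQ q hq))
    (by simp only [I']; rw [hIQ, Ideal.map_span]; rfl) (by rw [← hI]; exact height_phi φ I)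
    (by
      have : HF I' = HF I := funext fun n => HF_phi φ hφ hφ' I n
      rwa [this])
  refine ⟨pd_phi φ I 3 key.1, ?_⟩
  rw [← Jn_phi φ (by simp [add_comm]) hφ hφ' I 2]
  exact key.2

end Q6

namespace Q6
open MvPolynomial Module Filter TensorProduct

section
variable {σ : Type} [Fintype σ] {k K : Type u} [Field k] [Field K] [Algebra k K]

noncomputable def Lam (σ : Type) {k K : Type u} [Field k] [Field K] [Algebra k K] (l : K →ₗ[k] k) :
    MvPolynomial σ K →ₗ[k] MvPolynomial σ k :=
  (TensorProduct.lid k (MvPolynomial σ k)).toLinearMap ∘ₗ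
    (LinearMap.rTensor (MvPolynomial σ k) l) ∘ₗ
    ((MvPolynomial.algebraTensorAlgEquiv (σ := σ) k K).symm.toLinearMap.restrictScalars k)

lemma Lam_smul (l : K →ₗ[k] k) (c : K) (q : MvPolynomial σ k) :
    Lam σ l (c • MvPolynomial.map (algebraMap k K) q) = l c • q := by
  have : (MvPolynomial.algebraTensorAlgEquiv (σ := σ) k K).symm (c • MvPolynomial.map (algebraMap k K) q) = c ⊗ₜ q := by
    rw [AlgEquiv.symm_apply_eq, algebraTensorAlgEquiv_tmul]
  change TensorProduct.lid k (MvPolynomial σ k) (LinearMap.rTensor (MvPolynomial σ k) l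
    ((MvPolynomial.algebraTensorAlgEquiv (σ := σ) k K).symm (c • MvPolynomial.map (algebraMap k K) q))) = _
  rw [this]
  simp

lemma exists_smul_map (p : MvPolynomial σ K) (P : MvPolynomial σ K → Prop) (h0 : P 0)
    (hadd : ∀ x y, P x → P y → P (x + y)) (h : ∀ (c : K) q, P (c • MvPolynomial.map (algebraMap k K) q)) : P p := by
  induction p using MvPolynomial.induction_on' with
  | monomial m c =>
    have := h c (monomial m 1)
    rwa [map_monomial, map_one, smul_monomial, smul_eq_mul, mul_one] at this
  | add p q hp hq => exact hadd p q hp hq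

lemma Lam_mul (l : K →ₗ[k] k) (p : MvPolynomial σ K) (s : MvPolynomial σ k) :
    Lam σ l (p * MvPolynomial.map (algebraMap k K) s) = Lam σ l p * s := by
  refine exists_smul_map (k := k) p (fun p => Lam σ l (p * MvPolynomial.map (algebraMap k K) s) = Lam σ l p * s) ?_ ?_ ?_
  · simp
  · intro x y hx hy; rw [add_mul, map_add, hx, hy, map_add, add_mul]
  · intro c q
    rw [smul_mul_assoc, ← map_mul, Lam_smul, Lam_smul, smul_mul_assoc]

lemma Lam_mem (l : K →ₗ[k] k) {I : Ideal (MvPolynomial σ k)} {x : MvPolynomial σ K}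
    (hx : x ∈ I.map (MvPolynomial.map (algebraMap k K))) : Lam σ l x ∈ I := by
  suffices h : ∀ p, Lam σ l (p * x) ∈ I by simpa using h 1
  induction hx using Submodule.span_induction with
  | mem x hx =>
    obtain ⟨s, hs, rfl⟩ := hx
    intro p
    rw [Lam_mul]
    exact Ideal.mul_mem_left _ _ hs
  | zero => intro p; simp
  | add x y _ _ hx hy => intro p; rw [mul_add, map_add]; exact add_mem (hx p) (hy p)
  | smul a x _ hx => intro p; rw [smul_eq_mul, ← mul_assoc]; exact hx _

lemma HF_bc (I : Ideal (MvPolynomial σ k)) (n : ℕ) :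
    HF (I.map (MvPolynomial.map (algebraMap k K))) n = HF I n := by
  obtain ⟨v, hv, hi, hs⟩ := HF_basis I n
  refine HF_eq_of_basis (fun i => MvPolynomial.map (algebraMap k K) (v i)) (fun i => (hv i).map _) ?_ ?_
  · intro c hc
    funext i
    rw [Pi.zero_apply, ← Module.forall_dual_apply_eq_zero_iff k]
    intro l
    have h1 := Lam_mem l hc
    rw [map_sum] at h1
    simp only [Lam_smul] at h1
    exact congrFun (hi (fun i => l (c i)) h1) i
  · intro t ht
    let W : Submodule K (MvPolynomial σ K) := (I.map (MvPolynomial.map (algebraMap k K))).restrictScalars K ⊔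
      Submodule.span K (Set.range fun i => MvPolynomial.map (algebraMap k K) (v i))
    have htW : t ∈ W := by
      rw [t.as_sum]
      refine sum_mem fun m hm => ?_
      have hdeg : (monomial m (1 : k)).IsHomogeneous n := by
        apply isHomogeneous_monomial
        have := ht (mem_support_iff.1 hm)
        rw [← this, Finsupp.degree_eq_weight_one]; rfl
      obtain ⟨c, hc⟩ := hs _ hdeg
      have hc' := Ideal.mem_map_of_mem (MvPolynomial.map (algebraMap k K)) hc
      have h2 : monomial m (1 : K) ∈ W := by
        have h3 : (monomial m (1 : K)) = MvPolynomial.map (algebraMap k K) (monomial m 1 - ∑ i, c i • v i) +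
            ∑ i, algebraMap k K (c i) • MvPolynomial.map (algebraMap k K) (v i) := by
          rw [map_sub, map_sum, map_monomial, (algebraMap k K).map_one]
          have h5 : ∀ i, MvPolynomial.map (algebraMap k K) (c i • v i) = algebraMap k K (c i) • MvPolynomial.map (algebraMap k K) (v i) := by
            intro i
            rw [smul_eq_C_mul, map_mul, map_C, ← smul_eq_C_mul]
          simp only [h5, sub_add_cancel]
        rw [h3]
        refine add_mem (Submodule.mem_sup_left hc') (Submodule.mem_sup_right ?_)
        exact sum_mem fun i _ => Submodule.smul_mem _ _ (Submodule.subset_span ⟨i, rfl⟩)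
      have := W.smul_mem (coeff m t) h2
      rwa [smul_monomial, smul_eq_mul, mul_one] at this
    obtain ⟨y, hy, w, hw, rfl⟩ := Submodule.mem_sup.1 htW
    obtain ⟨c, rfl⟩ := (Submodule.mem_span_range_iff_exists_fun K).1 hw
    exact ⟨c, by simpa using hy⟩

lemma Jn_bc (I : Ideal (MvPolynomial σ k)) (n : ℕ) :
    finrank K (Jn (I.map (MvPolynomial.map (algebraMap k K))) n) = finrank k (Jn I n) := by
  have h1 := HF_add I n
  have h2 := HF_add (I.map (MvPolynomial.map (algebraMap k K))) n
  rw [HF_bc, finrank_hom] at h2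
  rw [finrank_hom] at h1
  omega

lemma four_gens {I : Ideal (MvPolynomial σ k)} {Q : Set (MvPolynomial σ k)}
    (hQ : ∀ q ∈ Q, q.IsHomogeneous 2) (hIQ : I = Ideal.span Q) (h4 : finrank k (Jn I 2) ≤ 4) :
    ∃ g : Fin 4 → MvPolynomial σ k, (∀ i, (g i).IsHomogeneous 2) ∧ I = Ideal.span (Set.range g) := by
  let b := Module.finBasis k (Jn I 2)
  let g : Fin 4 → MvPolynomial σ k := fun i => if h : (i : ℕ) < finrank k (Jn I 2) then b ⟨i, h⟩ else 0
  have hg : ∀ i, g i ∈ Jn I 2 := by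
    intro i
    by_cases h : (i : ℕ) < finrank k (Jn I 2)
    · simp only [g, h, dif_pos]; exact (b _).2
    · simp only [g, h, dif_neg, not_false_eq_true]; exact zero_mem _
  refine ⟨g, fun i => (hg i).2, le_antisymm ?_ ?_⟩
  · conv_lhs => rw [hIQ]
    rw [Ideal.span_le]
    intro q hq
    have hqJ : q ∈ Jn I 2 := ⟨hIQ ▸ Ideal.subset_span hq, hQ q hq⟩
    have h1 := congrArg Subtype.val (b.sum_repr ⟨q, hqJ⟩)
    rw [AddSubmonoidClass.coe_finsetSum] at h1
    change _ = q at h1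
    rw [SetLike.mem_coe, ← h1]
    refine sum_mem fun i _ => ?_
    refine Submodule.smul_of_tower_mem _ _ (Ideal.subset_span ⟨⟨i, i.2.trans_le h4⟩, ?_⟩)
    simp only [g]
    rw [dif_pos i.2]
  · rw [Ideal.span_le]
    rintro _ ⟨i, rfl⟩
    exact (hg i).1

end

section
attribute [local instance] MvPolynomial.algebraMvPolynomial

theorem main (k : Type u) [Field k] (N : ℕ)
    (Q : Set (MvPolynomial (Fin N) k))
    (hQ : ∀ q ∈ Q, MvPolynomial.IsHomogeneous q 2)
    (I : Ideal (MvPolynomial (Fin N) k))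
    (hI : I = Ideal.span Q)
    (hht : I.heightENat = 3)
    (hmult : hilbertSamuelMultiplicity k I = 6) :
    ringKrullDim (MvPolynomial (Fin N) k ⧸ I) =
        (gradedDepth k N (MvPolynomial (Fin N) k ⧸ I) : WithBot ℕ∞) ∧
      (∃ g : Fin 4 → MvPolynomial (Fin N) k,
        (∀ i, (g i).IsHomogeneous 2) ∧ I = Ideal.span (Set.range g)) ∧
      projDim (MvPolynomial (Fin N) k) (MvPolynomial (Fin N) k ⧸ I) = (3 : ℕ∞) := by
  rw [heightENat_eq] at hht
  have hH : Hg I := by rw [hI]; exact Hg.span fun x hx => ⟨2, hQ x hx⟩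
  have hIT : I ≠ ⊤ := by
    rintro rfl
    rw [Ideal.height_top] at hht
    exact absurd hht (by decide)
  have hm : Mult6 (HF I) := by
    unfold hilbertSamuelMultiplicity at hmult
    split_ifs at hmult with h
    · exact ⟨h.choose, h.choose_spec, hmult⟩
    · norm_num at hmult
  let K := AlgebraicClosure k
  have : Infinite K := IsAlgClosed.instInfinite
  have hff := ff_mvPoly (Fin N) k K
  let IK := I.map (MvPolynomial.map (σ := Fin N) (algebraMap k K))
  have hhtK : IK.height = 3 := by
    rw [← hht]
    exact height_map_flat (MvPolynomial (Fin N) k) (MvPolynomial (Fin N) K) I hIT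
  have hmK : Mult6 (HF IK) := by
    have : HF IK = HF I := funext fun n => HF_bc I n
    rwa [this]
  obtain ⟨hpd, h4⟩ := coreA (I := IK) (Q := MvPolynomial.map (algebraMap k K) '' Q)
    (by rintro _ ⟨q, hq, rfl⟩; exact (hQ q hq).map _) (by simp only [IK]; rw [hI, Ideal.map_span]) hhtK hmK
  have hpdk := quot_baseChange_pd (MvPolynomial (Fin N) k) (MvPolynomial (Fin N) K) I 3 hpd
  obtain ⟨r1, r2⟩ := part1 k N I (hH.le_mm hIT) hht hpdk
  exact ⟨r1, four_gens hQ hI (by rw [← Jn_bc (K := K)]; exact h4), r2⟩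
end

end Q6

/-- If `I` is a homogeneous ideal of height `3` generated by quadrics with
`e(S/I) = 6`, then `S/I` is Cohen–Macaulay (depth = dimension), `I` is generated by `4`
quadrics, and `pd_S(S/I) = 3`. -/
theorem CM_of_height_three_mult_six (k : Type u) [Field k] (N : ℕ)
    (Q : Set (MvPolynomial (Fin N) k))
    (hQ : ∀ q ∈ Q, MvPolynomial.IsHomogeneous q 2)
    (I : Ideal (MvPolynomial (Fin N) k))
    (hI : I = Ideal.span Q)
    (hht : I.heightENat = 3)
    (hmult : hilbertSamuelMultiplicity k I = 6) :
    ringKrullDim (MvPolynomial (Fin N) k ⧸ I) =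
        (gradedDepth k N (MvPolynomial (Fin N) k ⧸ I) : WithBot ℕ∞) ∧
      (∃ g : Fin 4 → MvPolynomial (Fin N) k,
        (∀ i, (g i).IsHomogeneous 2) ∧ I = Ideal.span (Set.range g)) ∧
      projDim (MvPolynomial (Fin N) k) (MvPolynomial (Fin N) k ⧸ I) = (3 : ℕ∞) := by
  exact Q6.main k N Q hQ I hI hht hmult
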